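/- arXiv:2412.04200 — 4 statements merged into one kernel-verified Lean document; each statement's English description precedes it below -/
import Mathlib

section
/- If G is a connected regular simple graph that is not isomorphic to K2 (the complete graph on two vertices), then lir(^2G) ≤ 2; that is, there exists a function r : E(G) → {0,1,2} such that for every edge uv of G: if r(uv) ≥ 1 then the red degrees of u and v differ, and if r(uv) ≤ 1 then the blue degrees of u and v differ. -/
open scoped Classical

/-- The red degree of a vertex `x`: the sum of the red multiplicities `r e`
over all edges `e` of `G` incident with `x`. -/
noncomputable def redDeg {V : Type*} [Fintype V] [DecidableEq V]
    (G : SimpleGraph V) (r : Sym2 V → ℕ) (x : V) : ℕ :=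
  ∑ e ∈ G.edgeFinset.filter (fun e => x ∈ e), r e

/-- The blue degree of a vertex `x`: the sum of `2 - r e` over all edges `e`
of `G` incident with `x`. -/
noncomputable def blueDeg {V : Type*} [Fintype V] [DecidableEq V]
    (G : SimpleGraph V) (r : Sym2 V → ℕ) (x : V) : ℕ :=
  ∑ e ∈ G.edgeFinset.filter (fun e => x ∈ e), (2 - r e)

/-- `r : E(G) → {0,1,2}` encodes a locally irregular 2-edge-coloring of `²G`:
every edge gets a red multiplicity at most 2, and for every edge `uv`, if
`r s(u,v) ≥ 1` the red degrees of `u` and `v` differ, and if `r s(u,v) ≤ 1`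
the blue degrees of `u` and `v` differ. -/
def IsLIR2 {V : Type*} [Fintype V] [DecidableEq V]
    (G : SimpleGraph V) (r : Sym2 V → ℕ) : Prop :=
  (∀ e ∈ G.edgeSet, r e ≤ 2) ∧
  ∀ u v : V, G.Adj u v →
    (1 ≤ r s(u, v) → redDeg G r u ≠ redDeg G r v) ∧
    (r s(u, v) ≤ 1 → blueDeg G r u ≠ blueDeg G r v)

/-- `lir(²G) ≤ 2`: there is a locally irregular 2-edge-coloring of `²G`. -/
def LIRtwoLE2 {V : Type*} [Fintype V] [DecidableEq V] (G : SimpleGraph V) : Prop :=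
  ∃ r : Sym2 V → ℕ, IsLIR2 G r


section Aux
variable {V : Type*} [Fintype V] [DecidableEq V]

lemma sum_inc (G : SimpleGraph V) (q : Sym2 V → ℕ) (x : V) :
    ∑ e ∈ G.edgeFinset.filter (fun e => x ∈ e), q e = ∑ v ∈ G.neighborFinset x, q s(x, v) := by
  have : G.edgeFinset.filter (fun e => x ∈ e) = (G.neighborFinset x).image (fun v => s(x, v)) := by
    ext e
    induction e using Sym2.ind with
    | _ a b =>
      simp only [Finset.mem_filter, SimpleGraph.mem_edgeFinset, SimpleGraph.mem_edgeSet,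
        Finset.mem_image, SimpleGraph.mem_neighborFinset, Sym2.mem_iff]
      constructor
      · rintro ⟨h, rfl | rfl⟩
        · exact ⟨b, h, rfl⟩
        · exact ⟨a, h.symm, Sym2.eq_swap⟩
      · rintro ⟨v, h, hv⟩
        rw [Sym2.eq_iff] at hv
        rcases hv with ⟨rfl, rfl⟩ | ⟨rfl, rfl⟩
        · exact ⟨h, Or.inl rfl⟩
        · exact ⟨h.symm, Or.inr rfl⟩
  rw [this, Finset.sum_image]
  intro a _ b _ h
  rcases Sym2.eq_iff.1 h with h | h
  · exact h.2
  · exact h.2.trans h.1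

lemma of_weights (G : SimpleGraph V) (d : ℕ) (hreg : ∀ v, (G.neighborFinset v).card = d)
    (f : V → V → ℤ) (hs : ∀ u v, f u v = f v u) (hb : ∀ u v, -1 ≤ f u v ∧ f u v ≤ 1)
    (h0 : ∀ u v, ¬ G.Adj u v → f u v = 0)
    (hne : ∀ u v, G.Adj u v → ∑ w, f u w ≠ ∑ w, f v w) : LIRtwoLE2 G := by
  let r : Sym2 V → ℕ := Sym2.lift ⟨fun u v => (f u v + 1).toNat, fun u v => by simp only [hs u v]⟩
  have hr : ∀ u v, (r s(u, v) : ℤ) = f u v + 1 := by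
    intro u v
    have := hb u v
    simp only [r, Sym2.lift_mk]
    omega
  have hfs : ∀ x, ∑ v ∈ G.neighborFinset x, f x v = ∑ v, f x v := by
    intro x
    apply Finset.sum_subset (Finset.subset_univ _)
    intro v _ hv
    exact h0 _ _ (by simpa using hv)
  have hred : ∀ x, (redDeg G r x : ℤ) = ∑ v, f x v + d := by
    intro x
    unfold redDeg
    rw [sum_inc, ← hreg x, ← hfs x]
    push_cast
    simp only [hr, Finset.sum_add_distrib]
    simp
  have hblue : ∀ x, (blueDeg G r x : ℤ) = d - ∑ v, f x v := by
    intro x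
    unfold blueDeg
    rw [sum_inc, ← hreg x, ← hfs x]
    push_cast
    have : ∀ v, ((2 - r s(x, v) : ℕ) : ℤ) = 1 - f x v := by
      intro v
      have := hb x v
      have := hr x v
      omega
    simp only [this, Finset.sum_sub_distrib]
    simp
  refine ⟨r, ?_, ?_⟩
  · intro e _
    induction e using Sym2.ind with
    | _ a b =>
      have := hr a b
      have := hb a b
      omega
  · intro u v h
    have := hne u v h
    have h1 := hred u
    have h2 := hred v
    have h3 := hblue u
    have h4 := hblue v
    constructor <;> intro _ <;> omega

end Aux

section Flow
variable {V : Type*} [Fintype V]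

/-- unit capacity flow on a graph -/
def IsFl (C : SimpleGraph V) (g : V → V → ℤ) : Prop :=
  (∀ u v, g u v = - g v u) ∧ (∀ u v, g u v ≤ 1) ∧ ∀ u v, ¬ C.Adj u v → g u v = 0

lemma flow_aug (C : SimpleGraph V) (b : V → ℤ) (n : ℕ) : ∀ (g : V → V → ℤ) (p : ℕ → V),
    IsFl C g → 0 < b (p 0) - ∑ y, g (p 0) y → b (p n) - ∑ y, g (p n) y < 0 →
    (∀ i < n, C.Adj (p i) (p (i+1)) ∧ g (p i) (p (i+1)) < 1) →
    ∃ g', IsFl C g' ∧ ∑ u, |b u - ∑ y, g' u y| < ∑ u, |b u - ∑ y, g u y| := by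
  induction n using Nat.strong_induction_on with
  | _ n ih =>
  intro g p hg hp hn hres
  by_cases hrev : ∃ i, 0 < i ∧ i ≤ n ∧ p i = p 0
  · obtain ⟨i, hi0, hin, hi⟩ := hrev
    apply ih (n - i) (by omega) g (fun j => p (i + j)) hg (by simpa [hi] using hp)
    · rw [show i + (n - i) = n by omega]; exact hn
    · intro j hj
      exact hres (i + j) (by omega)
  push Not at hrev
  have hn0 : n ≠ 0 := by
    rintro rfl; omega
  obtain ⟨m, rfl⟩ : ∃ m, n = m + 1 := ⟨n - 1, by omega⟩
  set a := p 0 with ha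
  set c := p 1 with hc
  have hac : C.Adj a c ∧ g a c < 1 := hres 0 (by omega)
  have hne : a ≠ c := hac.1.ne
  let g' : V → V → ℤ := fun x y => g x y + (if x = a ∧ y = c then 1 else 0)
    - (if x = c ∧ y = a then 1 else 0)
  have hg' : IsFl C g' := by
    refine ⟨?_, ?_, ?_⟩
    · intro u v
      simp only [g']
      have := hg.1 u v
      rw [this]
      simp only [and_comm (a := v = a), and_comm (a := v = c)]
      ring
    · intro u v
      simp only [g']
      have := hg.2.1 u v
      by_cases h1 : u = a ∧ v = c
      · obtain ⟨rfl, rfl⟩ := h1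
        simp [hne]; omega
      · rw [if_neg h1]
        split_ifs <;> omega
    · intro u v huv
      simp only [g']
      have h1 : ¬ (u = a ∧ v = c) := by
        rintro ⟨rfl, rfl⟩; exact huv hac.1
      have h2 : ¬ (u = c ∧ v = a) := by
        rintro ⟨rfl, rfl⟩; exact huv hac.1.symm
      rw [if_neg h1, if_neg h2, hg.2.2 u v huv]; rfl
  have hdiv : ∀ x, ∑ y, g' x y = ∑ y, g x y + (if x = a then 1 else 0) - (if x = c then 1 else 0) := by
    intro x
    simp only [g', Finset.sum_sub_distrib, Finset.sum_add_distrib]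
    congr 1
    · congr 1
      by_cases h : x = a <;> simp [h]
    · by_cases h : x = c <;> simp [h]
  have key : ∀ F : V → ℤ, ∑ u, F u = F a + F c + ∑ u ∈ (Finset.univ.erase a).erase c, F u := by
    intro F
    rw [← Finset.add_sum_erase _ F (Finset.mem_univ a),
      ← Finset.add_sum_erase (Finset.univ.erase a) F (a := c) (by simp [hne.symm])]
    ring
  have hrest : ∑ u ∈ (Finset.univ.erase a).erase c, |b u - ∑ y, g' u y|
      = ∑ u ∈ (Finset.univ.erase a).erase c, |b u - ∑ y, g u y| := by
    apply Finset.sum_congr rfl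
    intro u hu
    simp at hu
    rw [hdiv]; simp [hu.1, hu.2]
  have hEa : b a - ∑ y, g' a y = b a - ∑ y, g a y - 1 := by
    rw [hdiv]; simp [hne]; ring
  have hEc : b c - ∑ y, g' c y = b c - ∑ y, g c y + 1 := by
    rw [hdiv]; simp [hne.symm]; ring
  have habsa : |b a - ∑ y, g' a y| = |b a - ∑ y, g a y| - 1 := by
    rw [hEa, abs_of_pos hp, abs_of_nonneg (by omega)]
  by_cases hcneg : b c - ∑ y, g c y < 0
  · refine ⟨g', hg', ?_⟩
    rw [key, key (fun u => |b u - ∑ y, g u y|), hrest, habsa]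
    have : |b c - ∑ y, g' c y| = |b c - ∑ y, g c y| - 1 := by
      rw [hEc, abs_of_neg hcneg, abs_of_nonpos (by omega)]; ring
    rw [this]; omega
  · have hsame : ∑ u, |b u - ∑ y, g' u y| = ∑ u, |b u - ∑ y, g u y| := by
      rw [key, key (fun u => |b u - ∑ y, g u y|), hrest, habsa]
      have : |b c - ∑ y, g' c y| = |b c - ∑ y, g c y| + 1 := by
        rw [hEc, abs_of_nonneg (by omega : 0 ≤ b c - ∑ y, g c y), abs_of_nonneg (by omega)]
      rw [this]; ring
    rw [← hsame]
    apply ih m (by omega) g' (fun j => p (j + 1)) hg'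
    · simp only [zero_add, ← hc]
      rw [hEc]; omega
    · have h1 : p (m+1) ≠ a := hrev (m+1) (by omega) le_rfl
      have h2 : p (m+1) ≠ c := by
        intro h; rw [h] at hn; exact hcneg hn
      rw [hdiv]; simpa [h1, h2] using hn
    · intro i hi
      have h1 : p (i+1) ≠ a := hrev (i+1) (by omega) (by omega)
      have h2 : p (i+1+1) ≠ a := hrev (i+1+1) (by omega) (by omega)
      have := hres (i+1) (by omega)
      refine ⟨this.1, ?_⟩
      simp only [g']
      simpa [h1, h2] using this.2

lemma sum_antisymm (g : V → V → ℤ) (hg : ∀ u v, g u v = - g v u) (X : Finset V) :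
    ∑ u ∈ X, ∑ v ∈ X, g u v = 0 := by
  have h : ∑ u ∈ X, ∑ v ∈ X, g u v = - ∑ u ∈ X, ∑ v ∈ X, g u v := by
    conv_lhs => rw [Finset.sum_comm]
    rw [← Finset.sum_neg_distrib]
    refine Finset.sum_congr rfl fun u _ => ?_
    rw [← Finset.sum_neg_distrib]
    exact Finset.sum_congr rfl fun v _ => hg v u
  omega

lemma sum_antisymm_out [DecidableEq V] (g : V → V → ℤ) (hg : ∀ u v, g u v = - g v u) (X : Finset V) :
    ∑ u ∈ X, ∑ v, g u v = ∑ u ∈ X, ∑ v ∈ Xᶜ, g u v := by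
  have : ∀ u, ∑ v, g u v = ∑ v ∈ X, g u v + ∑ v ∈ Xᶜ, g u v := fun u =>
    (Finset.sum_add_sum_compl X _).symm
  simp only [this, Finset.sum_add_distrib, sum_antisymm g hg X, zero_add]

lemma flow_exists [DecidableEq V] (C : SimpleGraph V) (b : V → ℤ) (hb : ∑ u, b u = 0)
    (hcut : ∀ X : Finset V, ∑ u ∈ X, b u ≤ ∑ u ∈ X, ∑ v ∈ Xᶜ, (if C.Adj u v then 1 else 0)) :
    ∃ g, IsFl C g ∧ ∀ u, ∑ v, g u v = b u := by
  let E : (V → V → ℤ) → ℕ := fun g => (∑ u, |b u - ∑ y, g u y|).toNat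
  have hE : ∀ g, (E g : ℤ) = ∑ u, |b u - ∑ y, g u y| := fun g =>
    Int.toNat_of_nonneg (Finset.sum_nonneg fun _ _ => abs_nonneg _)
  have hex : ∃ n, ∃ g, IsFl C g ∧ E g = n := ⟨_, fun _ _ => 0, ⟨by simp, by simp, by simp⟩, rfl⟩
  obtain ⟨g, hg, hgE⟩ := Nat.find_spec hex
  have hmin : ∀ g', IsFl C g' → ¬ ∑ u, |b u - ∑ y, g' u y| < ∑ u, |b u - ∑ y, g u y| := by
    intro g' hg' hlt
    rw [← hE, ← hE, hgE] at hlt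
    exact Nat.find_min hex (by exact_mod_cast hlt) ⟨g', hg', rfl⟩
  have hle : ∀ u, b u - ∑ y, g u y ≤ 0 := by
    intro u
    by_contra hu
    push Not at hu
    let X : Finset V := Finset.univ.filter fun v => ∃ (n : ℕ) (p : ℕ → V), p 0 = u ∧ p n = v ∧
      ∀ i < n, C.Adj (p i) (p (i+1)) ∧ g (p i) (p (i+1)) < 1
    have huX : u ∈ X := by
      simp only [X, Finset.mem_filter, Finset.mem_univ, true_and]
      exact ⟨0, fun _ => u, rfl, rfl, by simp⟩
    have hXnn : ∀ v ∈ X, 0 ≤ b v - ∑ y, g v y := by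
      intro v hv
      by_contra hneg
      push Not at hneg
      simp only [X, Finset.mem_filter, Finset.mem_univ, true_and] at hv
      obtain ⟨n, p, h0, hn, hp⟩ := hv
      obtain ⟨g', h1, h2⟩ := flow_aug C b n g p hg (by rw [h0]; exact hu) (by rw [hn]; exact hneg) hp
      exact hmin g' h1 h2
    have hout : ∀ v ∈ X, ∀ w ∈ Xᶜ, g v w = if C.Adj v w then 1 else 0 := by
      intro v hv w hw
      split_ifs with hadj
      · by_contra hne
        have hlt : g v w < 1 := lt_of_le_of_ne (hg.2.1 v w) hne
        apply Finset.mem_compl.1 hw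
        simp only [X, Finset.mem_filter, Finset.mem_univ, true_and] at hv ⊢
        obtain ⟨n, p, h0, hn, hp⟩ := hv
        refine ⟨n + 1, fun i => if i ≤ n then p i else w, by simp [h0], by simp, ?_⟩
        intro i hi
        by_cases h : i < n
        · have h1 : i ≤ n := by omega
          have h2 : i + 1 ≤ n := by omega
          simp only [h1, h2, if_true]
          exact hp i h
        · have h1 : i = n := by omega
          subst h1
          simp [hn, hadj, hlt]
      · exact hg.2.2 v w hadj
    have h1 : ∑ v ∈ X, ∑ w, g v w = ∑ v ∈ X, ∑ w ∈ Xᶜ, (if C.Adj v w then 1 else 0) := by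
      rw [sum_antisymm_out g hg.1]
      exact Finset.sum_congr rfl fun v hv => Finset.sum_congr rfl fun w hw => hout v hv w hw
    have h2 : ∑ v ∈ X, (b v - ∑ w, g v w) ≤ 0 := by
      rw [Finset.sum_sub_distrib, h1]
      have := hcut X
      omega
    have h3 : 0 < ∑ v ∈ X, (b v - ∑ w, g v w) := Finset.sum_pos' hXnn ⟨u, huX, hu⟩
    omega
  have hsum : ∑ u, (b u - ∑ y, g u y) = 0 := by
    rw [Finset.sum_sub_distrib, hb, sum_antisymm g hg.1]; rfl
  refine ⟨g, hg, fun u => ?_⟩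
  have := (Finset.sum_eq_zero_iff_of_nonpos (fun u _ => hle u)).1 hsum u (Finset.mem_univ u)
  omega

end Flow

section Tools
variable {V : Type*} [Fintype V]

/-- sign vector satisfying the cut condition -/
def CutOK [DecidableEq V] (A : V → V → Prop) (δ : V → ℤ) : Prop :=
  (∀ v, δ v = 1 ∨ δ v = -1) ∧
  ∀ X : Finset V, ∑ u ∈ X, ∑ v ∈ Xᶜ, (if A u v then δ u * δ v else 0) ≤ 0

lemma cut_exists [DecidableEq V] (A : V → V → Prop) (hA : ∀ u v, A u v → A v u) :
    ∃ δ, CutOK A δ := by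
  let σ : (V → Bool) → V → ℤ := fun s v => if s v then 1 else -1
  obtain ⟨s, -, hs⟩ := Finset.exists_min_image (Finset.univ : Finset (V → Bool))
    (fun s => ∑ u, ∑ v, (if A u v then σ s u * σ s v else 0)) ⟨fun _ => true, Finset.mem_univ _⟩
  refine ⟨σ s, fun v => ?_, fun X => ?_⟩
  · by_cases h : s v <;> simp [σ, h]
  · let s' : V → Bool := fun v => if v ∈ X then !s v else s v
    have h1 : ∀ v ∈ X, σ s' v = - σ s v := by
      intro v hv
      by_cases h : s v <;> simp [σ, s', hv, h]
    have h2 : ∀ v ∈ Xᶜ, σ s' v = σ s v := by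
      intro v hv
      have hv := Finset.mem_compl.1 hv
      by_cases h : s v <;> simp [σ, s', hv, h]
    have hsplit : ∀ F : V → V → ℤ, ∑ u, ∑ v, F u v = ∑ u ∈ X, ∑ v ∈ X, F u v
        + ∑ u ∈ X, ∑ v ∈ Xᶜ, F u v + (∑ u ∈ Xᶜ, ∑ v ∈ X, F u v + ∑ u ∈ Xᶜ, ∑ v ∈ Xᶜ, F u v) := by
      intro F
      rw [← Finset.sum_add_sum_compl X]
      simp only [← Finset.sum_add_distrib, Finset.sum_add_sum_compl]
    have hm := hs s' (Finset.mem_univ _)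
    rw [hsplit, hsplit] at hm
    have e1 : ∑ u ∈ X, ∑ v ∈ X, (if A u v then σ s' u * σ s' v else 0)
        = ∑ u ∈ X, ∑ v ∈ X, (if A u v then σ s u * σ s v else 0) := by
      refine Finset.sum_congr rfl fun u hu => Finset.sum_congr rfl fun v hv => ?_
      rw [h1 u hu, h1 v hv]; simp
    have e2 : ∑ u ∈ X, ∑ v ∈ Xᶜ, (if A u v then σ s' u * σ s' v else 0)
        = - ∑ u ∈ X, ∑ v ∈ Xᶜ, (if A u v then σ s u * σ s v else 0) := by
      simp only [← Finset.sum_neg_distrib]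
      refine Finset.sum_congr rfl fun u hu => Finset.sum_congr rfl fun v hv => ?_
      rw [h1 u hu, h2 v hv]; split_ifs <;> simp
    have e3 : ∑ u ∈ Xᶜ, ∑ v ∈ Xᶜ, (if A u v then σ s' u * σ s' v else 0)
        = ∑ u ∈ Xᶜ, ∑ v ∈ Xᶜ, (if A u v then σ s u * σ s v else 0) := by
      refine Finset.sum_congr rfl fun u hu => Finset.sum_congr rfl fun v hv => ?_
      rw [h2 u hu, h2 v hv]
    have e4 : ∀ s, ∑ u ∈ Xᶜ, ∑ v ∈ X, (if A u v then σ s u * σ s v else 0)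
        = ∑ u ∈ X, ∑ v ∈ Xᶜ, (if A u v then σ s u * σ s v else 0) := by
      intro s
      rw [Finset.sum_comm]
      refine Finset.sum_congr rfl fun u hu => Finset.sum_congr rfl fun v hv => ?_
      have : A u v ↔ A v u := ⟨hA _ _, hA _ _⟩
      simp only [this, mul_comm]
    rw [e1, e4, e4, e2, e3] at hm
    omega

lemma path_join (H : SimpleGraph V) (r v : V) (h : H.Reachable r v) :
    ∃ w : V → V → ZMod 2, (∀ x y, w x y = w y x) ∧ (∀ x y, ¬ H.Adj x y → w x y = 0) ∧
      ∀ u, ∑ y, w u y = (if u = r then 1 else 0) + (if u = v then 1 else 0) := by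
  have h2 : (1 : ZMod 2) + 1 = 0 := by decide
  obtain ⟨p⟩ := h
  induction p with
  | nil =>
    refine ⟨fun _ _ => 0, by simp, by simp, fun u => ?_⟩
    split_ifs <;> simp [h2]
  | @cons a b c hab p ih =>
    obtain ⟨w, hs, h0, hw⟩ := ih
    refine ⟨fun x y => w x y + ((if x = a ∧ y = b then 1 else 0) + (if x = b ∧ y = a then 1 else 0)),
      ?_, ?_, ?_⟩
    · intro x y
      simp only [hs x y, and_comm (a := y = a), and_comm (a := y = b)]
      ring
    · intro x y hxy
      have h1 : ¬ (x = a ∧ y = b) := by rintro ⟨rfl, rfl⟩; exact hxy hab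
      have h2 : ¬ (x = b ∧ y = a) := by rintro ⟨rfl, rfl⟩; exact hxy hab.symm
      simp [h1, h2, h0 x y hxy]
    · intro u
      simp only [Finset.sum_add_distrib, hw]
      have e1 : ∑ y, (if u = a ∧ y = b then (1 : ZMod 2) else 0) = if u = a then 1 else 0 := by
        by_cases h : u = a <;> simp [h]
      have e2 : ∑ y, (if u = b ∧ y = a then (1 : ZMod 2) else 0) = if u = b then 1 else 0 := by
        by_cases h : u = b <;> simp [h]
      rw [e1, e2]
      by_cases h : u = b
      · simp only [h, if_true]
        linear_combination h2
      · simp only [h, if_false]; ring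

lemma tjoin (H : SimpleGraph V) (r : V) (T : Finset V) (hT : Even T.card)
    (hr : ∀ v ∈ T, H.Reachable r v) :
    ∃ w : V → V → ZMod 2, (∀ x y, w x y = w y x) ∧ (∀ x y, ¬ H.Adj x y → w x y = 0) ∧
      ∀ u, ∑ y, w u y = if u ∈ T then 1 else 0 := by
  have : ∀ v : V, ∃ w : V → V → ZMod 2, v ∈ T → (∀ x y, w x y = w y x) ∧
      (∀ x y, ¬ H.Adj x y → w x y = 0) ∧
      ∀ u, ∑ y, w u y = (if u = r then 1 else 0) + (if u = v then 1 else 0) := by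
    intro v
    by_cases hv : v ∈ T
    · obtain ⟨w, h⟩ := path_join H r v (hr v hv)
      exact ⟨w, fun _ => h⟩
    · exact ⟨fun _ _ => 0, fun h => absurd h hv⟩
  choose W hW using this
  refine ⟨fun x y => ∑ t ∈ T, W t x y, ?_, ?_, ?_⟩
  · intro x y
    exact Finset.sum_congr rfl fun t ht => (hW t ht).1 x y
  · intro x y hxy
    exact Finset.sum_eq_zero fun t ht => (hW t ht).2.1 x y hxy
  · intro u
    rw [Finset.sum_comm, Finset.sum_congr rfl fun t ht => (hW t ht).2.2 u]
    rw [Finset.sum_add_distrib, Finset.sum_const]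
    obtain ⟨k, hk⟩ := hT
    rw [hk, ← two_mul, mul_smul, two_smul]
    rw [CharTwo.add_self_eq_zero, zero_add]
    simp

lemma greedy (A : V → V → Prop) (hA : ∀ u v, A u v → A v u) (hirr : ∀ u, ¬ A u u)
    (β δ : V → ℤ) (hδ : ∀ v, δ v = 1 ∨ δ v = -1) (W : Finset V) :
    ∃ t : V → V → ℤ, (∀ u v, t u v = 0 ∨ t u v = 1) ∧
      (∀ u v, t u v ≠ 0 → A u v ∧ u ∈ W ∧ v ∈ W) ∧ (∀ u v, t u v ≠ 0 → t v u = 0) ∧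
      ∀ u ∈ W, ∀ v ∈ W, A u v → β u + 2 * (δ u * ∑ y, t u y) ≠ β v + 2 * (δ v * ∑ y, t v y) := by
  classical
  induction W using Finset.induction_on with
  | empty => exact ⟨fun _ _ => 0, by simp, by simp, by simp, by simp⟩
  | insert v W hv ih =>
    obtain ⟨t, h01, hsup, hanti, hne⟩ := ih
    let N := W.filter (fun u => A v u)
    let val : V → ℤ := fun u => β u + 2 * (δ u * ∑ y, t u y)
    obtain ⟨c, hc, hcN⟩ : ∃ c ∈ (Finset.range (N.card + 1)).image
        (fun j : ℕ => β v + 2 * (δ v * (j : ℤ))), c ∉ N.image val := by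
      by_contra hcon
      push Not at hcon
      have hsub : (Finset.range (N.card + 1)).image
        (fun j : ℕ => β v + 2 * (δ v * (j : ℤ))) ⊆ N.image val := fun c hc => hcon c hc
      have h1 := Finset.card_le_card hsub
      rw [Finset.card_image_of_injective] at h1
      · have := Finset.card_image_le (s := N) (f := val)
        simp at h1; omega
      · intro i j hij
        simp only at hij
        rcases hδ v with h | h <;> rw [h] at hij <;> omega
    obtain ⟨j, hj, rfl⟩ := Finset.mem_image.1 hc
    obtain ⟨M, hM, hMj⟩ := Finset.exists_subset_card_eq (s := N) (n := j)
      (by simp at hj; omega)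
    have hMW : ∀ y ∈ M, y ∈ W ∧ A v y := fun y hy => by simpa [N] using hM hy
    have htv : ∀ y, t v y = 0 := by
      intro y; by_contra h; exact hv (hsup v y h).2.1
    have htv' : ∀ y, t y v = 0 := by
      intro y; by_contra h; exact hv (hsup y v h).2.2
    let t' : V → V → ℤ := fun x y => if x = v then (if y ∈ M then 1 else 0) else t x y
    have hs1 : ∑ y, t' v y = j := by simp [t', hMj]
    have hs2 : ∀ u, u ≠ v → ∑ y, t' u y = ∑ y, t u y := by
      intro u hu; simp [t', hu]
    refine ⟨t', ?_, ?_, ?_, ?_⟩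
    · intro x y
      simp only [t']
      split_ifs
      · exact Or.inr rfl
      · exact Or.inl rfl
      · exact h01 x y
    · intro x y h
      simp only [t'] at h
      split_ifs at h with h1 h2
      · subst h1
        exact ⟨(hMW y h2).2, by simp, by simp [(hMW y h2).1]⟩
      · exact absurd rfl h
      · have := hsup x y h
        exact ⟨this.1, by simp [this.2.1], by simp [this.2.2]⟩
    · intro x y h
      simp only [t'] at h ⊢
      split_ifs at h with h1 h2
      · subst h1
        have : y ≠ x := by rintro rfl; exact hv (hMW y h2).1
        simp [this, htv']
      · exact absurd rfl h
      · have hy : y ≠ v := by rintro rfl; exact h (htv' x)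
        simp [hy, hanti x y h]
    · have key : ∀ u ∈ W, A v u → β v + 2 * (δ v * ∑ y, t' v y) ≠ β u + 2 * (δ u * ∑ y, t' u y) := by
        intro u hu hvu h
        have huv : u ≠ v := by rintro rfl; exact hv hu
        apply hcN
        rw [Finset.mem_image]
        refine ⟨u, by simp [N, hu, hvu], ?_⟩
        rw [hs1, hs2 u huv] at h
        exact h.symm
      intro x hx y hy hxy
      rcases Finset.mem_insert.1 hx with rfl | hx'
      · rcases Finset.mem_insert.1 hy with rfl | hy'
        · exact absurd hxy (hirr _)
        · exact key y hy' hxy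
      · rcases Finset.mem_insert.1 hy with rfl | hy'
        · exact (key x hx' (hA _ _ hxy)).symm
        · have h1 : x ≠ v := by rintro rfl; exact hv hx'
          have h2 : y ≠ v := by rintro rfl; exact hv hy'
          rw [hs2 x h1, hs2 y h2]
          exact hne x hx' y hy' hxy

end Tools

section Core
variable {V : Type*} [Fintype V] [DecidableEq V]

lemma core (G : SimpleGraph V) (d : ℕ) (hreg : ∀ v, (G.neighborFinset v).card = d)
    (B : Set V) (δ : V → ℤ) (hcut : CutOK (fun u v => G.Adj u v ∧ u ∈ B ∧ v ∈ B) δ)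
    (j : V → V → ℤ) (hjs : ∀ u v, j u v = j v u) (hjb : ∀ u v, -1 ≤ j u v ∧ j u v ≤ 1)
    (hj0 : ∀ u v, ¬ G.Adj u v → j u v = 0) (hjB : ∀ u v, u ∈ B → v ∈ B → j u v = 0)
    (hodd : ∀ v ∈ B, Odd (∑ y, j v y)) (hpos : ∀ v ∈ B, 0 < δ v * ∑ y, j v y)
    (heven : ∀ v, v ∉ B → Even (∑ y, j v y))
    (hR : ∀ u v, u ∉ B → v ∉ B → G.Adj u v → ∑ y, j u y ≠ ∑ y, j v y) : LIRtwoLE2 G := by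
  obtain ⟨hδ, hcc⟩ := hcut
  have hδ2 : ∀ v, δ v * δ v = 1 := by
    intro v; rcases hδ v with h | h <;> rw [h] <;> rfl
  let A0 : V → V → Prop := fun u v => G.Adj u v ∧ u ∈ B ∧ v ∈ B ∧ δ u = δ v
  have hA0 : ∀ u v, A0 u v → A0 v u := fun u v h => ⟨h.1.symm, h.2.2.1, h.2.1, h.2.2.2.symm⟩
  obtain ⟨t, h01, hsup, hanti, hne⟩ := greedy A0 hA0 (fun u h => G.loopless.irrefl u h.1)
    (fun v => ∑ y, j v y) δ hδ Finset.univ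
  have hsup' : ∀ u v, ¬ A0 u v → t u v = 0 := by
    intro u v h; by_contra h'; exact h (hsup u v h').1
  let C : SimpleGraph V :=
    { Adj := fun u v => G.Adj u v ∧ u ∈ B ∧ v ∈ B ∧ δ u ≠ δ v
      symm := ⟨fun u v h => ⟨h.1.symm, h.2.2.1, h.2.1, h.2.2.2.symm⟩⟩
      loopless := ⟨fun u h => h.2.2.2 rfl⟩ }
  have hC : ∀ u v, C.Adj u v ↔ G.Adj u v ∧ u ∈ B ∧ v ∈ B ∧ δ u ≠ δ v := fun u v => Iff.rfl
  let o : V → V → ℤ := fun u v => t u v - t v u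
  have hoanti : ∀ u v, o u v = - o v u := fun u v => by simp only [o]; ring
  have hole : ∀ u v, o u v ≤ if A0 u v then 1 else 0 := by
    intro u v
    have h1 := h01 u v
    have h2 := h01 v u
    split_ifs with h
    · simp only [o]; omega
    · have := hsup' u v h
      simp only [o]; omega
  obtain ⟨g, hg, hgs⟩ := flow_exists C (fun u => ∑ v, o u v)
    (by simpa using sum_antisymm o hoanti Finset.univ) (by
      intro X
      rw [sum_antisymm_out o hoanti X]
      have h1 : ∑ u ∈ X, ∑ v ∈ Xᶜ, o u v ≤ ∑ u ∈ X, ∑ v ∈ Xᶜ, (if A0 u v then 1 else 0) :=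
        Finset.sum_le_sum fun u _ => Finset.sum_le_sum fun v _ => hole u v
      have h2 := hcc X
      have h3 : ∑ u ∈ X, ∑ v ∈ Xᶜ, (if G.Adj u v ∧ u ∈ B ∧ v ∈ B then δ u * δ v else 0)
        = ∑ u ∈ X, ∑ v ∈ Xᶜ, (if A0 u v then 1 else 0)
          - ∑ u ∈ X, ∑ v ∈ Xᶜ, (if C.Adj u v then 1 else 0) := by
        simp only [← Finset.sum_sub_distrib]
        refine Finset.sum_congr rfl fun u _ => Finset.sum_congr rfl fun v _ => ?_
        by_cases h : G.Adj u v ∧ u ∈ B ∧ v ∈ B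
        · simp only [A0, hC, h, true_and, if_true, ne_eq]
          rcases hδ u with h1 | h1 <;> rcases hδ v with h2 | h2 <;> simp [h1, h2]
        · have h1 : ¬ A0 u v := fun h' => h ⟨h'.1, h'.2.1, h'.2.2.1⟩
          have h2 : ¬ C.Adj u v := fun h' => h ⟨h'.1, h'.2.1, h'.2.2.1⟩
          simp [h, h1, h2]
      have h5 : ∑ u ∈ X, ∑ v ∈ Xᶜ, (if G.Adj u v ∧ u ∈ B ∧ v ∈ B then δ u * δ v else 0) ≤ 0 := by
        refine le_of_eq_of_le ?_ h2
        refine Finset.sum_congr rfl fun u _ => Finset.sum_congr rfl fun v _ => ?_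
        by_cases h : G.Adj u v ∧ u ∈ B ∧ v ∈ B <;> simp only [h, if_true, if_false]
      rw [h3] at h5
      refine h1.trans ((sub_nonpos.1 h5).trans (le_of_eq ?_))
      refine Finset.sum_congr rfl fun u _ => Finset.sum_congr rfl fun v _ => ?_
      by_cases h : C.Adj u v <;> simp only [h, if_true, if_false])
  have hfs : ∀ u v, δ u * (t u v + t v u) = δ v * (t v u + t u v) := by
    intro u v
    by_cases h : A0 u v
    · rw [h.2.2.2]; ring
    · rw [hsup' u v h, hsup' v u (fun h' => h (hA0 _ _ h'))]; ring
  have hfg : ∀ u v, δ u * g u v = δ v * g v u := by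
    intro u v
    by_cases h : C.Adj u v
    · have h1 := h.2.2.2
      have : δ u = - δ v := by
        rcases hδ u with h2 | h2 <;> rcases hδ v with h3 | h3 <;> rw [h2, h3] at h1 ⊢ <;> simp at h1 ⊢
      rw [this, hg.1 u v]; ring
    · rw [hg.2.2 u v h, hg.2.2 v u (fun h' => h h'.symm)]; ring
  have hsum : ∀ u, ∑ v, (j u v + δ u * (t u v + t v u) + δ u * g u v)
      = ∑ v, j u v + 2 * (δ u * ∑ v, t u v) := by
    intro u
    rw [Finset.sum_add_distrib, Finset.sum_add_distrib, ← Finset.mul_sum, ← Finset.mul_sum, hgs]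
    simp only [o, Finset.sum_add_distrib, Finset.sum_sub_distrib]
    ring
  have htB : ∀ u, u ∉ B → ∑ v, t u v = 0 := by
    intro u hu
    exact Finset.sum_eq_zero fun v _ => hsup' u v fun h => hu h.2.1
  have htnn : ∀ u, 0 ≤ ∑ v, t u v := by
    intro u
    exact Finset.sum_nonneg fun v _ => by rcases h01 u v with h | h <;> omega
  have hpos' : ∀ u ∈ B, 0 < δ u * (∑ v, j u v + 2 * (δ u * ∑ v, t u v)) := by
    intro u hu
    have h1 := hpos u hu
    have h2 : δ u * (∑ v, j u v + 2 * (δ u * ∑ v, t u v))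
      = δ u * ∑ v, j u v + 2 * ((δ u * δ u) * ∑ v, t u v) := by ring
    rw [h2, hδ2]
    have := htnn u
    omega
  have hmix : ∀ u v, u ∈ B → v ∉ B →
      ∑ y, j u y + 2 * (δ u * ∑ y, t u y) ≠ ∑ y, j v y + 2 * (δ v * ∑ y, t v y) := by
    intro u v hu hv h
    rw [htB v hv] at h
    obtain ⟨k, hk⟩ := hodd u hu
    obtain ⟨l, hl⟩ := heven v hv
    rw [hk, hl] at h
    omega
  apply of_weights G d hreg (fun u v => j u v + δ u * (t u v + t v u) + δ u * g u v)
  · intro u v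
    rw [hjs u v, hfs u v, hfg u v]
  · intro u v
    by_cases hB : u ∈ B ∧ v ∈ B
    · rw [hjB u v hB.1 hB.2]
      by_cases h : δ u = δ v
      · rw [hg.2.2 u v (fun h' => h'.2.2.2 h)]
        have h1 := h01 u v
        have h2 := h01 v u
        have h3 := hanti u v
        have h4 := hanti v u
        have h5 : t u v + t v u = 0 ∨ t u v + t v u = 1 := by omega
        rcases hδ u with h6 | h6 <;> rcases h5 with h7 | h7 <;> rw [h6, h7] <;> simp
      · rw [hsup' u v (fun h' => h h'.2.2.2), hsup' v u (fun h' => h h'.2.2.2.symm)]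
        have h1 := hg.2.1 u v
        have h2 := hg.2.1 v u
        have h3 := hg.1 u v
        rcases hδ u with h6 | h6 <;> rw [h6] <;> omega
    · rw [hsup' u v (fun h' => hB ⟨h'.2.1, h'.2.2.1⟩), hsup' v u (fun h' => hB ⟨h'.2.2.1, h'.2.1⟩),
        hg.2.2 u v (fun h' => hB ⟨h'.2.1, h'.2.2.1⟩)]
      have := hjb u v
      simpa using this
  · intro u v h
    rw [hj0 u v h, hsup' u v (fun h' => h h'.1), hsup' v u (fun h' => h h'.1.symm),
        hg.2.2 u v (fun h' => h h'.1)]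
    simp
  · intro u v h
    rw [hsum, hsum]
    by_cases hu : u ∈ B <;> by_cases hv : v ∈ B
    · by_cases hd : δ u = δ v
      · exact hne u (Finset.mem_univ _) v (Finset.mem_univ _) ⟨h, hu, hv, hd⟩
      · have h1 := hpos' u hu
        have h2 := hpos' v hv
        intro he
        rw [he] at h1
        have : δ u = - δ v := by
          rcases hδ u with h2 | h2 <;> rcases hδ v with h3 | h3 <;> rw [h2, h3] at hd ⊢ <;> simp at hd ⊢
        rw [this] at h1
        linarith
    · exact hmix u v hu hv
    · exact (hmix v u hv hu).symm
    · rw [htB u hu, htB v hv]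
      simpa using hR u v hu hv h

end Core

section Struct
variable {V : Type*} [Fintype V] [DecidableEq V]

lemma zm2 : ∀ a : ZMod 2, a ≠ 0 → a = 1 := by decide

/-- bipartite subgraph between `I` and its complement -/
def HG (G : SimpleGraph V) (I : Finset V) : SimpleGraph V where
  Adj u v := G.Adj u v ∧ ((u ∈ I ∧ v ∉ I) ∨ (u ∉ I ∧ v ∈ I))
  symm := ⟨fun _ _ h => ⟨h.1.symm, h.2.elim (fun h => Or.inr ⟨h.2, h.1⟩) (fun h => Or.inl ⟨h.2, h.1⟩)⟩⟩
  loopless := ⟨fun u h => G.loopless.irrefl u h.1⟩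

/-- delete the edges at `z` -/
def delV (H : SimpleGraph V) (z : V) : SimpleGraph V where
  Adj u v := H.Adj u v ∧ u ≠ z ∧ v ≠ z
  symm := ⟨fun _ _ h => ⟨h.1.symm, h.2.2, h.2.1⟩⟩
  loopless := ⟨fun u h => H.loopless.irrefl u h.1⟩

lemma indep_exists (G : SimpleGraph V) (hconn : G.Connected) :
    ∃ (I : Finset V) (r : V), r ∈ I ∧ (∀ u ∈ I, ∀ v ∈ I, ¬ G.Adj u v) ∧
      ∀ v, (HG G I).Reachable r v := by
  obtain ⟨r⟩ := hconn.nonempty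
  let P : Finset (Finset V) := Finset.univ.filter (fun I => r ∈ I ∧ (∀ u ∈ I, ∀ v ∈ I, ¬ G.Adj u v) ∧
    ∀ v ∈ I, (HG G I).Reachable r v)
  have hP : P.Nonempty := by
    refine ⟨{r}, ?_⟩
    simp only [P, Finset.mem_filter, Finset.mem_univ, true_and, Finset.mem_singleton]
    refine ⟨?_, ?_⟩
    · rintro u rfl v rfl; exact G.loopless.irrefl _
    · rintro v rfl; exact SimpleGraph.Reachable.refl _
  obtain ⟨I, hI, hmax⟩ := Finset.exists_max_image P Finset.card hP
  simp only [P, Finset.mem_filter, Finset.mem_univ, true_and] at hI hmax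
  obtain ⟨hr, hind, hreach⟩ := hI
  refine ⟨I, r, hr, hind, ?_⟩
  by_contra hcon
  push Not at hcon
  obtain ⟨v0, hv0⟩ := hcon
  -- crossing edge
  have hcross : ∃ u v, G.Adj u v ∧ (HG G I).Reachable r u ∧ ¬ (HG G I).Reachable r v := by
    by_contra hno
    push Not at hno
    obtain ⟨p⟩ := hconn.preconnected r v0
    have : ∀ a b (p : G.Walk a b), (HG G I).Reachable r a → (HG G I).Reachable r b := by
      intro a b p
      induction p with
      | nil => exact id
      | cons h p ih => exact fun ha => ih (hno _ _ h ha)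
    exact hv0 (this _ _ p (SimpleGraph.Reachable.refl _))
  obtain ⟨u, v, huv, hu, hv⟩ := hcross
  have hvI : v ∉ I := fun h => hv (hreach v h)
  have hvn : ∀ x ∈ I, ¬ G.Adj x v := by
    intro x hx h
    refine hv ((hreach x hx).trans (SimpleGraph.Adj.reachable ?_))
    exact ⟨h, Or.inl ⟨hx, hvI⟩⟩
  have huI : u ∉ I := fun h => hvn u h huv
  have hmono : HG G I ≤ HG G (insert v I) := by
    intro a b h
    have h1 : a ≠ v := by
      rintro rfl
      rcases h.2 with h2 | h2
      · exact hvI h2.1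
      · exact hvn _ h2.2 h.1.symm
    have h3 : b ≠ v := by
      rintro rfl
      rcases h.2 with h2 | h2
      · exact hvn _ h2.1 h.1
      · exact hvI h2.2
    refine ⟨h.1, ?_⟩
    simpa [h1, h3] using h.2
  have := hmax (insert v I) ⟨Finset.mem_insert_of_mem hr, ?_, ?_⟩
  · rw [Finset.card_insert_of_notMem hvI] at this; omega
  · intro a ha b hb
    rw [Finset.mem_insert] at ha hb
    rcases ha with rfl | ha <;> rcases hb with rfl | hb
    · exact G.loopless.irrefl _
    · exact fun h => hvn _ hb h.symm
    · exact hvn _ ha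
    · exact hind _ ha _ hb
  · have hu' : (HG G (insert v I)).Reachable r u := hu.mono hmono
    intro a ha
    rw [Finset.mem_insert] at ha
    rcases ha with rfl | ha
    · refine hu'.trans (SimpleGraph.Adj.reachable ⟨huv, Or.inr ⟨?_, by simp⟩⟩)
      rw [Finset.mem_insert]
      rintro (h | h)
      · exact huv.ne h
      · exact huI h
    · exact (hreach a ha).mono hmono

lemma tj (H : SimpleGraph V) (r : V) (τ : V → ZMod 2) (hτ : ∑ v, τ v = 0)
    (hr : ∀ v, τ v ≠ 0 → H.Reachable r v) :
    ∃ w : V → V → ZMod 2, (∀ x y, w x y = w y x) ∧ (∀ x y, ¬ H.Adj x y → w x y = 0) ∧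
      ∀ u, ∑ y, w u y = τ u := by
  have h1 : ∀ v, τ v = if τ v ≠ 0 then 1 else 0 := by
    intro v
    by_cases h : τ v = 0
    · simp [h]
    · simp [h, zm2 _ h]
  obtain ⟨w, hw1, hw2, hw3⟩ := tjoin H r (Finset.univ.filter (fun v => τ v ≠ 0)) (by
    rw [← ZMod.natCast_eq_zero_iff_even, Finset.card_filter]
    push_cast
    refine Eq.trans ?_ hτ
    exact Finset.sum_congr rfl fun v _ => (h1 v).symm) (by simpa using hr)
  refine ⟨w, hw1, hw2, fun u => ?_⟩
  rw [hw3, h1 u]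
  simp

/-- signed version of a join -/
noncomputable def bs (I : Finset V) (δ : V → ℤ) (w : V → V → ZMod 2) (u v : V) : ℤ :=
  if w u v = 0 then 0 else if u ∈ I then δ v else δ u

lemma core2 (G : SimpleGraph V) (d : ℕ) (hreg : ∀ v, (G.neighborFinset v).card = d)
    (I : Finset V) (hI : ∀ u ∈ I, ∀ v ∈ I, ¬ G.Adj u v) (z : V) (δ : V → ℤ)
    (hcut : CutOK (fun u v => G.Adj u v ∧ u ∈ {v | v ∉ I ∧ v ≠ z} ∧ v ∈ {v | v ∉ I ∧ v ≠ z}) δ)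
    (w : V → V → ZMod 2) (hws : ∀ x y, w x y = w y x) (hw0 : ∀ x y, ¬ (HG G I).Adj x y → w x y = 0)
    (e : V → ℤ) (he : ∀ v, e v = 0 ∨ e v = 1 ∨ e v = -1) (he0 : ∀ v, ¬ G.Adj z v → e v = 0)
    (heB : ∀ v, v ∉ I → v ≠ z → e v = 0 ∨ e v = δ v) (hew : ∀ v, e v ≠ 0 → w z v = 0)
    (hpar : ∀ v, ∑ y, w v y + (e v : ZMod 2) + (if v = z then ((∑ y, e y : ℤ) : ZMod 2) else 0)
      = if v ∉ I ∧ v ≠ z then 1 else 0)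
    (hne : ∀ x ∈ I, G.Adj z x → ∑ y, bs I δ w x y + e x ≠ ∑ y, bs I δ w z y + ∑ y, e y) :
    LIRtwoLE2 G := by
  have hδ := hcut.1
  have hez : e z = 0 := he0 z (G.loopless.irrefl z)
  have hbs : ∀ u v, bs I δ w u v = bs I δ w v u := by
    intro u v
    unfold bs
    rw [hws u v]
    by_cases h : w v u = 0
    · simp [h]
    · have : (HG G I).Adj v u := by by_contra h'; exact h (hw0 _ _ h')
      rcases this.2 with h1 | h1 <;> simp [h, h1.1, h1.2]
  have hbc : ∀ u v, ((bs I δ w u v : ℤ) : ZMod 2) = w u v := by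
    intro u v
    have hc : ∀ v, ((δ v : ℤ) : ZMod 2) = 1 := by
      intro v; rcases hδ v with h | h <;> rw [h] <;> decide
    unfold bs
    by_cases h : w u v = 0
    · simp [h]
    · rw [zm2 _ h]
      by_cases h' : u ∈ I <;> simp [h', hc]
  have hbb : ∀ u v, bs I δ w u v = 0 ∨ bs I δ w u v = 1 ∨ bs I δ w u v = -1 := by
    intro u v
    unfold bs
    split_ifs
    · simp
    · exact Or.inr (hδ v)
    · exact Or.inr (hδ u)
  let j : V → V → ℤ := fun u v => bs I δ w u v + ((if u = z then e v else 0) + (if v = z then e u else 0))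
  have hjsum : ∀ u, ∑ v, j u v = ∑ v, bs I δ w u v + ((if u = z then ∑ v, e v else 0) + e u) := by
    intro u
    simp only [j, Finset.sum_add_distrib]
    congr 2
    · split_ifs <;> simp
    · simp
  have hjc : ∀ u, ((∑ v, j u v : ℤ) : ZMod 2) = if u ∉ I ∧ u ≠ z then 1 else 0 := by
    intro u
    rw [← hpar u, hjsum]
    push_cast
    simp only [hbc]
    split_ifs <;> push_cast <;> ring
  have hoddB : ∀ v ∈ {v | v ∉ I ∧ v ≠ z}, Odd (∑ y, j v y) := by
    intro v hv
    rw [← ZMod.intCast_eq_one_iff_odd, hjc]; exact if_pos hv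
  apply core G d hreg {v | v ∉ I ∧ v ≠ z} δ hcut j
  · intro u v
    simp only [j, hbs u v]
    ring
  · intro u v
    simp only [j]
    have hb := hbb u v
    have h1 := he u
    have h2 := he v
    by_cases hu : u = z
    · by_cases hv : v = z
      · subst hu; subst hv; simp only [if_true, hez]; omega
      · simp only [hu, hv, if_true, if_false]
        by_cases h3 : e v = 0
        · rw [hu] at hb; omega
        · have : bs I δ w z v = 0 := by simp [bs, hew v h3]
          omega
    · by_cases hv : v = z
      · simp only [hu, hv, if_true, if_false]
        by_cases h3 : e u = 0
        · rw [hv] at hb; omega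
        · have : bs I δ w u z = 0 := by rw [hbs]; simp [bs, hew u h3]
          omega
      · simp only [hu, hv, if_false]; omega
  · intro u v h
    have h1 : bs I δ w u v = 0 := by
      simp [bs, hw0 u v (fun h' => h h'.1)]
    simp only [j, h1]
    by_cases hu : u = z
    · subst hu
      rw [he0 v h, hez]; simp
    · by_cases hv : v = z
      · subst hv
        rw [he0 u (fun h' => h h'.symm)]; simp [hu]
      · simp [hu, hv]
  · intro u v hu hv
    have h1 : bs I δ w u v = 0 := by
      simp [bs, hw0 u v (fun h' => by rcases h'.2 with h2 | h2; exact hu.1 h2.1; exact hv.1 h2.2)]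
    simp [j, h1, hu.2, hv.2]
  · exact hoddB
  · intro v hv
    have h1 := hoddB v hv
    have h2 : 0 ≤ δ v * ∑ y, j v y := by
      rw [hjsum, if_neg hv.2, mul_add, Finset.mul_sum, zero_add]
      have hvv : 0 ≤ δ v * δ v := mul_self_nonneg _
      apply add_nonneg
      · apply Finset.sum_nonneg
        intro y _
        unfold bs
        rw [if_neg hv.1]
        split_ifs <;> simp [hvv]
      · rcases heB v hv.1 hv.2 with h | h <;> rw [h]
        · simp
        · exact hvv
    have h3 : Odd (δ v * ∑ y, j v y) := by
      rcases hδ v with h | h <;> rw [h]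
      · simpa using h1
      · simpa using h1
    rcases h2.lt_or_eq with h | h
    · exact h
    · rw [← h] at h3; simp at h3
  · intro v hv
    rw [← ZMod.intCast_eq_zero_iff_even, hjc]; exact if_neg hv
  · have key : ∀ v, v ∈ I → G.Adj z v → ∑ y, j z y ≠ ∑ y, j v y := by
      intro v hv h
      have h1 : v ≠ z := h.ne.symm
      have := hne v hv h
      rw [hjsum, hjsum, if_pos rfl, if_neg h1, hez]
      intro h2
      apply this
      linarith
    intro u v hu hv h
    have hu' : u ∈ I ∨ u = z := by by_contra h'; push Not at h'; exact hu h'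
    have hv' : v ∈ I ∨ v = z := by by_contra h'; push Not at h'; exact hv h'
    rcases hu' with hu' | rfl <;> rcases hv' with hv' | rfl
    · exact absurd h (hI u hu' v hv')
    · exact (key u hu' h.symm).symm
    · exact key v hv' h
    · exact absurd h (G.loopless.irrefl _)

lemma case_even (G : SimpleGraph V) (d : ℕ) (hreg : ∀ v, (G.neighborFinset v).card = d)
    (I : Finset V) (hI : ∀ u ∈ I, ∀ v ∈ I, ¬ G.Adj u v) (r : V) (hr : r ∈ I)
    (hreach : ∀ v, (HG G I).Reachable r v) (hev : Even (Iᶜ).card) : LIRtwoLE2 G := by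
  obtain ⟨δ, hδ⟩ := cut_exists
    (fun u v => G.Adj u v ∧ u ∈ {v | v ∉ I ∧ v ≠ r} ∧ v ∈ {v | v ∉ I ∧ v ≠ r})
    (fun u v h => ⟨h.1.symm, h.2.2, h.2.1⟩)
  obtain ⟨w, h1, h2, h3⟩ := tj (HG G I) r (fun v => if v ∉ I then 1 else 0) (by
    rw [Finset.sum_boole]
    rw [ZMod.natCast_eq_zero_iff_even]
    convert hev using 2
    ext; simp) (fun v _ => hreach v)
  apply core2 G d hreg I hI r δ hδ w h1 h2 (fun _ => 0)
  · simp
  · simp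
  · simp
  · simp
  · intro v
    rw [h3]
    have : (v ∉ I ∧ v ≠ r) ↔ v ∉ I := ⟨fun h => h.1, fun h => ⟨h, fun h' => h (h' ▸ hr)⟩⟩
    simp only [this]
    simp
  · intro x hx h
    exact absurd h (hI r hr x hx)

end Struct

section Struct2
variable {V : Type*} [Fintype V] [DecidableEq V]

/-- valid joins avoiding `z` -/
def VW (G : SimpleGraph V) (I : Finset V) (z : V) (A Q : Finset V) (w : V → V → ZMod 2) : Prop :=
  (∀ u v, w u v = w v u) ∧ (∀ u v, ¬ (delV (HG G I) z).Adj u v → w u v = 0) ∧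
  ∀ u, u ≠ z → ∑ y, w u y =
    (if u ∉ I then 1 else 0) + (if u ∈ A then 1 else 0) + (if u ∈ Q then 1 else 0)

lemma exists_w (G : SimpleGraph V) (I : Finset V) (r z : V) (hz : z ∉ I)
    (hreach : ∀ v, v ≠ z → (delV (HG G I) z).Reachable r v) (hodd : Odd (Iᶜ).card)
    (A Q : Finset V) (hA : z ∉ A) (hQ : z ∉ Q) (hAQ : Even (A.card + Q.card)) :
    ∃ w, VW G I z A Q w := by
  have h11 : (1 : ZMod 2) + 1 = 0 := by decide
  obtain ⟨w, h1, h2, h3⟩ := tj (delV (HG G I) z) r (fun u =>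
    (if u ∉ I then 1 else 0) + (if u ∈ A then 1 else 0) + (if u ∈ Q then 1 else 0)
      + (if u = z then 1 else 0)) (by
      have e1 : (∑ u : V, if u ∉ I then (1 : ZMod 2) else 0) = 1 := by
        rw [Finset.sum_boole, ZMod.natCast_eq_one_iff_odd]
        convert hodd using 2
        ext; simp
      have e2 : (∑ u : V, if u ∈ A then (1 : ZMod 2) else 0) + (∑ u : V, if u ∈ Q then (1 : ZMod 2) else 0) = 0 := by
        rw [Finset.sum_boole, Finset.sum_boole, ← Nat.cast_add, ZMod.natCast_eq_zero_iff_even]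
        convert hAQ using 3
        · ext; simp
        · ext; simp
      simp only [Finset.sum_add_distrib]
      rw [e1, add_assoc 1, e2]
      simp [h11]) (by
      intro v hv
      apply hreach
      rintro rfl
      apply hv
      simp [hz, hA, hQ, h11])
  refine ⟨w, h1, h2, fun u hu => ?_⟩
  rw [h3]
  simp [hu]

lemma core3 (G : SimpleGraph V) (d : ℕ) (hreg : ∀ v, (G.neighborFinset v).card = d)
    (I : Finset V) (hI : ∀ u ∈ I, ∀ v ∈ I, ¬ G.Adj u v) (z : V) (hz : z ∉ I) (δ : V → ℤ)
    (hcut : CutOK (fun u v => G.Adj u v ∧ u ∈ {v | v ∉ I ∧ v ≠ z} ∧ v ∈ {v | v ∉ I ∧ v ≠ z}) δ)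
    (A Q : Finset V) (hA : ∀ a ∈ A, G.Adj z a ∧ a ∉ I) (hQ : ∀ a ∈ Q, G.Adj z a ∧ a ∈ I)
    (hAQ : Even (A.card + Q.card)) (ε : V → ℤ) (hε : ∀ v, ε v = 1 ∨ ε v = -1)
    (w : V → V → ZMod 2) (hw : VW G I z A Q w)
    (hne : ∀ x ∈ I, G.Adj z x → ∑ y, bs I δ w x y + (if x ∈ Q then ε x else 0) ≠
      ∑ y ∈ A, δ y + ∑ y ∈ Q, ε y) : LIRtwoLE2 G := by
  obtain ⟨hw1, hw2, hw3⟩ := hw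
  have hδ := hcut.1
  have hAQd : ∀ v ∈ A, v ∉ Q := fun v h h' => (hA v h).2 (hQ v h').2
  have hwz : ∀ v, w z v = 0 := fun v => hw2 z v fun h => h.2.1 rfl
  have hc : ∀ v, ((δ v : ℤ) : ZMod 2) = 1 := by
    intro v; rcases hδ v with h | h <;> rw [h] <;> decide
  have hc' : ∀ v, ((ε v : ℤ) : ZMod 2) = 1 := by
    intro v; rcases hε v with h | h <;> rw [h] <;> decide
  have hzA : z ∉ A := fun h => G.loopless.irrefl _ (hA z h).1
  have hzQ : z ∉ Q := fun h => G.loopless.irrefl _ (hQ z h).1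
  have hsum : ∑ y, ((if y ∈ Q then ε y else 0) + (if y ∈ A then δ y else 0)) =
      ∑ y ∈ A, δ y + ∑ y ∈ Q, ε y := by
    rw [Finset.sum_add_distrib]
    simp [add_comm]
  have h11 : (1 : ZMod 2) + 1 = 0 := by decide
  apply core2 G d hreg I hI z δ hcut w hw1 (fun x y h => hw2 x y (fun h' => h h'.1))
    (fun v => (if v ∈ Q then ε v else 0) + (if v ∈ A then δ v else 0))
  · intro v
    have h1 := hδ v
    have h2 := hε v
    by_cases hvA : v ∈ A
    · simp only [hvA, hAQd v hvA, if_true, if_false]; omega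
    · by_cases hvQ : v ∈ Q
      · simp only [hvA, hvQ, if_true, if_false]; omega
      · simp [hvA, hvQ]
  · intro v hv
    have h1 : v ∉ A := fun h => hv (hA v h).1
    have h2 : v ∉ Q := fun h => hv (hQ v h).1
    simp [h1, h2]
  · intro v hv _
    have h2 : v ∉ Q := fun h => hv (hQ v h).2
    by_cases h : v ∈ A <;> simp [h, h2]
  · intro v _
    exact hwz v
  · intro v
    by_cases hv : v = z
    · subst hv
      rw [hsum]
      simp only [hwz, hzA, hzQ, if_true, if_false]
      push_cast
      simp only [hc, hc', Finset.sum_const, nsmul_eq_mul, mul_one]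
      rw [← Nat.cast_add, ZMod.natCast_eq_zero_iff_even.2 hAQ]
      simp
    · rw [hw3 v hv]
      by_cases hvI : v ∈ I
      · have h1 : v ∉ A := fun h => (hA v h).2 hvI
        by_cases hvQ : v ∈ Q <;> simp [hvI, h1, hvQ, hv, hc', h11]
      · have h2 : v ∉ Q := fun h => hvI (hQ v h).2
        by_cases hvA : v ∈ A <;> simp [hvI, h2, hvA, hv, hc, h11, add_assoc]
  · intro x hx hzx
    have h1 : x ∉ A := fun h => (hA x h).2 hx
    have h2 : ∑ y, bs I δ w z y = 0 := Finset.sum_eq_zero fun y _ => by simp [bs, hwz]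
    rw [hsum, h2]
    simpa [h1] using hne x hx hzx

lemma cnt (n : ℕ) : ∀ (s : Finset V) (_ : s.card = n) (_ : 2 ≤ n) (c : V → ℤ),
    ∃ ε : V → ℤ, (∀ v, ε v = 1 ∨ ε v = -1) ∧ ∀ i ∈ s, ∑ v ∈ s, ε v ≠ c i + ε i := by
  induction n using Nat.strong_induction_on with
  | _ n ih =>
  intro s hs hn c
  by_cases h1 : ∀ i ∈ s, c i ≠ n - 1
  · refine ⟨fun _ => 1, by simp, fun i hi h => h1 i hi ?_⟩
    simp [hs] at h; omega
  by_cases h2 : ∀ i ∈ s, c i ≠ -(n - 1)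
  · refine ⟨fun _ => -1, by simp, fun i hi h => h2 i hi ?_⟩
    simp [hs] at h; omega
  push Not at h1 h2
  obtain ⟨i, hi, hci⟩ := h1
  obtain ⟨k, hk, hck⟩ := h2
  have hik : i ≠ k := by rintro rfl; omega
  have hk' : k ∈ s.erase i := Finset.mem_erase.2 ⟨hik.symm, hk⟩
  let t := (s.erase i).erase k
  have htc : t.card + 2 = n := by
    have h1 := Finset.card_erase_of_mem hi
    have h2 := Finset.card_erase_of_mem hk'
    simp only [t]; omega
  have hsum : ∀ f : V → ℤ, ∑ v ∈ s, f v = f i + f k + ∑ v ∈ t, f v := by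
    intro f
    rw [← Finset.add_sum_erase s f hi, ← Finset.add_sum_erase _ f hk']
    ring
  have hmem : ∀ v ∈ s, v = i ∨ v = k ∨ v ∈ t := by
    intro v hv
    simp only [t, Finset.mem_erase]; tauto
  have hti : i ∉ t := by simp [t]
  have htk : k ∉ t := by simp [t]
  have hbound : ∀ f : V → ℤ, (∀ v, f v = 1 ∨ f v = -1) → |∑ v ∈ t, f v| ≤ t.card := by
    intro f hf
    refine (Finset.abs_sum_le_sum_abs _ _).trans ?_
    have : ∀ v ∈ t, |f v| = 1 := by
      intro v _; rcases hf v with h | h <;> rw [h] <;> rfl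
    rw [Finset.sum_congr rfl this]; simp
  -- extension
  have ext : ∀ f : V → ℤ, (∀ v, f v = 1 ∨ f v = -1) → (∀ v ∈ t, ∑ u ∈ t, f u ≠ c v + f v) →
      ∃ ε : V → ℤ, (∀ v, ε v = 1 ∨ ε v = -1) ∧ ∀ i ∈ s, ∑ v ∈ s, ε v ≠ c i + ε i := by
    intro f hf hft
    let g : V → ℤ := fun v => if v = i then 1 else if v = k then -1 else f v
    have hgi : g i = 1 := by simp [g]
    have hgk : g k = -1 := by simp [g, hik.symm]
    have hgt : ∀ v ∈ t, g v = f v := by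
      intro v hv
      have h1 : v ≠ i := fun h => hti (h ▸ hv)
      have h2 : v ≠ k := fun h => htk (h ▸ hv)
      simp [g, h1, h2]
    have hb := abs_le.1 (hbound f hf)
    refine ⟨g, fun v => ?_, fun v hv => ?_⟩
    · simp only [g]; split_ifs
      · simp
      · simp
      · exact hf v
    · have hst : ∑ v ∈ s, g v = 1 + -1 + ∑ v ∈ t, f v := by
        rw [hsum, hgi, hgk, Finset.sum_congr rfl hgt]
      rw [hst]
      rcases hmem v hv with rfl | rfl | h
      · rw [hgi]; omega
      · rw [hgk]; omega
      · have := hft v h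
        rw [hgt v h]; omega
  rcases lt_or_ge t.card 2 with h | h
  · have h' : t.card = 0 ∨ t.card = 1 := by omega
    rcases h' with h' | h'
    · refine ext (fun _ => 1) (by simp) ?_
      rw [Finset.card_eq_zero.1 h']; simp
    · obtain ⟨m, hm⟩ := Finset.card_eq_one.1 h'
      by_cases hcm : c m = 0
      · have hmi : m ≠ i := fun h => hti (by rw [hm, h]; simp)
        have hmk : m ≠ k := fun h => htk (by rw [hm, h]; simp)
        refine ⟨fun v => if v = m then -1 else 1, fun v => by by_cases h : v = m <;> simp [h], fun v hv => ?_⟩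
        rw [hsum, hm]
        rcases hmem v hv with rfl | rfl | h
        · simp [hmi.symm, hmk.symm]; omega
        · simp [hmi.symm, hmk.symm]; omega
        · rw [hm, Finset.mem_singleton] at h
          subst h
          simp [hmi.symm, hmk.symm]; omega
      · refine ext (fun _ => 1) (by simp) ?_
        rw [hm]; simpa using hcm
  · obtain ⟨f, hf1, hf2⟩ := ih t.card (by omega) t rfl h c
    exact ext f hf1 hf2

lemma nocross (G : SimpleGraph V) (d : ℕ) (hreg : ∀ v, (G.neighborFinset v).card = d)
    (I : Finset V) (hI : ∀ u ∈ I, ∀ v ∈ I, ¬ G.Adj u v) (s : V) (K : Set V)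
    (hin : ∀ b, b ∉ I → b ≠ s → b ∈ K → ∀ a, G.Adj b a → a ∈ I ∧ a ∈ K)
    (hout : ∀ b, b ∉ I → b ≠ s → b ∉ K → ∀ a, G.Adj b a → a ∈ I → a ∉ K)
    (hex : ∃ a, G.Adj s a ∧ a ∉ K) : ∀ a ∈ I, G.Adj s a → a ∉ K := by
  let f : V → ℕ := fun b => ((G.neighborFinset b).filter (fun a => a ∈ I ∧ a ∈ K)).card
  have hf : ∀ b, f b = ∑ a ∈ I.filter (· ∈ K), if G.Adj a b then 1 else 0 := by
    intro b
    rw [Finset.sum_boole, Nat.cast_id]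
    simp only [f]
    congr 1
    ext a
    simp [SimpleGraph.adj_comm, and_comm, and_assoc]
  have hsum : ∑ b, f b = (I.filter (· ∈ K)).card * d := by
    simp only [hf]
    rw [Finset.sum_comm]
    rw [Finset.sum_congr rfl (g := fun _ => d)]
    · simp
    · intro a _
      rw [Finset.sum_boole, Nat.cast_id, ← hreg a]
      congr 1
      ext b
      simp
  have hdvd : ∀ b, b ≠ s → d ∣ f b := by
    intro b hb
    by_cases hbI : b ∈ I
    · have : f b = 0 := by
        simp only [f, Finset.card_eq_zero, Finset.filter_eq_empty_iff]
        intro a ha h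
        exact hI b hbI a h.1 (by simpa using ha)
      simp [this]
    · by_cases hbK : b ∈ K
      · have : f b = d := by
          rw [← hreg b]
          simp only [f]
          rw [Finset.filter_true_of_mem]
          intro a ha
          exact hin b hbI hb hbK a (by simpa using ha)
        simp [this]
      · have : f b = 0 := by
          simp only [f, Finset.card_eq_zero, Finset.filter_eq_empty_iff]
          intro a ha h
          exact hout b hbI hb hbK a (by simpa using ha) h.1 h.2
        simp [this]
  have hds : d ∣ f s := by
    have h1 : d ∣ ∑ b ∈ Finset.univ.erase s, f b := Finset.dvd_sum fun b hb => hdvd b (Finset.ne_of_mem_erase hb)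
    have h2 := Finset.add_sum_erase Finset.univ f (Finset.mem_univ s)
    rw [hsum] at h2
    exact (Nat.dvd_add_left h1).1 (h2 ▸ Dvd.intro_left _ rfl)
  have hlt : f s < d := by
    rw [← hreg s]
    apply Finset.card_lt_card
    rw [Finset.filter_ssubset]
    obtain ⟨a, ha, haK⟩ := hex
    exact ⟨a, by simpa using ha, fun h => haK h.2⟩
  have h0 : f s = 0 := Nat.eq_zero_of_dvd_of_lt hds hlt
  simp only [f, Finset.card_eq_zero, Finset.filter_eq_empty_iff] at h0
  intro a ha hsa haK
  exact h0 (by simpa using hsa) ⟨ha, haK⟩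

lemma parent (H : SimpleGraph V) (r v : V) (h : H.Reachable v r) (hne : v ≠ r) :
    ∃ y, H.Adj v y ∧ H.dist y r + 1 = H.dist v r := by
  obtain ⟨p, hp⟩ := h.exists_walk_length_eq_dist
  cases p with
  | nil => exact absurd rfl hne
  | cons hadj q =>
    rename_i y
    refine ⟨y, hadj, ?_⟩
    have h1 := SimpleGraph.dist_le q
    obtain ⟨q', hq'⟩ := (SimpleGraph.Walk.reachable q).exists_walk_length_eq_dist
    have h2 := SimpleGraph.dist_le (SimpleGraph.Walk.cons hadj q')
    simp only [SimpleGraph.Walk.length_cons] at hp h2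
    omega

lemma noncut (G : SimpleGraph V) (d : ℕ) (hreg : ∀ v, (G.neighborFinset v).card = d)
    (I : Finset V) (hI : ∀ u ∈ I, ∀ v ∈ I, ¬ G.Adj u v) (r : V) (hr : r ∈ I)
    (hreach : ∀ v, (HG G I).Reachable r v) (z : V) (hz : z ∉ I)
    (hdef : ∀ b, b ∉ I → (∃ a, a ∉ I ∧ G.Adj b a) → (HG G I).dist b r ≤ (HG G I).dist z r) :
    ∀ v, v ≠ z → (delV (HG G I) z).Reachable r v := by
  by_contra hcon
  push Not at hcon
  obtain ⟨v1, hv1, hv1'⟩ := hcon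
  let C : Finset V := Finset.univ.filter (fun v => v ≠ z ∧ ¬ (delV (HG G I) z).Reachable r v)
  have hC : ∀ v, v ∈ C ↔ v ≠ z ∧ ¬ (delV (HG G I) z).Reachable r v := by simp [C]
  obtain ⟨v, hv, hmin⟩ := Finset.exists_min_image C (fun v => (HG G I).dist v r) ⟨v1, (hC v1).2 ⟨hv1, hv1'⟩⟩
  have hzr : z ≠ r := fun h => hz (h ▸ hr)
  have hprop : ∀ a b, (HG G I).Adj a b → a ∉ C → a ≠ z → b ∉ C := by
    intro a b hab ha haz hb
    rw [hC] at ha hb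
    push Not at ha
    exact hb.2 ((ha haz).trans (SimpleGraph.Adj.reachable ⟨hab, haz, hb.1⟩))
  have hvr : v ≠ r := by
    rintro rfl
    exact ((hC _).1 hv).2 (SimpleGraph.Reachable.refl _)
  obtain ⟨y, hy, hyd⟩ := parent (HG G I) r v (hreach v).symm hvr
  have hyC : y ∉ C := fun h => by have := hmin y h; omega
  have hyz : y = z := by
    by_contra h
    exact hprop y v hy.symm hyC h hv
  subst hyz
  have hL : ∀ u ∈ C, (HG G I).dist y r < (HG G I).dist u r := by
    intro u hu
    have := hmin u hu; omega
  have hvI : v ∈ I := by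
    rcases hy.2 with h | h
    · exact h.1
    · exact absurd h.2 hz
  refine nocross G d hreg I hI y (C : Set V) ?_ ?_ ?_ v hvI hy.1.symm (by simpa using hv)
  · intro b hb hby hbC a hab
    have hbC' : b ∈ C := by simpa using hbC
    have haI : a ∈ I := by
      by_contra h
      have := hdef b hb ⟨a, h, hab⟩
      have := hL b hbC'
      omega
    refine ⟨haI, ?_⟩
    by_contra haC
    exact hprop a b ⟨hab.symm, Or.inl ⟨haI, hb⟩⟩ (by simpa using haC) (fun h => hz (h ▸ haI)) hbC'
  · intro b hb hby hbC a hab haI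
    have := hprop b a ⟨hab, Or.inr ⟨hb, haI⟩⟩ (by simpa using hbC) hby
    simpa using this
  · obtain ⟨x, hx, hxd⟩ := parent (HG G I) r y (hreach y).symm hzr
    refine ⟨x, hx.1, ?_⟩
    intro h
    have := hL x (by simpa using h)
    omega

end Struct2

section Cases
variable {V : Type*} [Fintype V] [DecidableEq V]

lemma case_2b (G : SimpleGraph V) (d : ℕ) (hreg : ∀ v, (G.neighborFinset v).card = d) (hd : 2 ≤ d)
    (I : Finset V) (hI : ∀ u ∈ I, ∀ v ∈ I, ¬ G.Adj u v) (r z : V) (hz : z ∉ I)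
    (hreach : ∀ v, v ≠ z → (delV (HG G I) z).Reachable r v) (hodd : Odd (Iᶜ).card)
    (hno : ∀ a b, a ∉ I → b ∉ I → ¬ G.Adj a b) : LIRtwoLE2 G := by
  obtain ⟨Q, hQs, hQc⟩ := Finset.exists_subset_card_eq (s := G.neighborFinset z) (n := 2)
    (by rw [hreg]; exact hd)
  have hQ : ∀ a ∈ Q, G.Adj z a ∧ a ∈ I := by
    intro a ha
    have h := hQs ha
    rw [SimpleGraph.mem_neighborFinset] at h
    refine ⟨h, ?_⟩
    by_contra h'
    exact hno z a hz h' h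
  have hev : Even ((∅ : Finset V).card + Q.card) := by rw [hQc, Finset.card_empty]; decide
  obtain ⟨w, hw⟩ := exists_w G I r z hz hreach hodd ∅ Q (by simp)
    (fun h => G.loopless.irrefl _ (hQ z h).1) hev
  refine core3 G d hreg I hI z hz (fun _ => 1) ⟨by simp, ?_⟩ ∅ Q (by simp) hQ hev (fun _ => -1)
    (by simp) w hw ?_
  · intro X
    apply le_of_eq
    refine Finset.sum_eq_zero fun u _ => Finset.sum_eq_zero fun v _ => if_neg ?_
    rintro ⟨h1, h2, h3⟩
    exact hno u v h2.1 h3.1 h1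
  · intro x hx hzx
    have h1 : 0 ≤ ∑ y, bs I (fun _ => 1) w x y := by
      refine Finset.sum_nonneg fun y _ => ?_
      unfold bs
      split_ifs <;> simp
    have h2 : (-1 : ℤ) ≤ if x ∈ Q then -1 else 0 := by split_ifs <;> simp
    have h3 : ∑ y ∈ Q, (-1 : ℤ) = -2 := by simp [hQc]
    rw [h3, Finset.sum_empty]
    omega

lemma case_2a (G : SimpleGraph V) (d : ℕ) (hreg : ∀ v, (G.neighborFinset v).card = d)
    (I : Finset V) (hI : ∀ u ∈ I, ∀ v ∈ I, ¬ G.Adj u v) (r z : V) (hz : z ∉ I)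
    (hreach : ∀ v, v ≠ z → (delV (HG G I) z).Reachable r v) (hodd : Odd (Iᶜ).card)
    (hdz : ∃ a, a ∉ I ∧ G.Adj z a) (hp : 2 ≤ ((G.neighborFinset z).filter (· ∈ I)).card) :
    LIRtwoLE2 G := by
  obtain ⟨a, haI, hza⟩ := hdz
  obtain ⟨δ, hδ⟩ := cut_exists
    (fun u v => G.Adj u v ∧ u ∈ {v | v ∉ I ∧ v ≠ z} ∧ v ∈ {v | v ∉ I ∧ v ≠ z})
    (fun u v h => ⟨h.1.symm, h.2.2, h.2.1⟩)
  let Q := (G.neighborFinset z).filter (· ∈ I)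
  have hQ : ∀ a, a ∈ Q ↔ G.Adj z a ∧ a ∈ I := by intro a; simp [Q]
  have hA : ∃ A : Finset V, (∀ a ∈ A, G.Adj z a ∧ a ∉ I) ∧ Even (A.card + Q.card) := by
    rcases Nat.even_or_odd Q.card with h | h
    · exact ⟨∅, by simp, by simpa using h⟩
    · refine ⟨{a}, by simp [hza, haI], ?_⟩
      rw [Finset.card_singleton]
      exact odd_one.add_odd h
  obtain ⟨A, hA, hev⟩ := hA
  obtain ⟨w, hw⟩ := exists_w G I r z hz hreach hodd A Q (fun h => G.loopless.irrefl _ (hA z h).1)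
    (fun h => G.loopless.irrefl _ ((hQ z).1 h).1) hev
  obtain ⟨ε, hε, hε2⟩ := cnt Q.card Q rfl hp (fun x => ∑ y, bs I δ w x y - ∑ y ∈ A, δ y)
  refine core3 G d hreg I hI z hz δ hδ A Q hA (fun a h => (hQ a).1 h) hev ε hε w hw ?_
  intro x hx hzx h
  have hxQ := (hQ x).2 ⟨hzx, hx⟩
  have := hε2 x hxQ
  rw [if_pos hxQ] at h
  apply this
  linarith

lemma iso_reach (H : SimpleGraph V) (a b : V) (h : H.Reachable a b) (hn : ∀ c, ¬ H.Adj b c) : a = b := by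
  obtain ⟨p⟩ := h.symm
  cases p with
  | nil => rfl
  | cons h _ => exact absurd h (hn _)

set_option maxHeartbeats 1000000 in
lemma case_2c (G : SimpleGraph V) (d : ℕ) (hreg : ∀ v, (G.neighborFinset v).card = d) (hd : 2 ≤ d)
    (I : Finset V) (hI : ∀ u ∈ I, ∀ v ∈ I, ¬ G.Adj u v) (r z : V) (hr : r ∈ I) (hz : z ∉ I)
    (hreachH : ∀ v, (HG G I).Reachable r v)
    (hdef : ∀ b, b ∉ I → (∃ a, a ∉ I ∧ G.Adj b a) → (HG G I).dist b r ≤ (HG G I).dist z r)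
    (hreach : ∀ v, v ≠ z → (delV (HG G I) z).Reachable r v) (hodd : Odd (Iᶜ).card)
    (x : V) (hx : x ∈ I) (hzx : G.Adj z x) (huni : ∀ y ∈ I, G.Adj z y → y = x) :
    LIRtwoLE2 G := by
  by_contra hno
  have hxz : x ≠ z := hzx.ne.symm
  let R : V → V → Prop :=
    fun u v => G.Adj u v ∧ u ∈ {v | v ∉ I ∧ v ≠ z} ∧ v ∈ {v | v ∉ I ∧ v ≠ z}
  let P : Finset V → (V → V → ZMod 2) → Prop := fun A w =>
    ∃ Q : Finset V, (Q = ∅ ∨ Q = {x}) ∧ Even (A.card + Q.card) ∧ VW G I z A Q w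
  have hPex : ∀ A : Finset V, z ∉ A → ∃ w, P A w := by
    intro A hA
    have : ∃ Q : Finset V, (Q = ∅ ∨ Q = {x}) ∧ Even (A.card + Q.card) := by
      rcases Nat.even_or_odd A.card with h | h
      · exact ⟨∅, by simp, by simpa using h⟩
      · exact ⟨{x}, by simp, by rw [Finset.card_singleton]; exact h.add_odd odd_one⟩
    obtain ⟨Q, hQ, hev⟩ := this
    obtain ⟨w, hw⟩ := exists_w G I r z hz hreach hodd A Q hA
      (by rcases hQ with rfl | rfl <;> simp [hxz.symm]) hev
    exact ⟨w, Q, hQ, hev, hw⟩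
  let Nx := (G.neighborFinset x).erase z
  let Nz := (G.neighborFinset z).erase x
  have hNx : ∀ y, y ∈ Nx ↔ G.Adj x y ∧ y ∉ I ∧ y ≠ z := by
    intro y
    simp only [Nx, Finset.mem_erase, SimpleGraph.mem_neighborFinset]
    exact ⟨fun h => ⟨h.2, fun h' => hI x hx y h' h.2, h.1⟩, fun h => ⟨h.2.2, h.1⟩⟩
  have hNz : ∀ y, y ∈ Nz ↔ G.Adj z y ∧ y ∉ I := by
    intro y
    simp only [Nz, Finset.mem_erase, SimpleGraph.mem_neighborFinset]
    exact ⟨fun h => ⟨h.2, fun h' => h.1 (huni y h' h.2)⟩, fun h => ⟨fun h' => h.2 (h' ▸ hx), h.1⟩⟩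
  have hNxc : Nx.card = d - 1 := by
    rw [← hreg x]; exact Finset.card_erase_of_mem (by simpa using hzx.symm)
  have hNzc : Nz.card = d - 1 := by
    rw [← hreg z]; exact Finset.card_erase_of_mem (by simpa using hzx)
  have hzNz : z ∉ Nz := fun h => G.loopless.irrefl _ ((hNz z).1 h).1
  have key : ∀ δ, CutOK R δ → ∀ A ⊆ Nz, ∀ w, P A w →
      ∑ y ∈ Nx, (if w x y = 0 then 0 else δ y) = ∑ y ∈ A, δ y := by
    rintro δ hδ A hA w ⟨Q, hQ, hev, hw⟩
    have h1 : ∑ y ∈ Nx, (if w x y = 0 then 0 else δ y) = ∑ y, bs I δ w x y := by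
      have : ∀ y, bs I δ w x y = if w x y = 0 then 0 else δ y := by
        intro y; simp only [bs, if_pos hx]
      simp only [this]
      refine Finset.sum_subset (Finset.subset_univ _) fun y _ hy => ?_
      rw [if_pos]
      apply hw.2.1
      intro h
      exact hy ((hNx y).2 ⟨h.1.1, fun h' => hI x hx y h' h.1.1, h.2.2⟩)
    rw [h1]
    by_contra hne
    apply hno
    refine core3 G d hreg I hI z hz δ hδ A Q (fun a ha => (hNz a).1 (hA ha)) ?_ hev (fun _ => 1)
      (by simp) w hw ?_
    · rcases hQ with rfl | rfl
      · simp
      · simp [hx, hzx]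
    · intro x' hx' hzx'
      rw [huni x' hx' hzx']
      rcases hQ with rfl | rfl
      · simpa using hne
      · simpa using hne
  have hrow : ∀ A w, P A w → ∀ u, u ∉ I → u ≠ z → ∑ y, w u y = 1 + (if u ∈ A then 1 else 0) := by
    rintro A w ⟨Q, hQ, hev, hw⟩ u hu huz
    rw [hw.2.2 u huz]
    have : u ∉ Q := by
      have hux : u ≠ x := fun h => hu (h ▸ hx)
      rcases hQ with rfl | rfl <;> simp [hux]
    simp [hu, this]
  have hHr : ∀ v, v ≠ r → ∃ y, (HG G I).Adj v y ∧ (HG G I).dist y r + 1 = (HG G I).dist v r :=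
    fun v hv => parent (HG G I) r v (hreachH v).symm hv
  have hHI : ∀ v y, v ∉ I → (HG G I).Adj v y → y ∈ I := by
    intro v y hv h
    rcases h.2 with h | h
    · exact absurd h.1 hv
    · exact h.2
  obtain ⟨δ, hδ⟩ := cut_exists R (fun u v h => ⟨h.1.symm, h.2.2, h.2.1⟩)
  have hδ1 := hδ.1
  rcases hd.eq_or_lt with hd2 | hd3
  · -- d = 2
    subst hd2
    obtain ⟨b, hb⟩ := Finset.card_eq_one.1 hNzc
    obtain ⟨u, hu⟩ := Finset.card_eq_one.1 hNxc
    have hb' := (hNz b).1 (by rw [hb]; simp)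
    have hu' := (hNx u).1 (by rw [hu]; simp)
    have hbz : b ≠ z := hb'.1.ne.symm
    have hpair : ∀ c, G.Adj b c → c ≠ z → ∀ y, G.Adj b y → y = z ∨ y = c := by
      intro c hc hcz y hy
      have hsub : ({z, c} : Finset V) ⊆ G.neighborFinset b := by
        intro t ht
        simp only [Finset.mem_insert, Finset.mem_singleton] at ht
        rw [SimpleGraph.mem_neighborFinset]
        rcases ht with rfl | rfl
        · exact hb'.1.symm
        · exact hc
      have heq := Finset.eq_of_subset_of_card_le hsub (by rw [hreg, Finset.card_pair hcz.symm])
      have : y ∈ ({z, c} : Finset V) := by rw [heq]; simpa using hy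
      simpa using this
    by_cases hub : u = b
    · subst hub
      obtain ⟨w, hw⟩ := hPex ∅ (by simp)
      have h1 := key δ hδ ∅ (by simp) w hw
      have h2 := hrow ∅ w hw u hu'.2.1 hbz
      rw [hu, Finset.sum_singleton, Finset.sum_empty] at h1
      have h3 : w x u = 0 := by
        by_contra h
        rw [if_neg h] at h1
        rcases hδ1 u with h | h <;> omega
      obtain ⟨Q, hQ, hev, hw1, hw2, hw3⟩ := hw
      rw [Finset.sum_eq_zero] at h2
      · simp at h2
      · intro y _
        by_cases hy : (delV (HG G I) z).Adj u y
        · rcases hpair x hu'.1.symm hxz y hy.1.1 with h | h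
          · exact absurd h hy.2.2
          · rw [h, hw1]; exact h3
        · exact hw2 _ _ hy
    · obtain ⟨w, hw⟩ := hPex {b} (by simp [hbz.symm])
      obtain ⟨c, hc, -⟩ := hHr b (fun h => hb'.2 (h ▸ hr))
      have hcI := hHI b c hb'.2 hc
      have hcz : c ≠ z := fun h => hz (h ▸ hcI)
      have hiso : ∀ v, ¬ R b v := by
        rintro v ⟨h1, h2, h3⟩
        rcases hpair c hc.1 hcz v h1 with rfl | rfl
        · exact h3.2 rfl
        · exact h3.1 hcI
      let δ' : V → ℤ := fun v => if v = b then - δ v else δ v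
      have hδ' : CutOK R δ' := by
        refine ⟨fun v => ?_, fun X => ?_⟩
        · simp only [δ']
          rcases hδ1 v with h | h <;> split_ifs <;> simp [h]
        · refine le_of_eq_of_le ?_ (hδ.2 X)
          refine Finset.sum_congr rfl fun s _ => Finset.sum_congr rfl fun t _ => ?_
          by_cases h : R s t
          · have h1 : s ≠ b := by rintro rfl; exact hiso _ h
            have h2 : t ≠ b := by
              rintro rfl; exact hiso _ ⟨h.1.symm, h.2.2, h.2.1⟩
            simp [δ', h1, h2]
          · rw [if_neg h, if_neg h]
      have h1 := key δ hδ {b} (by rw [hb]) w hw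
      have h2 := key δ' hδ' {b} (by rw [hb]) w hw
      rw [hu] at h1 h2
      simp only [Finset.sum_singleton, δ', hub, if_true, if_false] at h1 h2
      rw [h1] at h2
      rcases hδ1 b with h | h <;> omega
  · -- d ≥ 3
    let A : ℤ → Finset V := fun σ => Nz.filter (fun y => δ y = σ)
    let N : ℤ → Finset V := fun σ => Nx.filter (fun y => δ y = σ)
    have hAs : ∀ σ, A σ ⊆ Nz := fun σ => Finset.filter_subset _ _
    have hsplit : ∀ S : Finset V, (S.filter (fun y => δ y = 1)).card +
        (S.filter (fun y => δ y = -1)).card = S.card := by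
      intro S
      rw [← Finset.card_filter_add_card_filter_not (s := S) (fun y => δ y = 1)]
      congr 2
      ext y
      simp only [Finset.mem_filter]
      have := hδ1 y
      constructor
      · rintro ⟨h1, h2⟩; exact ⟨h1, by omega⟩
      · rintro ⟨h1, h2⟩; exact ⟨h1, by omega⟩
    have hterm : ∀ (σ : ℤ), (σ = 1 ∨ σ = -1) → ∀ (w : V → V → ZMod 2), ∀ y ∈ Nx,
        (if w x y = 0 then 0 else σ * δ y) ≤ if δ y = σ then (1 : ℤ) else 0 := by
      intro σ hσ w y _
      by_cases hw : w x y = 0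
      · rw [if_pos hw]; split_ifs <;> norm_num
      · rw [if_neg hw]
        rcases hσ with rfl | rfl <;> rcases hδ1 y with h | h <;> rw [h] <;> norm_num
    have hsumeq : ∀ (σ : ℤ), (σ = 1 ∨ σ = -1) → ∀ w, P (A σ) w →
        ∑ y ∈ Nx, (if w x y = 0 then 0 else σ * δ y) = (A σ).card := by
      intro σ hσ w hw
      have h1 := key δ hδ (A σ) (hAs σ) w hw
      have h2 : ∑ y ∈ A σ, δ y = (A σ).card * σ := by
        rw [Finset.sum_congr rfl (g := fun _ => σ)]
        · simp
        · intro y hy; exact (Finset.mem_filter.1 hy).2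
      have h3 : ∑ y ∈ Nx, (if w x y = 0 then 0 else σ * δ y)
          = σ * ∑ y ∈ Nx, (if w x y = 0 then 0 else δ y) := by
        rw [Finset.mul_sum]
        refine Finset.sum_congr rfl fun y _ => ?_
        split_ifs <;> simp
      rw [h3, h1, h2]
      rcases hσ with rfl | rfl <;> ring
    have hNsum : ∀ σ : ℤ, ∑ y ∈ Nx, (if δ y = σ then (1 : ℤ) else 0) = (N σ).card := by
      intro σ; rw [Finset.sum_boole]
    have hle : ∀ (σ : ℤ), (σ = 1 ∨ σ = -1) → (A σ).card ≤ (N σ).card := by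
      intro σ hσ
      obtain ⟨w, hw⟩ := hPex (A σ) (fun h => hzNz (hAs σ h))
      have h1 := Finset.sum_le_sum (hterm σ hσ w)
      rw [hsumeq σ hσ w hw, hNsum] at h1
      exact_mod_cast h1
    have heq : ∀ (σ : ℤ), (σ = 1 ∨ σ = -1) → (A σ).card = (N σ).card := by
      have h1 := hle 1 (by simp)
      have h2 := hle (-1) (by simp)
      have h3 := hsplit Nx
      have h4 := hsplit Nz
      simp only [A, N] at h1 h2 ⊢
      rintro σ (rfl | rfl) <;> omega
    have F : ∀ (σ : ℤ), (σ = 1 ∨ σ = -1) → ∀ w, P (A σ) w → ∀ y ∈ Nx, (w x y ≠ 0 ↔ δ y = σ) := by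
      intro σ hσ w hw y hy
      have h1 := (Finset.sum_eq_sum_iff_of_le (hterm σ hσ w)).1 (by
        rw [hsumeq σ hσ w hw, hNsum, heq σ hσ]) y hy
      constructor
      · intro h
        by_contra h'
        rw [if_neg h, if_neg h'] at h1
        rcases hσ with rfl | rfl <;> rcases hδ1 y with h2 | h2 <;> rw [h2] at h1 <;> simp at h1
      · intro h h'
        rw [if_pos h', if_pos h] at h1
        simp at h1
    let K0 := delV (delV (HG G I) z) x
    have hnm : ∀ u1 ∈ Nx, ∀ u2 ∈ Nx, u1 ≠ u2 → ¬ K0.Reachable u1 u2 := by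
      intro u1 h1 u2 h2 hne hre
      obtain ⟨q, hq1, hq2, hq3⟩ := path_join K0 u1 u2 hre
      obtain ⟨w, hw⟩ := hPex (A 1) (fun h => hzNz (hAs 1 h))
      have hF := F 1 (by simp) w hw u1 h1
      obtain ⟨Q, hQ, hev, hw1, hw2, hw3⟩ := hw
      have e1 := (hNx u1).1 h1
      have e2 := (hNx u2).1 h2
      have u1x : u1 ≠ x := e1.1.ne.symm
      have u2x : u2 ≠ x := e2.1.ne.symm
      let ed : V → V → ZMod 2 := fun a b =>
        (if a = x then ((if b = u1 then 1 else 0) + (if b = u2 then 1 else 0)) else 0) +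
        (if b = x then ((if a = u1 then 1 else 0) + (if a = u2 then 1 else 0)) else 0)
      have h11 : (1 : ZMod 2) + 1 = 0 := by decide
      have hed : ∀ a, ∑ b, ed a b = (if a = u1 then 1 else 0) + (if a = u2 then 1 else 0) := by
        intro a
        simp only [ed, Finset.sum_add_distrib]
        by_cases ha : a = x
        · simp [ha, h11, Finset.sum_add_distrib]
        · simp [ha]
      have hP : P (A 1) (fun a b => w a b + q a b + ed a b) := by
        refine ⟨Q, hQ, hev, ?_, ?_, ?_⟩
        · intro a b
          simp only [ed]
          rw [hw1 a b, hq1 a b]; ring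
        · intro a b hab
          have t1 := hw2 a b hab
          have t2 : q a b = 0 := hq2 a b fun h => hab h.1
          have t3 : ed a b = 0 := by
            have s1 : ∀ v, v = u1 ∨ v = u2 → (delV (HG G I) z).Adj x v := by
              rintro v (rfl | rfl)
              · exact ⟨⟨e1.1, Or.inl ⟨hx, e1.2.1⟩⟩, hxz, e1.2.2⟩
              · exact ⟨⟨e2.1, Or.inl ⟨hx, e2.2.1⟩⟩, hxz, e2.2.2⟩
            simp only [ed]
            by_cases ha : a = x
            · have b1 : b ≠ u1 := fun h => hab (ha ▸ s1 b (Or.inl h))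
              have b2 : b ≠ u2 := fun h => hab (ha ▸ s1 b (Or.inr h))
              simp [ha, b1, b2, u1x.symm, u2x.symm]
            · by_cases hb : b = x
              · have b1 : a ≠ u1 := fun h => hab (hb ▸ (s1 a (Or.inl h)).symm)
                have b2 : a ≠ u2 := fun h => hab (hb ▸ (s1 a (Or.inr h)).symm)
                simp [ha, b1, b2]
              · simp [ha, hb]
          simp only [t1, t2, t3, add_zero]
        · intro a ha
          rw [← hw3 a ha]
          simp only [Finset.sum_add_distrib]
          have hq3a : ∑ y, q a y = (if a = u1 then 1 else 0) + (if a = u2 then 1 else 0) := by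
            rw [hq3 a]; congr
          rw [hq3a, hed]
          have : ∀ t : ZMod 2, t + t = 0 := by decide
          rw [add_assoc, this, add_zero]
      have hF' := F 1 (by simp) _ hP u1 h1
      have t2 : q x u1 = 0 := hq2 x u1 fun h => h.2.1 rfl
      have t3 : ed x u1 = 1 := by simp [ed, u1x, hne]
      simp only [t2, t3, add_zero] at hF'
      rw [← hF] at hF'
      have : ∀ t : ZMod 2, ¬ (t + 1 ≠ 0 ↔ t ≠ 0) := by decide
      exact this _ hF'
    have hu : ∃ u ∈ Nx, ¬ K0.Reachable r u := by
      obtain ⟨u1, h1, u2, h2, hne⟩ := Finset.one_lt_card.1 (show 1 < Nx.card by omega)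
      by_contra hcon
      push Not at hcon
      exact hnm u1 h1 u2 h2 hne ((hcon u1 h1).symm.trans (hcon u2 h2))
    obtain ⟨u, huN, hur⟩ := hu
    have hu' := (hNx u).1 huN
    let K : Finset V := Finset.univ.filter (fun v => K0.Reachable u v)
    have hKm : ∀ v, v ∈ K ↔ K0.Reachable u v := by simp [K]
    have huK : u ∈ K := (hKm u).2 (SimpleGraph.Reachable.refl _)
    have hxK : x ∉ K := by
      intro h
      exact hu'.1.ne.symm (iso_reach K0 u x ((hKm x).1 h) (fun c h => h.2.1 rfl))
    have hzK : z ∉ K := by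
      intro h
      exact hu'.2.2 (iso_reach K0 u z ((hKm z).1 h) (fun c h => h.1.2.1 rfl))
    have hK : ∀ a ∈ K, ∀ b, (HG G I).Adj a b → b ∈ K ∨ (b = x ∧ a = u) := by
      intro a ha b hab
      have hax : a ≠ x := fun h => hxK (h ▸ ha)
      have haz : a ≠ z := fun h => hzK (h ▸ ha)
      by_cases hbz : b = z
      · subst hbz
        exact absurd (huni a (hHI b a hz hab.symm) hab.1.symm) hax
      by_cases hbx : b = x
      · right
        refine ⟨hbx, ?_⟩
        subst hbx
        have haN : a ∈ Nx := (hNx a).2 ⟨hab.1.symm, fun h => hI a h b hx hab.1, haz⟩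
        by_contra hau
        exact hnm u huN a haN (fun h => hau h.symm) ((hKm a).1 ha)
      · left
        rw [hKm] at ha ⊢
        exact ha.trans (SimpleGraph.Adj.reachable ⟨⟨hab, haz, hbz⟩, hax, hbx⟩)
    have hrK : r ∉ K := fun h => hur ((hKm r).1 h).symm
    have hpar : ∀ v ∈ K, (∃ y ∈ K, (HG G I).dist y r + 1 = (HG G I).dist v r) ∨
        (v = u ∧ (HG G I).dist x r + 1 = (HG G I).dist v r) := by
      intro v hv
      obtain ⟨y, hy, hyd⟩ := hHr v (fun h => hrK (h ▸ hv))
      rcases hK v hv y hy with h | ⟨rfl, h⟩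
      · exact Or.inl ⟨y, h, hyd⟩
      · exact Or.inr ⟨h, hyd⟩
    have hLz : (HG G I).dist x r + 1 = (HG G I).dist z r := by
      obtain ⟨y, hy, hyd⟩ := hHr z (fun h => hz (h ▸ hr))
      rw [← huni y (hHI z y hz hy) hy.1]
      exact hyd
    obtain ⟨v, hv, hmin⟩ := Finset.exists_min_image K (fun v => (HG G I).dist v r) ⟨u, huK⟩
    have hvL : (HG G I).dist v r = (HG G I).dist z r := by
      rcases hpar v hv with ⟨y, hy, h⟩ | ⟨h, h'⟩
      · have := hmin y hy; omega
      · omega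
    have hL : ∀ b ∈ K, b ≠ u → (HG G I).dist z r < (HG G I).dist b r := by
      intro b hb hbu
      rcases hpar b hb with ⟨y, hy, h⟩ | ⟨h, h'⟩
      · have := hmin y hy; omega
      · exact absurd h hbu
    have hcross := nocross G d hreg I hI u (K : Set V) (by
        intro b hb hbu hbK a hab
        have hbK' : b ∈ K := by simpa using hbK
        have haI : a ∈ I := by
          by_contra h
          have := hdef b hb ⟨a, h, hab⟩
          have := hL b hbK' hbu
          omega
        refine ⟨haI, ?_⟩
        rcases hK b hbK' a ⟨hab, Or.inr ⟨hb, haI⟩⟩ with h | h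
        · exact Finset.mem_coe.2 h
        · exact absurd h.2 hbu) (by
        intro b hb hbu hbK a hab haI haK
        rcases hK a (Finset.mem_coe.1 haK) b ⟨hab.symm, Or.inl ⟨haI, hb⟩⟩ with h | h
        · exact hbK (Finset.mem_coe.2 h)
        · exact hb (h.1 ▸ hx)) ⟨x, hu'.1.symm, fun h => hxK (Finset.mem_coe.1 h)⟩
    have honly : ∀ a, (HG G I).Adj u a → a = x := by
      intro a ha
      rcases hK u huK a ha with h | h
      · exact absurd (Finset.mem_coe.2 h) (hcross a (hHI u a hu'.2.1 ha) ha.1)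
      · exact h.1
    have hfin : ∀ σ w, P (A σ) w → w x u = 1 + (if u ∈ A σ then 1 else 0) := by
      intro σ w hw
      rw [← hrow (A σ) w hw u hu'.2.1 hu'.2.2]
      obtain ⟨Q, hQ, hev, hw1, hw2, hw3⟩ := hw
      rw [hw1 x u]
      symm
      apply Finset.sum_eq_single_of_mem x (Finset.mem_univ _)
      intro y _ hyx
      exact hw2 u y fun h => hyx (honly y h.1)
    have hσ1 : δ u = 1 ∨ δ u = -1 := hδ1 u
    have hσ2 : - δ u = 1 ∨ - δ u = -1 := by omega
    obtain ⟨w1, hw1⟩ := hPex (A (δ u)) (fun h => hzNz (hAs _ h))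
    obtain ⟨w2, hw2⟩ := hPex (A (- δ u)) (fun h => hzNz (hAs _ h))
    have f1 := (F _ hσ1 w1 hw1 u huN).2 rfl
    have f2 : ¬ w2 x u ≠ 0 := fun h => by
      have := (F _ hσ2 w2 hw2 u huN).1 h
      omega
    rw [hfin _ w1 hw1] at f1
    rw [hfin _ w2 hw2] at f2
    have g1 : u ∉ A (δ u) := by
      intro h; rw [if_pos h] at f1; exact f1 (by decide)
    have g2 : u ∈ A (- δ u) := by
      by_contra h; rw [if_neg h] at f2; exact f2 (by decide)
    exact g1 (Finset.mem_filter.2 ⟨hAs _ g2, rfl⟩)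

lemma case_odd (G : SimpleGraph V) (d : ℕ) (hreg : ∀ v, (G.neighborFinset v).card = d) (hd : 2 ≤ d)
    (I : Finset V) (hI : ∀ u ∈ I, ∀ v ∈ I, ¬ G.Adj u v) (r : V) (hr : r ∈ I)
    (hreach : ∀ v, (HG G I).Reachable r v) (hodd : Odd (Iᶜ).card) : LIRtwoLE2 G := by
  let D : Finset V := Finset.univ.filter (fun b => b ∉ I ∧ ∃ a, a ∉ I ∧ G.Adj b a)
  have hD : ∀ b, b ∈ D ↔ b ∉ I ∧ ∃ a, a ∉ I ∧ G.Adj b a := by simp [D]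
  rcases D.eq_empty_or_nonempty with h | h
  · obtain ⟨z, hz⟩ := Finset.card_pos.1 hodd.pos
    rw [Finset.mem_compl] at hz
    have hno : ∀ a b, a ∉ I → b ∉ I → ¬ G.Adj a b := by
      intro a b ha hb hab
      have : a ∈ D := (hD a).2 ⟨ha, b, hb, hab⟩
      rw [h] at this
      simp at this
    refine case_2b G d hreg hd I hI r z hz ?_ hodd hno
    apply noncut G d hreg I hI r hr hreach z hz
    rintro b hb ⟨a, ha, hab⟩
    exact absurd hab (hno b a hb ha)
  · obtain ⟨z, hzD, hmax⟩ := Finset.exists_max_image D (fun v => (HG G I).dist v r) h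
    obtain ⟨hz, hza⟩ := (hD z).1 hzD
    have hdef : ∀ b, b ∉ I → (∃ a, a ∉ I ∧ G.Adj b a) → (HG G I).dist b r ≤ (HG G I).dist z r :=
      fun b hb hb' => hmax b ((hD b).2 ⟨hb, hb'⟩)
    have hnc := noncut G d hreg I hI r hr hreach z hz hdef
    rcases le_or_gt 2 ((G.neighborFinset z).filter (· ∈ I)).card with hp | hp
    · exact case_2a G d hreg I hI r z hz hnc hodd hza hp
    · obtain ⟨x, hx, -⟩ := parent (HG G I) r z (hreach z).symm (fun h => hz (h ▸ hr))
      have hxI : x ∈ I := by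
        rcases hx.2 with h | h
        · exact absurd h.1 hz
        · exact h.2
      refine case_2c G d hreg hd I hI r z hr hz hreach hdef hnc hodd x hxI hx.1 ?_
      intro y hy hzy
      exact Finset.card_le_one.1 (Nat.lt_succ_iff.1 hp) y (by simp [hy, hzy]) x (by simp [hxI, hx.1])

end Cases

theorem lir_two_mul_regular {V : Type*} [Fintype V] [DecidableEq V]
    (G : SimpleGraph V) (hconn : G.Connected)
    (hreg : ∃ d : ℕ, G.IsRegularOfDegree d)
    (hK2 : ¬ Nonempty (G ≃g (⊤ : SimpleGraph (Fin 2)))) :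
    LIRtwoLE2 G := by
  obtain ⟨d, hd⟩ := hreg
  have hreg : ∀ v, (G.neighborFinset v).card = d := fun v => by
    rw [← hd v, SimpleGraph.card_neighborFinset_eq_degree]
  rcases lt_or_ge d 2 with h2 | h2
  · have : d = 0 ∨ d = 1 := by omega
    rcases this with rfl | rfl
    · refine of_weights G 0 hreg (fun _ _ => 0) (by simp) (by simp) (by simp) ?_
      intro u v huv
      have h := hreg u
      rw [Finset.card_eq_zero] at h
      have : v ∈ G.neighborFinset u := by simpa using huv
      rw [h] at this
      simp at this
    · exfalso
      apply hK2
      have huniq : ∀ u v w, G.Adj u v → G.Adj u w → v = w := by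
        intro u v w hv hw
        exact Finset.card_le_one.1 (hreg u).le v (by simpa using hv) w (by simpa using hw)
      obtain ⟨a⟩ := hconn.nonempty
      obtain ⟨b, hb⟩ := Finset.card_pos.1 (show 0 < (G.neighborFinset a).card by rw [hreg]; omega)
      have hab : G.Adj a b := by simpa using hb
      have hall : ∀ u v (p : G.Walk u v), u = a ∨ u = b → v = a ∨ v = b := by
        intro u v p
        induction p with
        | nil => exact id
        | cons h p ih =>
          rintro (rfl | rfl)
          · exact ih (Or.inr (huniq _ _ _ h hab))
          · exact ih (Or.inl (huniq _ _ _ h hab.symm))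
      have hV : ∀ v, v = a ∨ v = b := fun v => by
        obtain ⟨p⟩ := hconn.preconnected a v
        exact hall a v p (Or.inl rfl)
      have hfull : ∀ u v, u ≠ v → G.Adj u v := by
        intro u v huv
        rcases hV u with rfl | rfl <;> rcases hV v with rfl | rfl
        · exact absurd rfl huv
        · exact hab
        · exact hab.symm
        · exact absurd rfl huv
      have hcard : Fintype.card V = 2 := by
        rw [← Finset.card_univ, show (Finset.univ : Finset V) = {a, b} by
          ext v; simpa using hV v, Finset.card_pair hab.ne]
      let e : V ≃ Fin 2 := Fintype.equivFinOfCardEq hcard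
      refine ⟨⟨e, ?_⟩⟩
      intro u v
      simp only [SimpleGraph.top_adj, ne_eq, EmbeddingLike.apply_eq_iff_eq]
      exact ⟨hfull u v, fun h => h.ne⟩
  · obtain ⟨I, r, hr, hI, hreach⟩ := indep_exists G hconn
    rcases Nat.even_or_odd (Iᶜ).card with h | h
    · exact case_even G d hreg I hI r hr hreach h
    · exact case_odd G d hreg h2 I hI r hr hreach h
end

section
/- Let G be a d-regular simple graph and suppose ψ : E(G) → {0,1,2} is a neighbor-sum-distinguishing edge weighting, i.e., for every edge uv of G the sum of ψ over the edges incident with u differs from the sum of ψ over the edges incident with v. Then taking r = ψ as the red multiplicity function yields a locally irregular 2-edge-coloring of ^2G; in particular lir(^2G) ≤ 2. -/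
open scoped Classical

/-- If `G` is a `d`-regular simple graph and `ψ : E(G) → {0,1,2}` is a
neighbor-sum-distinguishing edge weighting (for every edge `uv`, the sum of
`ψ` over edges incident with `u` differs from the sum over edges incident
with `v`), then `r = ψ` is a locally irregular 2-edge-coloring of `²G`;
in particular `lir(²G) ≤ 2`. -/
theorem isLIR2_of_nsd {V : Type*} [Fintype V] [DecidableEq V]
    (G : SimpleGraph V) (d : ℕ) (hreg : G.IsRegularOfDegree d)
    (ψ : Sym2 V → ℕ) (hψ : ∀ e ∈ G.edgeSet, ψ e ≤ 2)
    (hnsd : ∀ u v : V, G.Adj u v →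
      (∑ e ∈ G.edgeFinset.filter (fun e => u ∈ e), ψ e) ≠
      (∑ e ∈ G.edgeFinset.filter (fun e => v ∈ e), ψ e)) :
    IsLIR2 G ψ ∧ LIRtwoLE2 G := by
  have key : ∀ x : V, redDeg G ψ x + blueDeg G ψ x = 2 * d := by
    intro x
    have hc : (G.edgeFinset.filter (fun e => x ∈ e)).card = d := by
      rw [← hreg x, ← G.card_incidenceFinset_eq_degree x]
      congr 1
      ext e
      simp [SimpleGraph.incidenceSet]
    unfold redDeg blueDeg
    rw [← Finset.sum_add_distrib, ← hc, mul_comm, ← smul_eq_mul, ← Finset.sum_const]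
    refine Finset.sum_congr rfl fun e he => ?_
    have h2 := hψ e (by simpa using (Finset.mem_filter.mp he).1)
    omega
  have main : IsLIR2 G ψ := by
    refine ⟨hψ, fun u v huv => ?_⟩
    have h : redDeg G ψ u ≠ redDeg G ψ v := by
      have h0 := hnsd u v huv
      unfold redDeg
      convert h0
    have hu := key u
    have hv := key v
    exact ⟨fun _ => h, fun _ hb => h (by omega)⟩
  exact ⟨main, ψ, main⟩
end

section
/- If G is a connected split graph that is not isomorphic to K2 (the complete graph on two vertices), then lir(^2G) ≤ 2. -/
open scoped Classical

theorem inc_sum {V : Type*} [Fintype V] [DecidableEq V]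
    (G : SimpleGraph V) (f : Sym2 V → ℕ) (x : V) :
    ∑ e ∈ G.edgeFinset.filter (fun e => x ∈ e), f e
      = ∑ w ∈ Finset.univ.filter (fun w => G.Adj x w), f s(x, w) := by
  symm
  apply Finset.sum_bij (fun w _ => s(x, w))
  · intro w hw
    simpa using hw
  · intro a _ b _ h
    simp at h
    grind
  · intro e he
    induction e using Sym2.ind with
    | _ a b =>
      simp only [Finset.mem_filter, SimpleGraph.mem_edgeFinset, SimpleGraph.mem_edgeSet,
        Sym2.mem_iff] at he
      obtain ⟨hab, rfl | rfl⟩ := he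
      · exact ⟨b, by simpa using hab, rfl⟩
      · exact ⟨a, by simpa using hab.symm, Sym2.eq_swap⟩
  · intro _ _
    rfl

/-- number of neighbours outside the clique -/
noncomputable def outDeg {V : Type*} [Fintype V] [DecidableEq V] (G : SimpleGraph V) (X : Finset V) (x : V) : ℕ :=
  (Finset.univ.filter (fun y => y ∉ X ∧ G.Adj x y)).card

noncomputable def labF {V : Type*} [DecidableEq V] (X H : Finset V) (l : V → V → ℕ) (u v : V) : ℕ :=
  if u ∈ X ∧ v ∈ X then l u v else if u ∈ H ∨ v ∈ H then 2 else 0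

theorem framework {V : Type*} [Fintype V] [DecidableEq V]
    (G : SimpleGraph V) (X H : Finset V) (l : V → V → ℕ) (c b : V → ℕ)
    (hX : ∀ a ∈ X, ∀ b ∈ X, a ≠ b → G.Adj a b)
    (hY : ∀ a ∉ X, ∀ b ∉ X, ¬ G.Adj a b)
    (hH : H ⊆ X)
    (hsymm : ∀ u v, l u v = l v u) (hl : ∀ u v, l u v ≤ 2)
    (hc : ∀ x ∈ X, ∑ w ∈ X.erase x, l x w = c x)
    (hb : ∀ x ∈ X, ∑ w ∈ X.erase x, (2 - l x w) = b x)
    (hR : ∀ u ∈ X, ∀ v ∈ X, u ≠ v → 1 ≤ l u v →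
      c u + (if u ∈ H then 2 * outDeg G X u else 0) ≠ c v + (if v ∈ H then 2 * outDeg G X v else 0))
    (hB : ∀ u ∈ X, ∀ v ∈ X, u ≠ v → l u v ≤ 1 →
      b u + (if u ∈ H then 0 else 2 * outDeg G X u) ≠ b v + (if v ∈ H then 0 else 2 * outDeg G X v))
    (h1 : ∀ x ∈ H, ∀ y ∉ X, G.Adj x y →
      c x + 2 * outDeg G X x ≠ 2 * (H.filter (fun w => G.Adj y w)).card)
    (h2 : ∀ x ∈ X, x ∉ H → ∀ y ∉ X, G.Adj x y →
      b x + 2 * outDeg G X x ≠ 2 * ((X \ H).filter (fun w => G.Adj y w)).card) :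
    LIRtwoLE2 G := by
  have hs : ∀ u v, labF X H l u v = labF X H l v u := by
    intro u v
    unfold labF
    rw [hsymm u v]
    split_ifs <;> tauto
  let r : Sym2 V → ℕ := Sym2.lift ⟨labF X H l, hs⟩
  have hr : ∀ u v, r s(u, v) = labF X H l u v := fun u v => rfl
  have split : ∀ (f : V → ℕ) (x : V), x ∈ X →
      ∑ w ∈ Finset.univ.filter (fun w => G.Adj x w), f w =
        ∑ w ∈ X.erase x, f w
          + ∑ w ∈ Finset.univ.filter (fun y => y ∉ X ∧ G.Adj x y), f w := by
    intro f x hx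
    rw [← Finset.sum_union]
    · congr 1
      ext w
      simp only [Finset.mem_filter, Finset.mem_univ, true_and, Finset.mem_union, Finset.mem_erase]
      constructor
      · intro h
        by_cases hw : w ∈ X
        · exact Or.inl ⟨h.ne', hw⟩
        · exact Or.inr ⟨hw, h⟩
      · rintro (h | h)
        · exact hX x hx w h.2 h.1.symm
        · exact h.2
    · rw [Finset.disjoint_left]
      intro w hw hw'
      simp at hw hw'
      exact hw'.1 hw.2
  have RX : ∀ x ∈ X, redDeg G r x = c x + (if x ∈ H then 2 * outDeg G X x else 0) := by
    intro x hx
    unfold redDeg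
    rw [inc_sum, split _ x hx, ← hc x hx]
    congr 1
    · apply Finset.sum_congr rfl
      intro w hw
      simp at hw
      simp [hr, labF, hx, hw.2]
    · rw [Finset.sum_congr rfl (g := fun _ => if x ∈ H then 2 else 0)]
      · unfold outDeg
        split_ifs <;> simp [mul_comm]
      · intro w hw
        simp at hw
        have : w ∉ H := fun h => hw.1 (hH h)
        simp [hr, labF, hw.1, this]
  have BX : ∀ x ∈ X, blueDeg G r x = b x + (if x ∈ H then 0 else 2 * outDeg G X x) := by
    intro x hx
    unfold blueDeg
    rw [inc_sum G (fun e => 2 - r e), split _ x hx, ← hb x hx]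
    congr 1
    · apply Finset.sum_congr rfl
      intro w hw
      simp at hw
      simp [hr, labF, hx, hw.2]
    · rw [Finset.sum_congr rfl (g := fun _ => if x ∈ H then 0 else 2)]
      · unfold outDeg
        split_ifs <;> simp [mul_comm]
      · intro w hw
        simp at hw
        have : w ∉ H := fun h => hw.1 (hH h)
        simp only [hr, labF, hw.1, this]
        split_ifs <;> simp_all
  have RY : ∀ y ∉ X, redDeg G r y = 2 * (H.filter (fun w => G.Adj y w)).card := by
    intro y hy
    have hyH : y ∉ H := fun h => hy (hH h)
    unfold redDeg
    rw [inc_sum]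
    rw [Finset.sum_congr rfl (g := fun w => if w ∈ H then 2 else 0)]
    · rw [← Finset.sum_filter, Finset.sum_const, smul_eq_mul, mul_comm]
      congr 2
      ext w
      simp [and_comm]
    · intro w hw
      simp [hr, labF, hy, hyH]
  have BY : ∀ y ∉ X, blueDeg G r y = 2 * ((X \ H).filter (fun w => G.Adj y w)).card := by
    intro y hy
    have hyH : y ∉ H := fun h => hy (hH h)
    unfold blueDeg
    rw [inc_sum G (fun e => 2 - r e)]
    rw [Finset.sum_congr rfl (g := fun w => if w ∈ H then 0 else 2)]
    · rw [Finset.sum_congr rfl (g := fun w => if w ∉ H then 2 else 0)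
        (by intro w _; by_cases h : w ∈ H <;> simp [h])]
      rw [← Finset.sum_filter, Finset.sum_const, smul_eq_mul, mul_comm]
      congr 2
      ext w
      simp only [Finset.mem_filter, Finset.mem_univ, true_and, Finset.mem_sdiff]
      constructor
      · rintro ⟨h, h'⟩
        refine ⟨⟨?_, h'⟩, h⟩
        by_contra hw
        exact hY _ hy _ hw h
      · rintro ⟨⟨_, h⟩, h'⟩
        exact ⟨h', h⟩
    · intro w hw
      simp only [hr, labF, hy, hyH]
      split_ifs <;> simp_all
  have key : ∀ x ∈ X, ∀ y ∉ X, G.Adj x y →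
      (1 ≤ r s(x, y) → redDeg G r x ≠ redDeg G r y) ∧
      (r s(x, y) ≤ 1 → blueDeg G r x ≠ blueDeg G r y) := by
    intro x hx y hy hxy
    have hyH : y ∉ H := fun h => hy (hH h)
    rw [RX x hx, BX x hx, RY y hy, BY y hy, hr]
    by_cases hxH : x ∈ H
    · have := h1 x hxH y hy hxy
      simp only [labF, hy, hxH]
      simpa using this
    · have := h2 x hx hxH y hy hxy
      simp only [labF, hy, hxH, hyH]
      simpa using this
  refine ⟨r, ?_, ?_⟩
  · intro e _
    induction e using Sym2.ind with
    | _ u v =>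
      rw [hr]
      unfold labF
      split_ifs
      · exact hl _ _
      · exact le_rfl
      · simp
  · intro u v huv
    by_cases hu : u ∈ X
    · by_cases hv : v ∈ X
      · have : r s(u, v) = l u v := by simp [hr, labF, hu, hv]
        rw [this, RX u hu, RX v hv, BX u hu, BX v hv]
        exact ⟨hR u hu v hv huv.ne, hB u hu v hv huv.ne⟩
      · exact key u hu v hv huv
    · by_cases hv : v ∈ X
      · have := key v hv u hu huv.symm
        rw [Sym2.eq_swap]
        exact ⟨fun h => (this.1 h).symm, fun h => (this.2 h).symm⟩
      · exact absurd huv (hY u hu v hv)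

theorem exists_rank {V : Type*} [DecidableEq V] (f : V → ℕ) (S : Finset V) :
    ∃ p : V → ℕ, S.image p = Finset.range S.card ∧ Set.InjOn p S ∧
      ∀ x ∈ S, ∀ y ∈ S, p x < p y → f x ≤ f y := by
  induction S using Finset.induction_on_max_value f with
  | empty => exact ⟨fun _ => 0, by simp, by simp, by simp⟩
  | insert a s ha hmax ih =>
    obtain ⟨p, h1, h2, h3⟩ := ih
    have hlt : ∀ x ∈ s, p x < s.card := by
      intro x hx
      have : p x ∈ s.image p := Finset.mem_image_of_mem _ hx
      rw [h1] at this
      simpa using this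
    have hne : ∀ x ∈ s, x ≠ a := fun x hx h => ha (h ▸ hx)
    refine ⟨fun x => if x = a then s.card else p x, ?_, ?_, ?_⟩
    · rw [Finset.card_insert_of_notMem ha, Finset.range_add_one, Finset.image_insert, ← h1]
      simp only [if_true]
      congr 1
      · apply Finset.image_congr
        intro x hx
        simp [hne x hx]
    · intro x hx y hy hxy
      simp only [Finset.coe_insert, Set.mem_insert_iff, Finset.mem_coe] at hx hy
      have := @h2 x
      rcases hx with rfl | hx <;> rcases hy with rfl | hy
      · rfl
      · have := hlt y hy
        simp [hne y hy] at hxy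
        omega
      · have := hlt x hx
        simp [hne x hx] at hxy
        omega
      · simp [hne x hx, hne y hy] at hxy
        exact h2 hx hy hxy
    · intro x hx y hy hxy
      rw [Finset.mem_insert] at hx hy
      rcases hx with rfl | hx <;> rcases hy with rfl | hy
      · rfl
      · have := hlt y hy
        simp [hne y hy] at hxy
        omega
      · exact hmax x hx
      · simp [hne x hx, hne y hy] at hxy
        exact h3 x hx y hy hxy

def gl (m k j : ℕ) : ℕ :=
  if j = 0 ∧ k + 1 = m then 1 else if j < k then 2 else if j = k then 1 else 0

theorem gl_le (m k j : ℕ) : gl m k j ≤ 2 := by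
  unfold gl
  split_ifs <;> omega

theorem gl_sum_j (m k q : ℕ) (hm : 2 ≤ m) :
    ∑ j ∈ Finset.range (q + 1), gl m k j + (if k + 1 = m then 1 else 0)
      = if q < k then 2 * (q + 1) else 2 * k + 1 := by
  induction q with
  | zero =>
    simp only [gl, zero_add, Finset.sum_range_one]
    by_cases h1 : k + 1 = m <;> by_cases h2 : 0 < k <;> by_cases h3 : 0 = k <;>
      simp [h1, h2, h3] <;> omega
  | succ q ih =>
    rw [Finset.sum_range_succ]
    have : gl m k (q+1) = if q + 1 < k then 2 else if q + 1 = k then 1 else 0 := by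
      simp [gl]
    rw [this]
    split_ifs at * <;> omega

theorem gl_sum_k (m j t : ℕ) (hm : 2 ≤ m) :
    ∑ k ∈ Finset.range t, gl m k j + (if j = 0 ∧ m ≤ t then 1 else 0)
      = if t ≤ j then 0 else 2 * (t - 1 - j) + 1 := by
  induction t with
  | zero => simp; omega
  | succ t ih =>
    rw [Finset.sum_range_succ]
    have : gl m t j = if j = 0 ∧ t + 1 = m then 1 else if j < t then 2 else if j = t then 1 else 0 := by
      simp [gl]
    rw [this]
    split_ifs at * <;> omega

theorem case_big {V : Type*} [Fintype V] [DecidableEq V]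
    (G : SimpleGraph V) (X : Finset V)
    (hX : ∀ a ∈ X, ∀ b ∈ X, a ≠ b → G.Adj a b)
    (hY : ∀ a ∉ X, ∀ b ∉ X, ¬ G.Adj a b) (h4 : 4 ≤ X.card) : LIRtwoLE2 G := by
  obtain ⟨m, hm⟩ : ∃ m, m = X.card / 2 := ⟨_, rfl⟩
  obtain ⟨H, hH, hHc⟩ := Finset.exists_subset_card_eq (s := X) (n := m) (by omega)
  have hLc : (X \ H).card = X.card - m := by rw [Finset.card_sdiff_of_subset hH, hHc]
  obtain ⟨q, hq⟩ : ∃ q, X.card - m = q + 1 := ⟨X.card - m - 1, by omega⟩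
  rw [hq] at hLc
  obtain ⟨p, p1, p2, p3⟩ := exists_rank (outDeg G X) H
  obtain ⟨t, t1, t2, t3⟩ := exists_rank (outDeg G X) (X \ H)
  rw [hHc] at p1
  rw [hLc] at t1
  have pl : ∀ x ∈ H, p x < m := by
    intro x hx
    have : p x ∈ H.image p := Finset.mem_image_of_mem _ hx
    rw [p1] at this
    simpa using this
  have tl : ∀ x ∈ X \ H, t x < q + 1 := by
    intro x hx
    have : t x ∈ (X \ H).image t := Finset.mem_image_of_mem _ hx
    rw [t1] at this
    simpa using this
  let l : V → V → ℕ := fun u v =>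
    if u ∈ H then (if v ∈ H then 2 else gl m (p u) (t v))
    else (if v ∈ H then gl m (p v) (t u) else 0)
  have hl : ∀ u v, l u v ≤ 2 := by
    intro u v
    simp only [l]
    split_ifs
    · rfl
    · exact gl_le _ _ _
    · exact gl_le _ _ _
    · simp
  let c : V → ℕ := fun x => if x ∈ H then
      2 * (m - 1) + (2 * p x + 1 - (if p x + 1 = m then 1 else 0))
    else if t x < m then 2 * (m - 1 - t x) + 1 - (if t x = 0 then 1 else 0) else 0
  have hc : ∀ x ∈ X, ∑ w ∈ X.erase x, l x w = c x := by
    intro x hx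
    by_cases hxH : x ∈ H
    · have e : X.erase x = (H.erase x) ∪ (X \ H) := by
        ext w
        simp only [Finset.mem_erase, Finset.mem_union, Finset.mem_sdiff]
        grind
      have d : Disjoint (H.erase x) (X \ H) := by
        rw [Finset.disjoint_left]
        intro w
        simp only [Finset.mem_erase, Finset.mem_sdiff]
        tauto
      rw [e, Finset.sum_union d]
      have s1 : ∑ w ∈ H.erase x, l x w = 2 * (m - 1) := by
        rw [Finset.sum_congr rfl (g := fun _ => 2)]
        · rw [Finset.sum_const, Finset.card_erase_of_mem hxH, hHc, smul_eq_mul, mul_comm]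
        · intro w hw
          have := Finset.mem_of_mem_erase hw
          simp [l, hxH, this]
      have s2 : ∑ w ∈ X \ H, l x w = ∑ j ∈ Finset.range (q + 1), gl m (p x) j := by
        rw [← t1, Finset.sum_image t2]
        apply Finset.sum_congr rfl
        intro w hw
        simp [l, hxH, (Finset.mem_sdiff.1 hw).2]
      have := gl_sum_j m (p x) q (by omega)
      have := pl x hxH
      rw [s1, s2]
      simp only [c, hxH, if_true]
      split_ifs at * <;> omega
    · have hxL : x ∈ X \ H := Finset.mem_sdiff.2 ⟨hx, hxH⟩
      have e : X.erase x = ((X \ H).erase x) ∪ H := by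
        ext w
        simp only [Finset.mem_erase, Finset.mem_union, Finset.mem_sdiff]
        have := @hH w
        grind
      have d : Disjoint ((X \ H).erase x) H := by
        rw [Finset.disjoint_left]
        intro w
        simp only [Finset.mem_erase, Finset.mem_sdiff]
        tauto
      rw [e, Finset.sum_union d]
      have s1 : ∑ w ∈ (X \ H).erase x, l x w = 0 := by
        apply Finset.sum_eq_zero
        intro w hw
        have := (Finset.mem_sdiff.1 (Finset.mem_of_mem_erase hw)).2
        simp [l, hxH, this]
      have s2 : ∑ w ∈ H, l x w = ∑ k ∈ Finset.range m, gl m k (t x) := by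
        rw [← p1, Finset.sum_image p2]
        apply Finset.sum_congr rfl
        intro w hw
        simp [l, hxH, hw]
      have := gl_sum_k m (t x) m (by omega)
      have := tl x hxL
      rw [s1, s2]
      simp only [c, hxH]
      split_ifs at * <;> omega
  have hb : ∀ x ∈ X, ∑ w ∈ X.erase x, (2 - l x w) = 2 * (X.card - 1) - c x := by
    intro x hx
    rw [← hc x hx, Finset.sum_tsub_distrib _ (fun w _ => hl x w), Finset.sum_const,
      Finset.card_erase_of_mem hx, smul_eq_mul, mul_comm]
  have cH : ∀ x ∈ H, c x = 2 * (m - 1) + (2 * p x + 1 - (if p x + 1 = m then 1 else 0)) := by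
    intro x hx
    simp [c, hx]
  have cL : ∀ x, x ∉ H → c x =
      if t x < m then 2 * (m - 1 - t x) + 1 - (if t x = 0 then 1 else 0) else 0 := by
    intro x hx
    simp [c, hx]
  have key : ∀ u ∈ X, ∀ v ∈ X, u ≠ v →
      (c u + (if u ∈ H then 2 * outDeg G X u else 0) ≠
        c v + (if v ∈ H then 2 * outDeg G X v else 0)) ∧
      (2 * (X.card - 1) - c u + (if u ∈ H then 0 else 2 * outDeg G X u) ≠
        2 * (X.card - 1) - c v + (if v ∈ H then 0 else 2 * outDeg G X v)) := by
    intro u hu v hv huv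
    by_cases huH : u ∈ H <;> by_cases hvH : v ∈ H
    · have c1 := cH u huH
      have c2 := cH v hvH
      have := pl u huH
      have := pl v hvH
      have a1 := p3 u huH v hvH
      have a2 := p3 v hvH u huH
      have a3 : p u ≠ p v := fun h => huv (p2 huH hvH h)
      simp only [huH, hvH, if_true]
      generalize p u = i at *
      generalize p v = j at *
      generalize c u = cu at *
      generalize c v = cv at *
      rcases lt_or_gt_of_ne a3 with h | h
      · have := a1 h
        split_ifs at * <;> omega
      · have := a2 h
        split_ifs at * <;> omega
    · have c1 := cH u huH
      have c2 := cL v hvH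
      have := pl u huH
      have := tl v (Finset.mem_sdiff.2 ⟨hv, hvH⟩)
      simp only [huH, hvH, if_true, if_false]
      generalize c u = cu at *
      generalize c v = cv at *
      split_ifs at * <;> omega
    · have c1 := cH v hvH
      have c2 := cL u huH
      have := pl v hvH
      have := tl u (Finset.mem_sdiff.2 ⟨hu, huH⟩)
      simp only [huH, hvH, if_true, if_false]
      generalize c u = cu at *
      generalize c v = cv at *
      split_ifs at * <;> omega
    · have huL := Finset.mem_sdiff.2 ⟨hu, huH⟩
      have hvL := Finset.mem_sdiff.2 ⟨hv, hvH⟩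
      have c1 := cL u huH
      have c2 := cL v hvH
      have := tl u huL
      have := tl v hvL
      have a1 := t3 u huL v hvL
      have a2 := t3 v hvL u huL
      have a3 : t u ≠ t v := fun h => huv (t2 huL hvL h)
      simp only [huH, hvH, if_false]
      generalize t u = i at *
      generalize t v = j at *
      generalize c u = cu at *
      generalize c v = cv at *
      rcases lt_or_gt_of_ne a3 with h | h
      · have := a1 h
        split_ifs at * <;> omega
      · have := a2 h
        split_ifs at * <;> omega
  have outpos : ∀ x, ∀ y ∉ X, G.Adj x y → 1 ≤ outDeg G X x := by
    intro x y hy hxy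
    apply Finset.card_pos.2
    exact ⟨y, by simp [hy, hxy]⟩
  refine framework G X H l c (fun x => 2 * (X.card - 1) - c x) hX hY hH ?_ hl hc hb ?_ ?_ ?_ ?_
  · intro u v
    simp only [l]
    split_ifs <;> rfl
  · intro u hu v hv huv _
    exact (key u hu v hv huv).1
  · intro u hu v hv huv _
    exact (key u hu v hv huv).2
  · intro x hx y hy hxy
    have := outpos x y hy hxy
    have c1 := cH x hx
    have := pl x hx
    have : (H.filter (fun w => G.Adj y w)).card ≤ m := hHc ▸ Finset.card_filter_le _ _
    split_ifs at * <;> omega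
  · intro x hx hxH y hy hxy
    have := outpos x y hy hxy
    have c1 := cL x hxH
    have : ((X \ H).filter (fun w => G.Adj y w)).card ≤ q + 1 := hLc ▸ Finset.card_filter_le _ _
    show 2 * (X.card - 1) - c x + _ ≠ _
    split_ifs at * <;> omega

theorem case_three {V : Type*} [Fintype V] [DecidableEq V]
    (G : SimpleGraph V) (X : Finset V)
    (hX : ∀ a ∈ X, ∀ b ∈ X, a ≠ b → G.Adj a b)
    (hY : ∀ a ∉ X, ∀ b ∉ X, ¬ G.Adj a b)
    (hmax : ∀ y ∉ X, ∃ x ∈ X, ¬ G.Adj x y) (h3 : X.card = 3) : LIRtwoLE2 G := by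
  have hne : X.Nonempty := Finset.card_pos.1 (by omega)
  obtain ⟨q, hq⟩ := hne
  have : ∃ s ∈ X, s ≠ q ∧ (outDeg G X q = 1 → ∀ y ∉ X, G.Adj q y → ¬ G.Adj s y) := by
    by_cases h : outDeg G X q = 1
    · obtain ⟨y, hy⟩ := Finset.card_eq_one.1 h
      have hy1 : y ∉ X ∧ G.Adj q y := by
        have : y ∈ ({y} : Finset V) := by simp
        rw [← hy] at this
        simpa using this
      obtain ⟨s, hs, hsy⟩ := hmax y hy1.1
      refine ⟨s, hs, ?_, ?_⟩
      · rintro rfl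
        exact hsy hy1.2
      · intro _ y' hy' hq'
        have : y' ∈ ({y} : Finset V) := by
          rw [← hy]
          simp [hy', hq']
        rw [Finset.mem_singleton] at this
        rwa [this]
    · have : 0 < (X.erase q).card := by rw [Finset.card_erase_of_mem hq]; omega
      obtain ⟨s, hs⟩ := Finset.card_pos.1 this
      rw [Finset.mem_erase] at hs
      exact ⟨s, hs.2, hs.1, fun h' => absurd h' h⟩
  obtain ⟨s, hs, hsq, hcond⟩ := this
  have : 0 < ((X.erase q).erase s).card := by
    rw [Finset.card_erase_of_mem (Finset.mem_erase.2 ⟨hsq, hs⟩), Finset.card_erase_of_mem hq]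
    omega
  obtain ⟨p, hp⟩ := Finset.card_pos.1 this
  simp only [Finset.mem_erase] at hp
  obtain ⟨hps, hpq, hp⟩ := hp
  have hXe : X = {p, q, s} := by
    symm
    apply Finset.eq_of_subset_of_card_le
    · intro w hw
      simp at hw
      rcases hw with rfl | rfl | rfl <;> assumption
    · rw [h3, Finset.card_eq_three.2 ⟨p, q, s, hpq, hps, hsq.symm, rfl⟩]
  have e1 : X.erase p = {q, s} := by
    rw [hXe]; ext w; simp; grind
  have e2 : X.erase q = {p, s} := by
    rw [hXe]; ext w; simp; grind
  have e3 : X.erase s = {p, q} := by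
    rw [hXe]; ext w; simp; grind
  have mem : ∀ x ∈ X, x = p ∨ x = q ∨ x = s := by
    intro x hx
    rw [hXe] at hx
    simpa using hx
  let l : V → V → ℕ := fun u v =>
    if (u = s ∧ v = q) ∨ (u = q ∧ v = s) then 2 else if u = s ∨ v = s then 1 else 0
  have hqs := hsq.symm
  have hsp := hps.symm
  have hqp := hpq.symm
  refine framework G X {q, s} l (fun x => if x = p then 1 else if x = q then 2 else 3)
    (fun x => if x = p then 3 else if x = q then 2 else 1) hX hY ?_ ?_ ?_ ?_ ?_ ?_ ?_ ?_ ?_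
  · intro w hw
    simp at hw
    rcases hw with rfl | rfl <;> assumption
  · intro u v
    simp only [l]
    split_ifs <;> tauto
  · intro u v
    simp only [l]
    split_ifs <;> omega
  · intro x hx
    rcases mem x hx with rfl | rfl | rfl
    · rw [e1, Finset.sum_pair hqs]
      simp [l, *]
    · rw [e2, Finset.sum_pair hps]
      simp [l, *]
    · rw [e3, Finset.sum_pair hpq]
      simp [l, *]
  · intro x hx
    rcases mem x hx with rfl | rfl | rfl
    · rw [e1, Finset.sum_pair hqs]
      simp [l, *]
    · rw [e2, Finset.sum_pair hps]
      simp [l, *]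
    · rw [e3, Finset.sum_pair hpq]
      simp [l, *]
  · intro u hu v hv huv _
    rcases mem u hu with rfl | rfl | rfl <;> rcases mem v hv with rfl | rfl | rfl <;>
      simp [hqs, hsq, hps, hsp, hpq, hqp] at huv ⊢ <;> omega
  · intro u hu v hv huv _
    rcases mem u hu with rfl | rfl | rfl <;> rcases mem v hv with rfl | rfl | rfl <;>
      simp [hqs, hsq, hps, hsp, hpq, hqp] at huv ⊢ <;> omega
  · intro x hx y hy hxy
    simp at hx
    rcases hx with rfl | rfl
    · have h1 : 1 ≤ outDeg G X x := Finset.card_pos.2 ⟨y, by simp [hy, hxy]⟩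
      simp only [hqp, if_true, if_false]
      by_cases ho : outDeg G X x = 1
      · have hn := hcond ho y hy hxy
        have : ({x, s} : Finset V).filter (fun w => G.Adj y w) ⊆ {x} := by
          intro w hw
          simp only [Finset.mem_filter, Finset.mem_insert, Finset.mem_singleton] at hw ⊢
          rcases hw.1 with h | rfl
          · exact h
          · exact absurd hw.2.symm hn
        have := Finset.card_le_card this
        rw [Finset.card_singleton] at this
        omega
      · have : (({x, s} : Finset V).filter (fun w => G.Adj y w)).card ≤ 2 :=
          (Finset.card_filter_le _ _).trans Finset.card_le_two
        omega
    · simp only [hsp, hsq, if_false]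
      omega
  · intro x hx hxH y hy hxy
    rcases mem x hx with rfl | rfl | rfl
    · simp only [if_true]
      omega
    · simp at hxH
    · simp at hxH

theorem case_two {V : Type*} [Fintype V] [DecidableEq V]
    (G : SimpleGraph V) (u v : V) (huv : u ≠ v)
    (hX : ∀ a ∈ ({u, v} : Finset V), ∀ b ∈ ({u, v} : Finset V), a ≠ b → G.Adj a b)
    (hY : ∀ a ∉ ({u, v} : Finset V), ∀ b ∉ ({u, v} : Finset V), ¬ G.Adj a b)
    (hu : 1 ≤ outDeg G {u, v} u) : LIRtwoLE2 G := by
  have hvu := huv.symm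
  have e1 : ({u, v} : Finset V).erase u = {v} := by ext w; simp; grind
  have e2 : ({u, v} : Finset V).erase v = {u} := by ext w; simp; grind
  by_cases hv : outDeg G {u, v} v = 0
  · refine framework G {u, v} {u, v} (fun _ _ => 2) (fun _ => 2) (fun _ => 0) hX hY
      (Finset.Subset.refl _) ?_ ?_ ?_ ?_ ?_ ?_ ?_ ?_
    · intros; rfl
    · intros; rfl
    · intro x hx
      simp only [Finset.mem_insert, Finset.mem_singleton] at hx
      rcases hx with rfl | rfl
      · simp [e1]
      · simp [e2]
    · simp
    · intro x hx y hy hxy _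
      simp only [Finset.mem_insert, Finset.mem_singleton] at hx hy
      rcases hx with rfl | rfl <;> rcases hy with rfl | rfl <;> simp at hxy ⊢ <;> omega
    · intros; omega
    · intro x hx y hy hxy
      have hn : ¬ G.Adj v y := by
        intro h
        have : 1 ≤ outDeg G {u, v} v := Finset.card_pos.2 ⟨y, by
          rw [Finset.mem_filter]; exact ⟨Finset.mem_univ _, hy, h⟩⟩
        omega
      have hxu : x = u := by
        simp only [Finset.mem_insert, Finset.mem_singleton] at hx
        rcases hx with rfl | rfl
        · rfl
        · exact absurd hxy hn
      subst hxu
      have : ({x, v} : Finset V).filter (fun w => G.Adj y w) ⊆ {x} := by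
        intro w hw
        simp only [Finset.mem_filter, Finset.mem_insert, Finset.mem_singleton] at hw ⊢
        rcases hw.1 with h | rfl
        · exact h
        · exact absurd hw.2.symm hn
      have := Finset.card_le_card this
      rw [Finset.card_singleton] at this
      omega
    · intro x hx hx'
      exact absurd hx hx'
  · refine framework G {u, v} {u} (fun _ _ => 1) (fun _ => 1) (fun _ => 1) hX hY
      (by simp) ?_ ?_ ?_ ?_ ?_ ?_ ?_ ?_
    · intros; rfl
    · intros; omega
    · intro x hx
      simp only [Finset.mem_insert, Finset.mem_singleton] at hx
      rcases hx with rfl | rfl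
      · simp [e1]
      · simp [e2]
    · intro x hx
      simp only [Finset.mem_insert, Finset.mem_singleton] at hx
      rcases hx with rfl | rfl
      · simp [e1]
      · simp [e2]
    · intro x hx y hy hxy _
      simp only [Finset.mem_insert, Finset.mem_singleton] at hx hy
      rcases hx with rfl | rfl <;> rcases hy with rfl | rfl <;> simp [hvu] at hxy ⊢ <;> omega
    · intro x hx y hy hxy _
      simp only [Finset.mem_insert, Finset.mem_singleton] at hx hy
      rcases hx with rfl | rfl <;> rcases hy with rfl | rfl <;> simp [hvu] at hxy ⊢ <;> omega
    · intros; omega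
    · intros; omega

theorem lir_two_mul_split {V : Type*} [Fintype V] [DecidableEq V]
    (G : SimpleGraph V) (hconn : G.Connected)
    (hsplit : ∃ X : Set V,
      (∀ a ∈ X, ∀ b ∈ X, a ≠ b → G.Adj a b) ∧
      (∀ a ∉ X, ∀ b ∉ X, ¬ G.Adj a b))
    (hK2 : ¬ Nonempty (G ≃g (⊤ : SimpleGraph (Fin 2)))) :
    LIRtwoLE2 G := by
  let P : Finset V → Prop := fun X => (∀ a ∈ X, ∀ b ∈ X, a ≠ b → G.Adj a b) ∧
      (∀ a ∉ X, ∀ b ∉ X, ¬ G.Adj a b)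
  have hne : (Finset.univ.filter P).Nonempty := by
    obtain ⟨X, h1, h2⟩ := hsplit
    refine ⟨X.toFinset, ?_⟩
    simp only [P, Finset.mem_filter, Finset.mem_univ, true_and, Set.mem_toFinset]
    exact ⟨h1, h2⟩
  obtain ⟨X, hXP, hXm⟩ := Finset.exists_max_image _ Finset.card hne
  rw [Finset.mem_filter] at hXP
  obtain ⟨-, hX, hY⟩ := hXP
  have hmax : ∀ y ∉ X, ∃ x ∈ X, ¬ G.Adj x y := by
    intro y hy
    by_contra! hcon
    have : P (insert y X) := by
      refine ⟨?_, ?_⟩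
      · intro a ha b hb hab
        rw [Finset.mem_insert] at ha hb
        rcases ha with rfl | ha <;> rcases hb with rfl | hb
        · exact absurd rfl hab
        · exact (hcon b hb).symm
        · exact hcon a ha
        · exact hX a ha b hb hab
      · intro a ha b hb
        rw [Finset.mem_insert, not_or] at ha hb
        exact hY a ha.2 b hb.2
    have := hXm _ (by rw [Finset.mem_filter]; exact ⟨Finset.mem_univ _, this⟩)
    rw [Finset.card_insert_of_notMem hy] at this
    omega
  by_cases h4 : 4 ≤ X.card
  · exact case_big G X hX hY h4
  have : X.card = 0 ∨ X.card = 1 ∨ X.card = 2 ∨ X.card = 3 := by omega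
  rcases this with h | h | h | h
  · rw [Finset.card_eq_zero] at h
    subst h
    obtain ⟨y⟩ := hconn.nonempty
    obtain ⟨x, hx, _⟩ := hmax y (by simp)
    simp at hx
  · obtain ⟨x, rfl⟩ := Finset.card_eq_one.1 h
    have hx : ∀ y, ¬ G.Adj x y := by
      intro y hxy
      obtain ⟨x', hx', h'⟩ := hmax y (by simpa using hxy.ne')
      rw [Finset.mem_singleton] at hx'
      exact h' (hx' ▸ hxy)
    have hno : ∀ u v, ¬ G.Adj u v := by
      intro u v huv
      by_cases hu : u = x
      · exact hx v (hu ▸ huv)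
      · by_cases hv : v = x
        · exact hx u (hv ▸ huv.symm)
        · exact hY u (by simpa using hu) v (by simpa using hv) huv
    exact ⟨fun _ => 0, fun _ _ => by simp, fun u v huv => absurd huv (hno u v)⟩
  · obtain ⟨u, v, huv, rfl⟩ := Finset.card_eq_two.1 h
    by_cases hu : 1 ≤ outDeg G {u, v} u
    · exact case_two G u v huv hX hY hu
    by_cases hv : 1 ≤ outDeg G {u, v} v
    · rw [Finset.pair_comm] at hX hY hv
      exact case_two G v u huv.symm hX hY hv
    exfalso
    apply hK2
    have hall : ∀ y, y = u ∨ y = v := by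
      intro y
      by_contra hy
      have hy' : y ∉ ({u, v} : Finset V) := by simpa using hy
      have : Nontrivial V := ⟨u, v, huv⟩
      obtain ⟨w, hw⟩ := hconn.preconnected.exists_adj_of_nontrivial y
      by_cases hw' : w ∈ ({u, v} : Finset V)
      · have h1 : 1 ≤ outDeg G {u, v} w := Finset.card_pos.2 ⟨y, by
          rw [Finset.mem_filter]; exact ⟨Finset.mem_univ _, hy', hw.symm⟩⟩
        simp only [Finset.mem_insert, Finset.mem_singleton] at hw'
        rcases hw' with rfl | rfl
        · exact hu h1
        · exact hv h1
      · exact hY y hy' w hw' hw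
    have htop : G = ⊤ := by
      ext a b
      rw [SimpleGraph.top_adj]
      exact ⟨fun h => h.ne, fun h => hX a (by simpa using hall a) b (by simpa using hall b) h⟩
    have huniv : (Finset.univ : Finset V) = {u, v} := by
      ext y
      simpa using hall y
    have hcard : Fintype.card V = 2 := by
      rw [← Finset.card_univ, huniv, h]
    subst htop
    exact ⟨SimpleGraph.Iso.completeGraph (Fintype.equivFinOfCardEq hcard)⟩
  · exact case_three G X hX hY hmax h
end

section
/- If G is a connected simple graph that is not isomorphic to K2 (the complete graph on two vertices) and G admits a proper vertex coloring with at most 4 colors (in particular, if G is tripartite or 4-partite), then lir(^2G) ≤ 4. -/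
open scoped Classical

/-- The `c`-degree of a vertex `x`: the sum of the multiplicities `w e c`
over all edges `e` of `G` incident with `x`. -/
noncomputable def colorDeg {V : Type*} [Fintype V] [DecidableEq V]
    (G : SimpleGraph V) {k : ℕ} (w : Sym2 V → Fin k → ℕ) (c : Fin k) (x : V) : ℕ :=
  ∑ e ∈ G.edgeFinset.filter (fun e => x ∈ e), w e c

/-- `w` encodes a locally irregular `k`-edge-coloring of `²G`: each edge of `G`
gets a multiplicity vector summing to `2`, and for every edge `uv` and every
color `c` with `w s(u,v) c ≥ 1`, the `c`-degrees of `u` and `v` differ. -/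
def IsLIRk {V : Type*} [Fintype V] [DecidableEq V]
    (G : SimpleGraph V) {k : ℕ} (w : Sym2 V → Fin k → ℕ) : Prop :=
  (∀ e ∈ G.edgeSet, ∑ c, w e c = 2) ∧
  ∀ u v : V, G.Adj u v → ∀ c : Fin k,
    1 ≤ w s(u, v) c → colorDeg G w c u ≠ colorDeg G w c v

/-- `lir(²G) ≤ k`: there is a locally irregular `k`-edge-coloring of `²G`. -/
def LIRtwoLE {V : Type*} [Fintype V] [DecidableEq V] (G : SimpleGraph V) (k : ℕ) : Prop :=
  ∃ w : Sym2 V → Fin k → ℕ, IsLIRk G w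


section Part
variable {V : Type*}

def PValid (G : SimpleGraph V) (σ : Sym2 V → Bool) (f : Bool → V → Bool) : Prop :=
  ∀ u v, G.Adj u v → f (σ s(u,v)) u ≠ f (σ s(u,v)) v

def PIso (G : SimpleGraph V) (σ : Sym2 V → Bool) (u v : V) : Prop :=
  G.Adj u v ∧ (∀ w, G.Adj u w → σ s(u,w) = σ s(u,v) → w = v) ∧
    (∀ w, G.Adj v w → σ s(v,w) = σ s(u,v) → w = u)

def PBetter (G : SimpleGraph V) (σ : Sym2 V → Bool) : Prop :=
  ∃ σ' f', PValid G σ' f' ∧ (∀ x y, PIso G σ' x y → PIso G σ x y) ∧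
    ∃ x y, PIso G σ x y ∧ ¬ PIso G σ' x y

lemma s2ne {a b c : V} (h : b ≠ c) : s(a,b) ≠ s(a,c) := fun e => h (Sym2.congr_right.1 e)

lemma s2ne' {x y u w : V} (h : x ≠ u) (h' : y ≠ u) : s(x,y) ≠ s(u,w) := by
  intro e
  rcases Sym2.eq_iff.1 e with ⟨h1, _⟩ | ⟨_, h1⟩
  · exact h h1
  · exact h' h1

lemma PIso.symm {G : SimpleGraph V} {σ : Sym2 V → Bool} {u v : V} (h : PIso G σ u v) :
    PIso G σ v u := by
  obtain ⟨h1, h2, h3⟩ := h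
  refine ⟨h1.symm, ?_, ?_⟩
  · intro w hw; rw [Sym2.eq_swap (a := v) (b := u)]; exact h3 w hw
  · intro w hw; rw [Sym2.eq_swap (a := v) (b := u)]; exact h2 w hw

lemma better_out (G : SimpleGraph V) (σ : Sym2 V → Bool) (f : Bool → V → Bool)
    (hv : PValid G σ f) (u v : V) (hi : PIso G σ u v)
    (h3 : ∃ w, (G.Adj u w ∧ w ≠ v) ∨ (G.Adj v w ∧ w ≠ u))
    (hne : f (!σ s(u,v)) u ≠ f (!σ s(u,v)) v) : PBetter G σ := by
  obtain ⟨ha, hu, hw⟩ := hi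
  generalize hb : σ s(u,v) = b at *
  have key : ¬ PIso G (Function.update σ s(u,v) (!b)) u v := by
    rintro ⟨_, k1, k2⟩
    obtain ⟨w, ⟨h, h'⟩ | ⟨h, h'⟩⟩ := h3
    · have e : s(u,w) ≠ s(u,v) := s2ne h'
      have := k1 w h
      have := hu w h
      simp [Function.update_of_ne e] at *
      grind
    · have e : s(v,w) ≠ s(u,v) := by rw [Sym2.eq_swap (a := u)]; exact s2ne h'
      have := k2 w h
      have := hw w h
      simp [Function.update_of_ne e] at *
      grind
  refine ⟨Function.update σ s(u,v) (!b), f, ?_, ?_, u, v, ⟨ha, by simpa [hb] using hu, by simpa [hb] using hw⟩, key⟩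
  · intro x y hxy
    by_cases e : s(x,y) = s(u,v)
    · simp [e]
      rcases Sym2.eq_iff.1 e with ⟨rfl, rfl⟩ | ⟨rfl, rfl⟩
      · exact hne
      · exact hne.symm
    · rw [Function.update_of_ne e]; exact hv x y hxy
  · intro x y hxy
    by_cases e : s(x,y) = s(u,v)
    · exfalso
      rcases Sym2.eq_iff.1 e with ⟨rfl, rfl⟩ | ⟨rfl, rfl⟩
      · exact key hxy
      · exact key hxy.symm
    · obtain ⟨k0, k1, k2⟩ := hxy
      rw [Function.update_of_ne e] at k1 k2
      refine ⟨k0, ?_, ?_⟩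
      · intro w hw1 hw2
        by_cases e' : s(x,w) = s(u,v)
        · rcases Sym2.eq_iff.1 e' with ⟨rfl, rfl⟩ | ⟨rfl, rfl⟩
          · exact (hu y k0 (by rw [← hw2, hb])).symm
          · exact (hw y k0 (by rw [← hw2, e', hb])).symm
        · exact k1 w hw1 (by rw [Function.update_of_ne e', hw2])
      · intro w hw1 hw2
        by_cases e' : s(y,w) = s(u,v)
        · rcases Sym2.eq_iff.1 e' with ⟨rfl, rfl⟩ | ⟨rfl, rfl⟩
          · exact (hu x k0.symm (by rw [Sym2.eq_swap, ← hw2, hb])).symm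
          · exact (hw x k0.symm (by rw [Sym2.eq_swap, ← hw2, e', hb])).symm
        · exact k2 w hw1 (by rw [Function.update_of_ne e', hw2])

/-- move `uw` (of the other color) to the color of the isolated edge `uv` -/
lemma better_in (G : SimpleGraph V) (σ : Sym2 V → Bool) (f : Bool → V → Bool)
    (hv : PValid G σ f) (u v w : V) (hi : PIso G σ u v)
    (huw : G.Adj u w) (hc : σ s(u,w) = !σ s(u,v))
    (h1 : ∀ z, G.Adj u z → σ s(u,z) = (!σ s(u,v)) → z ≠ w →
      (∀ y, G.Adj z y → σ s(z,y) = (!σ s(u,v)) → y = u) →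
      (∀ y, G.Adj u y → σ s(u,y) = (!σ s(u,v)) → y = w ∨ y = z) → False)
    (h2 : ∀ z, G.Adj w z → σ s(w,z) = (!σ s(u,v)) → z ≠ u →
      (∀ y, G.Adj z y → σ s(z,y) = (!σ s(u,v)) → y = w) →
      (∀ y, G.Adj w y → σ s(w,y) = (!σ s(u,v)) → y = u ∨ y = z) → False) :
    PBetter G σ := by
  have hi0 := hi
  obtain ⟨ha, hu, hw⟩ := hi
  generalize hb : σ s(u,v) = b at *
  have hwv : w ≠ v := by rintro rfl; rw [hb] at hc; cases b <;> simp at hc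
  have hwu : w ≠ u := huw.ne'
  have e1 : s(u,v) ≠ s(u,w) := s2ne hwv.symm
  have key : ∀ x y, PIso G (Function.update σ s(u,w) b) x y → x ≠ u := by
    rintro x y ⟨k0, k1, k2⟩ rfl
    by_cases hy : y = w
    · subst hy
      exact hwv (k1 v ha (by simp [Function.update_of_ne e1, hb])).symm
    by_cases hy' : y = v
    · subst hy'
      exact hwv (k1 w huw (by simp [Function.update_of_ne e1, hb]))
    have e2 : s(x,y) ≠ s(x,w) := s2ne hy
    rw [Function.update_of_ne e2] at k1 k2
    have c2 : σ s(x,y) = !b := by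
      have := hu y k0
      revert this
      cases σ s(x,y) <;> cases b <;> simp [hy']
    refine h1 y k0 c2 hy ?_ ?_
    · intro z hz hz'
      apply k2 z hz
      rw [Function.update_of_ne, hz', c2]
      intro e; rcases Sym2.eq_iff.1 e with ⟨rfl, rfl⟩ | ⟨rfl, rfl⟩ <;> simp_all
    · intro z hz hz'
      by_contra hcon
      push Not at hcon
      apply hcon.2 
      apply k1 z hz
      rw [Function.update_of_ne (s2ne hcon.1), hz', c2]
  have key2 : ∀ x y, PIso G (Function.update σ s(u,w) b) x y → y ≠ u :=
    fun x y h => key y x h.symm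
  have main : ∀ x y, PIso G (Function.update σ s(u,w) b) x y →
      ∀ z, G.Adj x z → σ s(x,z) = σ s(x,y) → z = y := by
    intro x y h z hz hz'
    have n1 := key x y h
    have n2 := key2 x y h
    by_contra hzy
    obtain ⟨k0, k1, k2⟩ := h
    have e2 : s(x,y) ≠ s(u,w) := by
      intro e; rcases Sym2.eq_iff.1 e with ⟨rfl, rfl⟩ | ⟨rfl, rfl⟩ <;> simp_all
    rw [Function.update_of_ne e2] at k1 k2
    by_cases e3 : s(x,z) = s(u,w)
    · rcases Sym2.eq_iff.1 e3 with ⟨rfl, rfl⟩ | ⟨rfl, rfl⟩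
      · exact n1 rfl
      · have c2 : σ s(x,y) = !b := by rw [← hz', e3, hc]
        refine h2 y k0 c2 n2 ?_ ?_
        · intro q hq hq'
          apply k2 q hq
          rw [Function.update_of_ne, hq', c2]
          intro e; rcases Sym2.eq_iff.1 e with ⟨rfl, rfl⟩ | ⟨rfl, rfl⟩ <;> simp_all
        · intro q hq hq'
          by_contra hcon
          push Not at hcon
          apply hcon.2
          apply k1 q hq
          rw [Function.update_of_ne, hq', c2]
          rw [← e3]; exact s2ne hcon.1
    · exact hzy (k1 z hz (by rw [Function.update_of_ne e3, hz']))
  refine ⟨Function.update σ s(u,w) b,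
    fun c x => if c = b ∧ (x = u ∨ x = v) ∧ f b u = f b w then !f c x else f c x, ?_, ?_, u, v, hi0,
      fun h => key _ _ h rfl⟩
  · intro x y hxy
    have V0 := hv x y hxy
    by_cases e : s(x,y) = s(u,w)
    · rw [e]
      rcases Sym2.eq_iff.1 e with ⟨rfl, rfl⟩ | ⟨rfl, rfl⟩
      · by_cases hf : f b x = f b y <;> simp [hf, hwv, hwu]
      · by_cases hf : f b y = f b x <;> simp [hf, hwv, hwu]
        exact fun h => hf h.symm
    · rw [Function.update_of_ne e]
      by_cases hs : σ s(x,y) = b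
      · have A1 : x = u → y = v := fun h => by subst h; exact hu y hxy hs
        have A2 : x = v → y = u := fun h => by subst h; exact hw y hxy hs
        have A3 : y = u → x = v := fun h => by subst h; exact hu x hxy.symm (by rw [Sym2.eq_swap, hs])
        have A4 : y = v → x = u := fun h => by subst h; exact hw x hxy.symm (by rw [Sym2.eq_swap, hs])
        rw [hs] at V0
        have : (x = u ∨ x = v) ↔ (y = u ∨ y = v) := by tauto
        simp only [hs, this]
        split_ifs
        · simpa using V0
        · exact V0
      · simpa [hs] using V0
  · intro x y h
    have n1 := key x y h
    have n2 := key2 x y h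
    refine ⟨h.1, main x y h, fun z hz hz' => main y x h.symm z hz (by rw [hz', Sym2.eq_swap])⟩

lemma better_tri (G : SimpleGraph V) (σ : Sym2 V → Bool) (f : Bool → V → Bool)
    (hv : PValid G σ f) (u v w y : V) (hi : PIso G σ u v)
    (huw : G.Adj u w) (hvw : G.Adj v w) (hwy : G.Adj w y) (hyu : y ≠ u) (hyv : y ≠ v)
    (hc : σ s(u,w) = !σ s(u,v)) (hc' : σ s(v,w) = !σ s(u,v)) (hc2 : σ s(w,y) = σ s(u,v))
    (hNu : ∀ z, G.Adj u z → z = v ∨ z = w)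
    (hNv : ∀ z, G.Adj v z → z = u ∨ z = w) : PBetter G σ := by
  have hi0 := hi
  obtain ⟨ha, -, -⟩ := hi
  generalize hb : σ s(u,v) = b at *
  have n1 := huw.ne
  have n2 := hvw.ne
  have n3 := ha.ne
  let σ' : Sym2 V → Bool := Function.update (Function.update σ s(u,w) b) s(u,v) (!b)
  have s1 : σ' s(u,v) = !b := by simp [σ']
  have s2 : σ' s(u,w) = b := by
    have : s(u,w) ≠ s(u,v) := s2ne n2.symm
    simp [σ', Function.update_of_ne this]
  have s3 : ∀ x y, x ≠ u → y ≠ u → σ' s(x,y) = σ s(x,y) := by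
    intro x y h1 h2
    have a1 : s(x,y) ≠ s(u,v) := by
      intro e; rcases Sym2.eq_iff.1 e with ⟨rfl, rfl⟩ | ⟨rfl, rfl⟩ <;> simp_all
    have a2 : s(x,y) ≠ s(u,w) := by
      intro e; rcases Sym2.eq_iff.1 e with ⟨rfl, rfl⟩ | ⟨rfl, rfl⟩ <;> simp_all
    simp [σ', Function.update_of_ne a1, Function.update_of_ne a2]
  have s4 : σ' s(w,y) = b := by rw [s3 _ _ n1.symm hyu, hc2]
  have s5 : σ' s(v,w) = !b := by rw [s3 _ _ n3.symm n1.symm, hc']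
  have key : ∀ x z, PIso G σ' x z → x ≠ u := by
    rintro x z ⟨k0, k1, k2⟩ rfl
    rcases hNu z k0 with rfl | rfl
    · exact n1 (k2 w hvw (by rw [s5, s1])).symm
    · exact hyu (k2 y hwy (by rw [s4, s2]))
  have key2 : ∀ x y, PIso G σ' x y → y ≠ u := fun x y h => key y x h.symm
  have main : ∀ x z, PIso G σ' x z → ∀ q, G.Adj x q → σ s(x,q) = σ s(x,z) → q = z := by
    intro x z h q hq hq'
    have m1 := key _ _ h
    have m2 := key2 _ _ h
    obtain ⟨k0, k1, k2⟩ := h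
    rw [s3 _ _ m1 m2] at k1 k2
    by_cases hqu : q = u
    · exfalso
      subst hqu
      rcases hNu x hq.symm with rfl | rfl
      · rcases hNv z k0 with rfl | rfl
        · exact m2 rfl
        · rw [hc', Sym2.eq_swap, hb] at hq'
          cases b <;> simp at hq'
      · rw [Sym2.eq_swap, hc] at hq'
        by_cases hzv : z = v
        · subst hzv
          exact n1 (k2 q ha.symm (by rw [Sym2.eq_swap, s1, Sym2.eq_swap, hc']))
        · exact hzv (k1 v hvw.symm (by rw [Sym2.eq_swap, s5, hq'])).symm
    · exact k1 q hq (by rw [s3 _ _ m1 hqu, hq'])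
  refine ⟨σ', fun c x => if x = u then (if c = b then !f b w else !f c v) else f c x, ?_, ?_, u, v, hi0,
      fun h => key _ _ h rfl⟩
  · intro x z hxz
    by_cases hx : x = u
    · subst hx
      rcases hNu z hxz with rfl | rfl
      · simp [s1, n3.symm]
      · simp [s2, n1.symm]
    · by_cases hz : z = u
      · subst hz
        rw [Sym2.eq_swap]
        rcases hNu x hxz.symm with rfl | rfl
        · simp [s1, n3.symm]
        · simp [s2, n1.symm]
      · simp only [hx, hz, if_false, s3 x z hx hz]
        exact hv x z hxz
  · intro x y h
    refine ⟨h.1, main x y h, fun z hz hz' => main y x h.symm z hz (by rw [hz', Sym2.eq_swap])⟩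

lemma better_step (G : SimpleGraph V) (σ : Sym2 V → Bool) (f : Bool → V → Bool)
    (hv : PValid G σ f) (u v : V) (hi : PIso G σ u v)
    (h3 : ∃ w, (G.Adj u w ∧ w ≠ v) ∨ (G.Adj v w ∧ w ≠ u))
    (hK3 : ∀ w, G.Adj u w → G.Adj v w → ∃ y, y ≠ u ∧ y ≠ v ∧ y ≠ w ∧
      (G.Adj u y ∨ G.Adj v y ∨ G.Adj w y)) : PBetter G σ := by
  by_contra hnot
  have hf : f (!σ s(u,v)) u = f (!σ s(u,v)) v := by
    by_contra h
    exact hnot (better_out G σ f hv u v hi h3 h)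
  have hcl : ∀ S : Set V, u ∈ S → (∀ x ∈ S, ∀ y, G.Adj x y → σ s(x,y) = (!σ s(u,v)) → y ∈ S) →
      v ∈ S := by
    intro S hu hS
    by_contra hvS
    apply hnot
    refine better_out G σ (fun c x => if c = (!σ s(u,v)) ∧ x ∈ S then !f c x else f c x) ?_ u v hi h3 ?_
    · intro x y hxy
      have V0 := hv x y hxy
      by_cases hs : σ s(x,y) = !σ s(u,v)
      · have : x ∈ S ↔ y ∈ S := ⟨fun h => hS x h y hxy hs,
          fun h => hS y h x hxy.symm (by rw [Sym2.eq_swap, hs])⟩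
        simp only [this]
        split_ifs
        · simpa using V0
        · exact V0
      · simpa [hs] using V0
    · simp [hu, hvS, hf]
  have hcl' : ∀ S : Set V, v ∈ S → (∀ x ∈ S, ∀ y, G.Adj x y → σ s(x,y) = (!σ s(u,v)) → y ∈ S) →
      u ∈ S := by
    intro S hu hS
    by_contra hvS
    refine hcl Sᶜ hvS ?_ hu
    intro x hx y hxy hs hy
    exact hx (hS y hy x hxy.symm (by rw [Sym2.eq_swap, hs]))
  -- one-sided analysis
  have one : ∀ a b : V, PIso G σ a b → f (!σ s(a,b)) a = f (!σ s(a,b)) b →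
      (∀ S : Set V, a ∈ S → (∀ x ∈ S, ∀ y, G.Adj x y → σ s(x,y) = (!σ s(a,b)) → y ∈ S) → b ∈ S) →
      ∃ w, G.Adj a w ∧ σ s(a,w) = (!σ s(a,b)) ∧ G.Adj w b ∧ σ s(w,b) = (!σ s(a,b)) ∧
        (∀ y, G.Adj b y → σ s(b,y) = (!σ s(a,b)) → y = w) ∧
        (∀ y, G.Adj w y → σ s(w,y) = (!σ s(a,b)) → y = a ∨ y = b) := by
    intro a b hi hf hcl
    have hab := hi.1.ne
    have leaf : ∀ z, G.Adj a z → σ s(a,z) = (!σ s(a,b)) →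
        (∀ y, G.Adj z y → σ s(z,y) = (!σ s(a,b)) → y = a) → False := by
      intro z hz hz' hl
      apply hnot
      refine better_in G σ f hv a b z hi hz hz' ?_ ?_
      · intro q hq hq' hqz hl2 hN
        have := hcl {a, z, q} (by simp) (by
          rintro x (rfl | rfl | rfl) y hxy hs
          · rcases hN y hxy hs with rfl | rfl <;> simp
          · simp [hl y hxy hs]
          · simp [hl2 y hxy hs])
        rcases this with h | h | h
        · exact hab h.symm
        · subst h; have := hv a b hz; rw [hz'] at this; exact this hf
        · have h : b = q := h
          subst h; have := hv a b hq; rw [hq'] at this; exact this hf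
      · intro q hq hq' hqa
        exact absurd (hl q hq hq') hqa
    have two : ∀ w, G.Adj a w → σ s(a,w) = (!σ s(a,b)) → ∃ z, G.Adj w z ∧ σ s(w,z) = (!σ s(a,b)) ∧ 
        (∀ y, G.Adj z y → σ s(z,y) = (!σ s(a,b)) → y = w) ∧
        (∀ y, G.Adj w y → σ s(w,y) = (!σ s(a,b)) → y = a ∨ y = z) := by
      intro w hw hw'
      by_contra hcon
      apply hnot
      refine better_in G σ f hv a b w hi hw hw' ?_ ?_
      · intro z hz hz' _ hl _
        exact leaf z hz hz' hl
      · intro z hz hz' _ h1 h2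
        exact hcon ⟨z, hz, hz', h1, h2⟩
    have := hcl {x | x = a ∨ (G.Adj a x ∧ σ s(a,x) = !σ s(a,b)) ∨
      ∃ w, (G.Adj a w ∧ σ s(a,w) = !σ s(a,b)) ∧ G.Adj w x ∧ σ s(w,x) = !σ s(a,b)} (by simp) (by
        rintro x (rfl | ⟨h1, h2⟩ | ⟨w, ⟨h1, h2⟩, h3, h4⟩) y hxy hs
        · exact Or.inr (Or.inl ⟨hxy, hs⟩)
        · exact Or.inr (Or.inr ⟨x, ⟨h1, h2⟩, hxy, hs⟩)
        · obtain ⟨z, z1, z2, z3, z4⟩ := two w h1 h2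
          rcases z4 x h3 h4 with rfl | rfl
          · exact Or.inr (Or.inl ⟨hxy, hs⟩)
          · rw [z3 y hxy hs]
            exact Or.inr (Or.inl ⟨h1, h2⟩))
    rcases this with h | ⟨h1, h2⟩ | ⟨w, ⟨h1, h2⟩, h3, h4⟩
    · exact absurd h.symm hab
    · have := hv a b h1; rw [h2] at this; exact absurd hf this
    · obtain ⟨z, z1, z2, z3, z4⟩ := two w h1 h2
      rcases z4 b h3 h4 with rfl | rfl
      · exact absurd rfl hab
      · exact ⟨w, h1, h2, h3, h4, z3, z4⟩
  obtain ⟨w, a1, a2, a3, a4, a5, a6⟩ := one u v hi hf hcl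
  have esw : s(v,u) = s(u,v) := Sym2.eq_swap
  obtain ⟨w', b1, b2, b3, b4, b5, b6⟩ := one v u hi.symm (by rw [esw]; exact hf.symm) (by rw [esw]; exact hcl')
  rw [esw] at b2 b4 b5 b6
  have : w' = w := a5 w' b1 b2
  subst this
  have hb : ∀ x : Bool, x = σ s(u,v) ∨ x = !σ s(u,v) := by
    intro x; cases x <;> cases σ s(u,v) <;> simp
  have hNu : ∀ z, G.Adj u z → z = v ∨ z = w' := fun z hz =>
    (hb (σ s(u,z))).imp (hi.2.1 z hz) (b5 z hz)
  have hNv : ∀ z, G.Adj v z → z = u ∨ z = w' := fun z hz =>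
    (hb (σ s(v,z))).imp (hi.2.2 z hz) (a5 z hz)
  obtain ⟨y, y1, y2, y3, y4⟩ := hK3 w' a1 b1
  have hwy : G.Adj w' y := by
    rcases y4 with h | h | h
    · rcases hNu y h with h | h <;> contradiction
    · rcases hNv y h with h | h <;> contradiction
    · exact h
  apply hnot
  refine better_tri G σ f hv u v w' y hi a1 b1 hwy y1 y2 a2 b2 ?_ hNu hNv
  rcases hb (σ s(w',y)) with h | h
  · exact h
  · rcases a6 y hwy h with h | h <;> contradiction

lemma exists_part [Fintype V] (G : SimpleGraph V) (col : V → Fin 4)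
    (hcol : ∀ u v : V, G.Adj u v → col u ≠ col v)
    (h3 : ∀ u v, G.Adj u v → ∃ w, (G.Adj u w ∧ w ≠ v) ∨ (G.Adj v w ∧ w ≠ u))
    (hK3 : ∀ u v w, G.Adj u v → G.Adj u w → G.Adj v w → ∃ y, y ≠ u ∧ y ≠ v ∧ y ≠ w ∧
      (G.Adj u y ∨ G.Adj v y ∨ G.Adj w y)) :
    ∃ σ f, PValid G σ f ∧ ∀ u v, ¬ PIso G σ u v := by
  have start : ∃ σ f, PValid G σ f := by
    refine ⟨fun e => decide (∃ x y, e = s(x,y) ∧ decide ((col x).val < 2) ≠ decide ((col y).val < 2)),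
      fun c x => if c then decide ((col x).val < 2) else decide ((col x).val % 2 = 0), ?_⟩
    intro u v huv
    have hne := hcol u v huv
    by_cases h : decide ((col u).val < 2) = decide ((col v).val < 2)
    · have : ¬ ∃ x y, s(u,v) = s(x,y) ∧ decide ((col x).val < 2) ≠ decide ((col y).val < 2) := by
        rintro ⟨x, y, e, h'⟩
        rcases Sym2.eq_iff.1 e with ⟨rfl, rfl⟩ | ⟨rfl, rfl⟩
        · exact h' h
        · exact h' h.symm
      simp only [this, decide_false]
      generalize col u = a at *
      generalize col v = b at *
      clear this
      revert a b
      decide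
    · have : ∃ x y, s(u,v) = s(x,y) ∧ decide ((col x).val < 2) ≠ decide ((col y).val < 2) := ⟨u, v, rfl, h⟩
      simp only [this, decide_true]
      simpa using h
  obtain ⟨σ, f, hv⟩ := start
  let μ : (Sym2 V → Bool) → ℕ := fun σ => (Finset.univ.filter (fun p : V × V => PIso G σ p.1 p.2)).card
  induction hn : μ σ using Nat.strong_induction_on generalizing σ f with
  | _ n ih =>
    by_cases h : ∀ u v, ¬ PIso G σ u v
    · exact ⟨σ, f, hv, h⟩
    · push Not at h
      obtain ⟨u, v, hi⟩ := h
      obtain ⟨σ', f', hv', hsub, x, y, hx, hx'⟩ :=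
        better_step G σ f hv u v hi (h3 u v hi.1) (fun w => hK3 u v w hi.1)
      refine ih (μ σ') ?_ σ' f' hv' rfl
      rw [← hn]
      apply Finset.card_lt_card
      refine ⟨?_, ?_⟩
      · intro p hp
        simp only [Finset.mem_filter, Finset.mem_univ, true_and] at hp ⊢
        exact hsub _ _ hp
      · intro hh
        have := hh (show (x,y) ∈ _ by simpa using hx)
        simp at this
        exact hx' this

end Part
section Bip
variable {V : Type*} [Fintype V]

noncomputable def nb (H : SimpleGraph V) (x : V) : Finset V := Finset.univ.filter (fun y => H.Adj x y)

lemma mem_nb (H : SimpleGraph V) (x y : V) : y ∈ nb H x ↔ H.Adj x y := by simp [nb]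

lemma exists_root (H : SimpleGraph V) (f : V → Bool) (hf : ∀ u v, H.Adj u v → f u ≠ f v)
    (h3 : ∀ u v, H.Adj u v → (nb H u).card = 1 → (nb H v).card ≠ 1)
    (C : Finset V) (hcl : ∀ x ∈ C, ∀ y, H.Adj x y → y ∈ C)
    (hC : ∀ Y : Finset V, Y ⊆ C → Y.Nonempty → (∀ y ∈ Y, ∀ z, H.Adj y z → z ∈ Y) → Y = C)
    (hne : ∃ u v, u ∈ C ∧ H.Adj u v) :
    ∃ r ∈ C, (∃ a, H.Adj r a) ∧
      (∀ Y : Finset V, Y ⊆ C → Y.Nonempty → r ∉ Y → (∀ y ∈ Y, ∀ z, H.Adj y z → z ∈ Y ∨ z = r) →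
        Y = C.erase r) ∧
      ((∀ a, H.Adj r a → (nb H a).card + 1 ≠ 2 * (nb H r).card) ∨
       ∃ c, H.Adj r c ∧ 2 ≤ (nb H c).card ∧
        ∀ a, H.Adj r a → a ≠ c → (nb H a).card + 3 ≠ 2 * (nb H r).card) := by
  obtain ⟨u0, v0, hu0, huv0⟩ := hne
  have hv0 := hcl _ hu0 _ huv0
  let P : V × Finset V → Prop := fun p => p.1 ∈ C ∧ p.2 ⊆ C ∧ p.2.Nonempty ∧ p.1 ∉ p.2 ∧
    ∀ x ∈ p.2, ∀ y, H.Adj x y → y ∈ p.2 ∨ y = p.1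
  have hP : (Finset.univ.filter P).Nonempty := by
    refine ⟨(u0, C.erase u0), ?_⟩
    simp only [Finset.mem_filter, Finset.mem_univ, true_and, P]
    refine ⟨hu0, Finset.erase_subset _ _, ⟨v0, by simp [huv0.ne', hv0]⟩, by simp, ?_⟩
    intro x hx y hy
    have := hcl x (Finset.mem_of_mem_erase hx) y hy
    by_cases h : y = u0
    · exact Or.inr h
    · exact Or.inl (by simp [h, this])
  obtain ⟨⟨c, X⟩, hcX, hmin⟩ := Finset.exists_min_image _ (fun p : V × Finset V => p.2.card) hP
  simp only [Finset.mem_filter, Finset.mem_univ, true_and, P] at hcX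
  obtain ⟨hc, hXC, hXn, hcX, hXcl⟩ := hcX
  have hmin' : ∀ d (Y : Finset V), d ∈ C → Y ⊆ C → Y.Nonempty → d ∉ Y →
      (∀ x ∈ Y, ∀ y, H.Adj x y → y ∈ Y ∨ y = d) → X.card ≤ Y.card := by
    intro d Y h1 h2 h3 h4 h5
    exact hmin (d, Y) (by simpa [P] using ⟨h1, h2, h3, h4, h5⟩)
  -- noncut
  have cin : ∀ x ∈ X, ∀ Y : Finset V, Y ⊆ C → Y.Nonempty → x ∉ Y →
      (∀ y ∈ Y, ∀ z, H.Adj y z → z ∈ Y ∨ z = x) → c ∈ Y := by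
    intro x hx Y hY hYn hxY hYcl
    by_contra hcY
    by_cases hint : (Y ∩ X).Nonempty
    · have h1 := hmin' x (Y ∩ X) (hXC hx) (Finset.inter_subset_left.trans hY) hint (by simp [hxY]) (by
        intro y hy z hz
        rw [Finset.mem_inter] at hy
        rcases hYcl y hy.1 z hz with h | h
        · rcases hXcl y hy.2 z hz with h' | h'
          · exact Or.inl (by simp [h, h'])
          · subst h'; exact absurd h hcY
        · exact Or.inr h)
      have h2 : (Y ∩ X).card < X.card := Finset.card_lt_card
        ⟨Finset.inter_subset_right, fun h => hxY (Finset.mem_inter.1 (h hx)).1⟩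
      omega
    · rw [Finset.not_nonempty_iff_eq_empty] at hint
      have hYX : ∀ y ∈ Y, y ∉ X := fun y h1 h2 => by
        have : y ∈ Y ∩ X := Finset.mem_inter.2 ⟨h1, h2⟩
        simp [hint] at this
      have := hC Y hY hYn (by
        intro y hy z hz
        rcases hYcl y hy z hz with h | h
        · exact h
        · subst h
          rcases hXcl z hx y hz.symm with h | h
          · exact absurd h (hYX y hy)
          · subst h; exact absurd hy hcY)
      rw [this] at hxY
      exact hxY (hXC hx)
  have noncut : ∀ x ∈ X, ∀ Y : Finset V, Y ⊆ C → Y.Nonempty → x ∉ Y →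
      (∀ y ∈ Y, ∀ z, H.Adj y z → z ∈ Y ∨ z = x) → Y = C.erase x := by
    intro x hx Y hY hYn hxY hYcl
    have hcY := cin x hx Y hY hYn hxY hYcl
    have hsub : Y ⊆ C.erase x := fun y hy => by
      rw [Finset.mem_erase]; exact ⟨fun h => hxY (h ▸ hy), hY hy⟩
    by_contra hne
    have : (C.erase x \ Y).Nonempty := by
      rw [Finset.sdiff_nonempty]
      intro h; exact hne (hsub.antisymm h)
    have := cin x hx (C.erase x \ Y) (fun y hy => by simp at hy; exact hy.1.2) this (by simp) (by
      intro y hy z hz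
      simp only [Finset.mem_sdiff, Finset.mem_erase] at hy ⊢
      by_cases hzx : z = x
      · exact Or.inr hzx
      · left
        refine ⟨⟨hzx, hcl y hy.1.2 z hz⟩, fun hzY => ?_⟩
        rcases hYcl z hzY y hz.symm with h | h
        · exact hy.2 h
        · exact hy.1.1 h)
    simp at this
    exact this.2 hcY
  have hadj : ∀ x ∈ X, ∃ a, H.Adj x a := by
    intro x hx
    by_contra hcon
    push Not at hcon
    have := hC {x} (by simpa using hXC hx) (by simp) (by
      intro y hy z hz
      rw [Finset.mem_singleton] at hy
      subst hy
      exact absurd hz (hcon z))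
    rw [← this, Finset.mem_singleton] at hu0 hv0
    exact huv0.ne (hu0.trans hv0.symm)
  have dpos : ∀ x y, H.Adj x y → 1 ≤ (nb H x).card := fun x y h =>
    Finset.card_pos.2 ⟨y, (mem_nb H x y).2 h⟩
  obtain ⟨r0, hr0, hmax⟩ := Finset.exists_max_image X (fun x => (nb H x).card) hXn
  by_cases hex : ∃ r ∈ X, (nb H r).card = (nb H r0).card ∧ ¬ H.Adj r c
  · obtain ⟨r, hr, hrd, hrc⟩ := hex
    refine ⟨r, hXC hr, hadj r hr, noncut r hr, Or.inl ?_⟩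
    intro a ha
    have haX : a ∈ X := by
      rcases hXcl r hr a ha with h | h
      · exact h
      · subst h; exact absurd ha hrc
    have := hmax a haX
    have := dpos _ _ ha
    have := dpos _ _ ha.symm
    have := h3 r a ha
    simp only at *
    omega
  · push Not at hex
    have hrc := hex r0 hr0 rfl
    refine ⟨r0, hXC hr0, hadj r0 hr0, noncut r0 hr0, ?_⟩
    have hdc := dpos _ _ hrc.symm
    have hdr := dpos _ _ hrc
    have h3c := h3 _ _ hrc
    have hlt : ∀ a, H.Adj r0 a → a ≠ c → (nb H a).card < (nb H r0).card ∧ a ∈ X := by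
      intro a ha hac
      have haX : a ∈ X := (hXcl r0 hr0 a ha).resolve_right hac
      refine ⟨lt_of_le_of_ne (hmax a haX) fun h => ?_, haX⟩
      have h1 := hex a haX h
      have e1 := hf _ _ ha
      have e2 := hf _ _ h1
      have e3 := hf _ _ hrc
      revert e1 e2 e3
      cases f r0 <;> cases f a <;> cases f c <;> simp
    by_cases hcc : (nb H c).card + 1 = 2 * (nb H r0).card
    · right
      refine ⟨c, hrc, by omega, ?_⟩
      intro a ha hac hcon
      obtain ⟨h1, haX⟩ := hlt a ha hac
      have h2 := dpos _ _ ha.symm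
      have had : (nb H a).card = 1 := by omega
      have := hmin' r0 {a} (hXC hr0) (by simpa using hXC haX) (by simp) (by simpa using ha.ne) (by
        intro x hx y hy
        rw [Finset.mem_singleton] at hx
        subst hx
        right
        obtain ⟨q, hq⟩ := Finset.card_eq_one.1 had
        have k1 := (mem_nb H x y).2 hy
        have k2 := (mem_nb H x r0).2 ha.symm
        rw [hq, Finset.mem_singleton] at k1 k2
        rw [k1, k2])
      have : ({a, r0} : Finset V).card ≤ X.card := Finset.card_le_card (by
        intro x hx; simp at hx; rcases hx with rfl | rfl <;> assumption)
      rw [Finset.card_pair ha.ne'] at this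
      simp at *
      omega
    · left
      intro a ha
      by_cases hac : a = c
      · subst hac; exact hcc
      · have := (hlt a ha hac).1
        omega

/-- boundary -/
noncomputable def bd (H : SimpleGraph V) (F : Sym2 V → ZMod 2) (x : V) : ZMod 2 :=
  ∑ y ∈ nb H x, F s(x,y)

lemma bd_add (H : SimpleGraph V) (F F' : Sym2 V → ZMod 2) (x : V) :
    bd H (F + F') x = bd H F x + bd H F' x := by simp [bd, Finset.sum_add_distrib]

lemma bd_sum (H : SimpleGraph V) (T : Finset V) (F : V → Sym2 V → ZMod 2) (x : V) :
    bd H (∑ t ∈ T, F t) x = ∑ t ∈ T, bd H (F t) x := by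
  simp only [bd, Finset.sum_apply]; rw [Finset.sum_comm]

lemma bd_single (H : SimpleGraph V) (a b : V) (hab : H.Adj a b) (x : V) :
    bd H (Pi.single s(a,b) 1) x = (if x = a then 1 else 0) + (if x = b then 1 else 0) := by
  have hne := hab.ne
  unfold bd
  by_cases h1 : x = a
  · subst h1
    rw [Finset.sum_eq_single b]
    · simp [hne]
    · intro y _ hy
      rw [Pi.single_apply, if_neg]; exact s2ne hy
    · intro h; exact absurd ((mem_nb H x b).2 hab) h
  · by_cases h2 : x = b
    · subst h2
      rw [Finset.sum_eq_single a]
      · simp [h1, Sym2.eq_swap]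
      · intro y _ hy
        rw [Pi.single_apply, if_neg]; rw [Sym2.eq_swap (a := a)]; exact s2ne hy
      · intro h; exact absurd ((mem_nb H x a).2 hab.symm) h
    · rw [Finset.sum_eq_zero]
      · simp [h1, h2]
      · intro y _
        rw [Pi.single_apply, if_neg]
        intro e; rcases Sym2.eq_iff.1 e with ⟨rfl, rfl⟩ | ⟨rfl, rfl⟩ <;> simp_all

lemma exists_F (H : SimpleGraph V) (C : Finset V) (hcl : ∀ x ∈ C, ∀ y, H.Adj x y → y ∈ C) (r : V)
    (hr : ∀ Y : Finset V, Y ⊆ C → Y.Nonempty → r ∉ Y → (∀ y ∈ Y, ∀ z, H.Adj y z → z ∈ Y ∨ z = r) →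
        Y = C.erase r) (y0 : V) (hy0 : y0 ∈ C) (hy0r : y0 ≠ r) (T : Finset V) (hT : T ⊆ C.erase r) :
    ∃ F : Sym2 V → ZMod 2, (∀ y, F s(r,y) = 0) ∧
      ∀ x, bd H F x = (if x ∈ T then 1 else 0) + (if x = y0 then (T.card : ZMod 2) else 0) := by
  have key : (Finset.univ.filter (fun y => y ∈ C ∧ y ≠ r ∧ ∃ F : Sym2 V → ZMod 2, (∀ y, F s(r,y) = 0) ∧
      ∀ x, bd H F x = (if x = y then 1 else 0) + (if x = y0 then 1 else 0))) = C.erase r := by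
    apply hr
    · intro y; simp only [Finset.mem_filter]; tauto
    · refine ⟨y0, ?_⟩
      simp only [Finset.mem_filter, Finset.mem_univ, true_and]
      refine ⟨hy0, hy0r, 0, by simp, ?_⟩
      intro x
      simp only [bd, Pi.zero_apply, Finset.sum_const_zero]
      split_ifs <;> decide
    · simp
    · intro y hy z hz
      simp only [Finset.mem_filter, Finset.mem_univ, true_and] at hy ⊢
      obtain ⟨h1, h2, F, h3, h4⟩ := hy
      by_cases hzr : z = r
      · exact Or.inr hzr
      · left
        refine ⟨hcl y h1 z hz, hzr, F + Pi.single s(y,z) 1, ?_, ?_⟩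
        · intro q
          rw [Pi.add_apply, h3, Pi.single_apply, if_neg, zero_add]
          intro e; rcases Sym2.eq_iff.1 e with ⟨rfl, rfl⟩ | ⟨rfl, rfl⟩ <;> simp_all
        · intro x
          rw [bd_add, h4, bd_single H y z hz]
          split_ifs <;> decide
  have hmem : ∀ t, t ∈ T → ∃ F : Sym2 V → ZMod 2, (∀ y, F s(r,y) = 0) ∧
      ∀ x, bd H F x = (if x = t then 1 else 0) + (if x = y0 then 1 else 0) := by
    intro t ht
    have := hT ht
    rw [← key] at this
    simp only [Finset.mem_filter] at this
    exact this.2.2.2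
  choose! F hF1 hF2 using hmem
  refine ⟨∑ t ∈ T, F t, ?_, ?_⟩
  · intro y
    rw [Finset.sum_apply]
    exact Finset.sum_eq_zero fun t ht => hF1 t ht y
  · intro x
    rw [bd_sum, Finset.sum_congr rfl (fun t ht => hF2 t ht x), Finset.sum_add_distrib]
    congr 1
    · simp
    · split_ifs <;> simp

noncomputable def rdeg (H : SimpleGraph V) (m : Sym2 V → ℕ) (x : V) : ℕ := ∑ y ∈ nb H x, m s(x,y)

def MGood (H : SimpleGraph V) (m : Sym2 V → ℕ) (u v : V) : Prop :=
  (1 ≤ m s(u,v) → rdeg H m u ≠ rdeg H m v) ∧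
  (m s(u,v) ≤ 1 → 2 * (nb H u).card + rdeg H m v ≠ 2 * (nb H v).card + rdeg H m u)

lemma MGood.symm {H : SimpleGraph V} {m : Sym2 V → ℕ} {u v : V} (h : MGood H m u v) : MGood H m v u := by
  unfold MGood at *
  rw [Sym2.eq_swap (a := v)]
  exact ⟨fun k e => h.1 k e.symm, fun k e => h.2 k e.symm⟩

lemma MGood.of_parity {H : SimpleGraph V} {m : Sym2 V → ℕ} {u v : V}
    (h : (rdeg H m u : ZMod 2) ≠ rdeg H m v) : MGood H m u v := by
  refine ⟨fun _ e => h (by rw [e]), fun _ e => h ?_⟩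
  have := congrArg (fun n : ℕ => (n : ZMod 2)) e
  have h2 : (2 : ZMod 2) = 0 := by decide
  simp [h2] at this
  exact this.symm

/-- multiplicity function from F and a special set -/
noncomputable def mk (F : Sym2 V → ZMod 2) (S : Sym2 V → Prop) (e : Sym2 V) : ℕ :=
  if F e = 1 then 1 else if S e then 2 else 0

lemma mk_le (F : Sym2 V → ZMod 2) (S : Sym2 V → Prop) (e : Sym2 V) : mk F S e ≤ 2 := by
  unfold mk; split_ifs <;> simp

lemma mk_parity (H : SimpleGraph V) (F : Sym2 V → ZMod 2) (S : Sym2 V → Prop) (x : V) :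
    (rdeg H (mk F S) x : ZMod 2) = bd H F x := by
  unfold rdeg bd
  push_cast
  refine Finset.sum_congr rfl fun y _ => ?_
  unfold mk
  have h2 : (2 : ZMod 2) = 0 := by decide
  have h01 : ∀ z : ZMod 2, z ≠ 1 → z = 0 := by decide
  split_ifs with h h'
  · simp [h]
  · simp [h01 _ h, h2]
  · simp [h01 _ h]

lemma mk_rdeg (H : SimpleGraph V) (F : Sym2 V → ZMod 2) (S : Sym2 V → Prop) (x : V)
    (hd : ∀ y, S s(x,y) → F s(x,y) ≠ 1) :
    rdeg H (mk F S) x = ((nb H x).filter (fun y => F s(x,y) = 1)).card +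
      2 * ((nb H x).filter (fun y => S s(x,y))).card := by
  unfold rdeg
  rw [Finset.card_filter, Finset.card_filter, Finset.mul_sum, ← Finset.sum_add_distrib]
  refine Finset.sum_congr rfl fun y _ => ?_
  unfold mk
  have := hd y
  by_cases h1 : F s(x,y) = 1
  · have : ¬ S s(x,y) := fun h => hd y h h1
    simp [h1, this]
  · simp [h1]

/-- component lemma -/
lemma comp_good (H : SimpleGraph V) (f : V → Bool) (hf : ∀ u v, H.Adj u v → f u ≠ f v)
    (h3 : ∀ u v, H.Adj u v → (nb H u).card = 1 → (nb H v).card ≠ 1)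
    (C : Finset V) (hcl : ∀ x ∈ C, ∀ y, H.Adj x y → y ∈ C)
    (hC : ∀ Y : Finset V, Y ⊆ C → Y.Nonempty → (∀ y ∈ Y, ∀ z, H.Adj y z → z ∈ Y) → Y = C) :
    ∃ m : Sym2 V → ℕ, (∀ e, m e ≤ 2) ∧ ∀ u v, u ∈ C → H.Adj u v → MGood H m u v := by
  by_cases hne : ∃ u v, u ∈ C ∧ H.Adj u v
  swap
  · push Not at hne
    exact ⟨0, by simp, fun u v hu huv => absurd huv (hne u v hu)⟩
  obtain ⟨r, hrC, ⟨y0, hy0⟩, hcut, hdeg⟩ := exists_root H f hf h3 C hcl hC hne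
  have hy0C := hcl r hrC y0 hy0
  set T := (C.erase r).filter (fun x => f x = f r) with hTdef
  obtain ⟨F, hFr, hF⟩ := exists_F H C hcl r hcut y0 hy0C hy0.ne' T (Finset.filter_subset _ _)
  have hbool : ∀ u v, H.Adj u v → (f u = f r ↔ ¬ f v = f r) := by
    intro u v h
    have := hf u v h
    revert this
    cases f u <;> cases f v <;> cases f r <;> simp
  have hTmem : ∀ x ∈ C, x ≠ r → (x ∈ T ↔ f x = f r) := by
    intro x hx hxr; simp [hTdef, hx, hxr]
  rcases Nat.even_or_odd T.card with hev | hodd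
  swap
  · -- easy case
    refine ⟨mk (F + Pi.single s(r,y0) 1) (fun _ => False), mk_le _ _, ?_⟩
    have hpar : ∀ x ∈ C, (rdeg H (mk (F + Pi.single s(r,y0) 1) (fun _ => False)) x : ZMod 2)
        = if f x = f r then 1 else 0 := by
      intro x hx
      rw [mk_parity, bd_add, hF, bd_single H r y0 hy0]
      have : (T.card : ZMod 2) = 1 := by
        rw [ZMod.natCast_eq_one_iff_odd]; exact hodd
      rw [this]
      by_cases hxr : x = r
      · subst hxr
        have : x ∉ T := by simp [hTdef]
        simp [this, hy0.ne]
      · simp only [hTmem x hx hxr, hxr, if_false]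
        split_ifs <;> decide
    intro u v hu huv
    apply MGood.of_parity
    rw [hpar u hu, hpar v (hcl u hu v huv)]
    have := hbool u v huv
    by_cases hfu : f u = f r
    · rw [if_pos hfu, if_neg (this.1 hfu)]; decide
    · have hfv : f v = f r := by by_contra h; exact hfu (this.2 h)
      rw [if_neg hfu, if_pos hfv]; decide
  -- exceptional case
  have hcard0 : (T.card : ZMod 2) = 0 := by
    rw [ZMod.natCast_eq_zero_iff_even]; exact hev
  rw [hcard0] at hF
  have hF' : ∀ x ∈ C, x ≠ r → bd H F x = if f x = f r then 1 else 0 := by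
    intro x hx hxr
    rw [hF]; simp [hTmem x hx hxr]
  -- F-degree
  let φ : V → ℕ := fun x => ((nb H x).filter (fun y => F s(x,y) = 1)).card
  let D := (nb H r).card
  have hφeven : ∀ a, H.Adj r a → Even (φ a) := by
    intro a ha
    have h1 := mk_parity H F (fun _ => False) a
    rw [mk_rdeg H F (fun _ => False) a (by simp)] at h1
    rw [hF' a (hcl r hrC a ha) ha.ne', if_neg (by have := hf r a ha; exact fun h => this h.symm)] at h1
    rw [← ZMod.natCast_eq_zero_iff_even]
    simpa [φ] using h1
  have h10 : (0 : ZMod 2) ≠ 1 := by decide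
  -- main construction given a set R of red neighbours
  have build : ∀ R : Finset V, R ⊆ nb H r →
      (∀ a ∈ R, (nb H a).card + 1 = 2 * R.card → False) →
      (∀ a ∈ nb H r, a ∉ R → 2 * (D - R.card) ≠ 2 * (nb H a).card - φ a) →
      ∃ m : Sym2 V → ℕ, (∀ e, m e ≤ 2) ∧ ∀ u v, u ∈ C → H.Adj u v → MGood H m u v := by
    intro R hR hRd hB
    -- bad vertices and partners
    have hpart : ∀ a, a ∈ R ∧ φ a + 2 = 2 * R.card → ∃ b, H.Adj a b ∧ b ≠ r ∧ F s(a,b) ≠ 1 := by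
      rintro a ⟨haR, hbad⟩
      by_contra hcon
      push Not at hcon
      have haN := (mem_nb H r a).1 (hR haR)
      have : (nb H a).filter (fun y => F s(a,y) = 1) = (nb H a).erase r := by
        ext y
        simp only [Finset.mem_filter, Finset.mem_erase, mem_nb]
        constructor
        · rintro ⟨h1, h2⟩
          refine ⟨?_, h1⟩
          rintro rfl
          rw [Sym2.eq_swap, hFr] at h2
          exact h10 h2
        · rintro ⟨h1, h2⟩
          exact ⟨h2, hcon y h2 h1⟩
      have hc : φ a = (nb H a).card - 1 := by
        show ((nb H a).filter (fun y => F s(a,y) = 1)).card = _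
        rw [this, Finset.card_erase_of_mem ((mem_nb H a r).2 haN.symm)]
      have hp : 1 ≤ (nb H a).card := Finset.card_pos.2 ⟨r, (mem_nb H a r).2 haN.symm⟩
      exact hRd a haR (by omega)
    choose! p hp1 hp2 hp3 using hpart
    obtain ⟨S, hS⟩ : ∃ S : Sym2 V → Prop, ∀ e, S e ↔ ((∃ a ∈ R, e = s(r,a)) ∨
      ∃ a, (a ∈ R ∧ φ a + 2 = 2 * R.card) ∧ e = s(a, p a)) := ⟨_, fun _ => Iff.rfl⟩
    have hSF : ∀ e, S e → F e ≠ 1 := by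
      intro e he
      rcases (hS e).1 he with (⟨a, ha, rfl⟩ | ⟨a, ha, rfl⟩)
      · rw [hFr]; exact h10
      · exact hp3 a ha
    have hfR : ∀ a ∈ nb H r, f a ≠ f r := fun a ha => (hf r a ((mem_nb H r a).1 ha)).symm
    have hfp : ∀ a, (a ∈ R ∧ φ a + 2 = 2 * R.card) → f (p a) = f r := by
      intro a ha
      have h1 := hfR a (hR ha.1)
      have h2 := hf _ _ (hp1 a ha)
      revert h1 h2
      cases f a <;> cases f (p a) <;> cases f r <;> simp
    have hSr : ∀ y, S s(r,y) ↔ y ∈ R := by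
      intro y
      rw [hS]
      constructor
      · rintro (⟨a, ha, e⟩ | ⟨a, ha, e⟩)
        · rcases Sym2.eq_iff.1 e with ⟨_, h⟩ | ⟨h1, h2⟩
          · rw [h]; exact ha
          · exact absurd (by rw [← h1]) (hfR a (hR ha))
        · rcases Sym2.eq_iff.1 e with ⟨h1, _⟩ | ⟨h1, _⟩
          · exact absurd (by rw [← h1]) (hfR a (hR ha.1))
          · exact absurd h1.symm (hp2 a ha)
      · intro h; exact Or.inl ⟨y, h, rfl⟩
    have hSa : ∀ a ∈ nb H r, ∀ y, S s(a,y) ↔ (a ∈ R ∧ y = r) ∨ ((a ∈ R ∧ φ a + 2 = 2 * R.card) ∧ y = p a) := by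
      intro a ha y
      have hfa := hfR a ha
      rw [hS]
      constructor
      · rintro (⟨b, hb, e⟩ | ⟨b, hb, e⟩)
        · rcases Sym2.eq_iff.1 e with ⟨h, _⟩ | ⟨h1, h2⟩
          · rw [h] at hfa; exact absurd rfl hfa
          · left; rw [h1]; exact ⟨hb, h2⟩
        · rcases Sym2.eq_iff.1 e with ⟨h1, h2⟩ | ⟨h1, h2⟩
          · right; rw [h1]; exact ⟨hb, h2⟩
          · rw [h1] at hfa; exact absurd (hfp b hb) hfa
      · rintro (⟨h1, rfl⟩ | ⟨h1, rfl⟩)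
        · exact Or.inl ⟨a, h1, Sym2.eq_swap⟩
        · exact Or.inr ⟨a, h1, rfl⟩
    refine ⟨mk F S, mk_le _ _, ?_⟩
    have hrr : rdeg H (mk F S) r = 2 * R.card := by
      rw [mk_rdeg H F S r (fun y h => hSF _ h)]
      have e1 : (nb H r).filter (fun y => F s(r,y) = 1) = ∅ := by
        ext y; simp [hFr]
      have e2 : (nb H r).filter (fun y => S s(r,y)) = R := by
        ext y; simp only [Finset.mem_filter, hSr]
        exact ⟨fun h => h.2, fun h => ⟨hR h, h⟩⟩
      rw [e1, e2]; simp
    have main : ∀ a, H.Adj r a → MGood H (mk F S) r a := by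
      intro a ha
      have haN := (mem_nb H r a).2 ha
      have hra : rdeg H (mk F S) a = φ a + 2 * ((nb H a).filter (fun y => S s(a,y))).card :=
        mk_rdeg H F S a (fun y h => hSF _ h)
      have hm : mk F S s(r,a) = if a ∈ R then 2 else 0 := by
        unfold mk; rw [hFr, if_neg h10]; simp only [hSr]
      unfold MGood
      rw [hm, hrr, hra]
      by_cases haR : a ∈ R
      · simp only [haR, if_true]
        refine ⟨fun _ => ?_, fun h => by omega⟩
        by_cases hbad : φ a + 2 = 2 * R.card
        · have : (nb H a).filter (fun y => S s(a,y)) = {r, p a} := by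
            ext y
            simp only [Finset.mem_filter, hSa a haN, mem_nb, Finset.mem_insert, Finset.mem_singleton]
            constructor
            · rintro ⟨_, ⟨_, h⟩ | ⟨_, h⟩⟩ <;> simp [h]
            · rintro (rfl | rfl)
              · exact ⟨ha.symm, Or.inl ⟨haR, rfl⟩⟩
              · exact ⟨hp1 a ⟨haR, hbad⟩, Or.inr ⟨⟨haR, hbad⟩, rfl⟩⟩
          rw [this, Finset.card_pair (hp2 a ⟨haR, hbad⟩).symm]
          omega
        · have : (nb H a).filter (fun y => S s(a,y)) = {r} := by
            ext y
            simp only [Finset.mem_filter, hSa a haN, mem_nb, Finset.mem_singleton]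
            constructor
            · rintro ⟨_, ⟨_, h⟩ | ⟨h, _⟩⟩
              · exact h
              · exact absurd h.2 hbad
            · rintro rfl
              exact ⟨ha.symm, Or.inl ⟨haR, rfl⟩⟩
          rw [this, Finset.card_singleton]
          omega
      · simp only [haR, if_false]
        refine ⟨fun h => by omega, fun _ => ?_⟩
        have : (nb H a).filter (fun y => S s(a,y)) = ∅ := by
          ext y
          simp [hSa a haN, haR]
        rw [this, Finset.card_empty]
        have h1 := hB a haN haR
        have h2 : R.card ≤ D := Finset.card_le_card hR
        have h4 : φ a ≤ (nb H a).card := Finset.card_filter_le _ _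
        have h5 : D = (nb H r).card := rfl
        omega
    intro u v hu huv
    by_cases hur : u = r
    · subst hur; exact main v huv
    by_cases hvr : v = r
    · subst hvr; exact (main u huv.symm).symm
    apply MGood.of_parity
    rw [mk_parity, mk_parity, hF' u hu hur, hF' v (hcl u hu v huv) hvr]
    have := hbool u v huv
    by_cases hfu : f u = f r
    · rw [if_pos hfu, if_neg (this.1 hfu)]; decide
    · have hfv : f v = f r := by by_contra h; exact hfu (this.2 h)
      rw [if_neg hfu, if_pos hfv]; decide
  rcases hdeg with h | ⟨c, hrc, hc2, h⟩
  · refine build (nb H r) (Finset.Subset.refl _) ?_ ?_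
    · intro a ha; exact h a ((mem_nb H r a).1 ha)
    · intro a ha ha'; exact absurd ha ha'
  · have hcN := (mem_nb H r c).2 hrc
    have hD : ((nb H r).erase c).card = D - 1 := Finset.card_erase_of_mem hcN
    have hD1 : 1 ≤ D := Finset.card_pos.2 ⟨c, hcN⟩
    refine build ((nb H r).erase c) (Finset.erase_subset _ _) ?_ ?_
    · intro a ha
      rw [Finset.mem_erase, mem_nb] at ha
      have := h a ha.2 ha.1
      rw [hD]
      have h5 : D = (nb H r).card := rfl
      omega
    · intro a ha ha'
      have hac : a = c := by
        by_contra hac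
        exact ha' (Finset.mem_erase.2 ⟨hac, ha⟩)
      subst hac
      rw [hD]
      have : φ a ≤ ((nb H a).erase r).card := by
        apply Finset.card_le_card
        intro y
        simp only [Finset.mem_filter, Finset.mem_erase, mem_nb]
        rintro ⟨h1, h2⟩
        refine ⟨?_, h1⟩
        rintro rfl
        rw [Sym2.eq_swap, hFr] at h2
        exact h10 h2
      rw [Finset.card_erase_of_mem ((mem_nb H a r).2 hrc.symm)] at this
      omega

lemma bip_good (H : SimpleGraph V) (f : V → Bool) (hf : ∀ u v, H.Adj u v → f u ≠ f v)
    (h3 : ∀ u v, H.Adj u v → (nb H u).card = 1 → (nb H v).card ≠ 1) :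
    ∃ m : Sym2 V → ℕ, (∀ e, m e ≤ 2) ∧ ∀ u v, H.Adj u v → MGood H m u v := by
  have hcomp : ∀ K : H.ConnectedComponent, ∃ m : Sym2 V → ℕ, (∀ e, m e ≤ 2) ∧
      ∀ u v, H.connectedComponentMk u = K → H.Adj u v → MGood H m u v := by
    intro K
    obtain ⟨m, h1, h2⟩ := comp_good H f hf h3
      (Finset.univ.filter (fun x => H.connectedComponentMk x = K)) (by
        intro x hx y hxy
        simp only [Finset.mem_filter, Finset.mem_univ, true_and] at hx ⊢
        rw [← hx]
        exact (SimpleGraph.ConnectedComponent.sound hxy.reachable).symm) (by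
        intro Y hY ⟨y, hy⟩ hYcl
        refine hY.antisymm ?_
        intro z hz
        have hy' := hY hy
        simp only [Finset.mem_filter, Finset.mem_univ, true_and] at hz hy'
        have : H.Reachable y z := SimpleGraph.ConnectedComponent.exact (hy'.trans hz.symm)
        obtain ⟨w⟩ := this
        clear hz hy'
        induction w with
        | nil => exact hy
        | cons h _ ih => exact ih (hYcl _ hy _ h))
    exact ⟨m, h1, fun u v hu huv => h2 u v (by simpa using hu) huv⟩
  choose M hM1 hM2 using hcomp
  let m : Sym2 V → ℕ := fun e => M (H.connectedComponentMk e.out.1) e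
  have hm : ∀ u v, H.Adj u v → m s(u,v) = M (H.connectedComponentMk u) s(u,v) := by
    intro u v huv
    have : (s(u,v) : Sym2 V).out.1 ∈ s(u,v) := Sym2.out_fst_mem _
    rw [Sym2.mem_iff] at this
    show M (H.connectedComponentMk (s(u,v) : Sym2 V).out.1) s(u,v) = _
    rcases this with h | h
    · rw [h]
    · rw [h, SimpleGraph.ConnectedComponent.sound huv.reachable]
  refine ⟨m, fun e => hM1 _ _, ?_⟩
  intro u v huv
  have hu : rdeg H m u = rdeg H (M (H.connectedComponentMk u)) u :=
    Finset.sum_congr rfl fun y hy => hm u y ((mem_nb H u y).1 hy)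
  have hv : rdeg H m v = rdeg H (M (H.connectedComponentMk u)) v := by
    rw [SimpleGraph.ConnectedComponent.sound huv.reachable]
    exact Finset.sum_congr rfl fun y hy => hm v y ((mem_nb H v y).1 hy)
  have := hM2 _ u v rfl huv
  unfold MGood at *
  rw [hm u v huv, hu, hv]
  exact this

end Bip
section Fin
variable {V : Type*} [Fintype V]

lemma colorDeg_eq [DecidableEq V] (G : SimpleGraph V) {k : ℕ} (w : Sym2 V → Fin k → ℕ) (c : Fin k)
    (x : V) : colorDeg G w c x = ∑ y ∈ nb G x, w s(x,y) c := by
  unfold colorDeg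
  symm
  refine Finset.sum_bij (fun y _ => s(x,y)) ?_ ?_ ?_ ?_
  · intro y hy
    rw [mem_nb] at hy
    simp [Finset.mem_filter, SimpleGraph.mem_edgeFinset, hy]
  · intro a _ b _ h
    exact Sym2.congr_right.1 h
  · intro e he
    rw [Finset.mem_filter, SimpleGraph.mem_edgeFinset] at he
    obtain ⟨h1, h2⟩ := he
    obtain ⟨y, rfl⟩ := Sym2.mem_iff_exists.1 h2
    exact ⟨y, (mem_nb G x y).2 h1, rfl⟩
  · intro _ _; rfl

def subG (G : SimpleGraph V) (σ : Sym2 V → Bool) (b : Bool) : SimpleGraph V where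
  Adj u v := G.Adj u v ∧ σ s(u,v) = b
  symm := ⟨fun u v h => ⟨h.1.symm, by rw [Sym2.eq_swap]; exact h.2⟩⟩
  loopless := ⟨fun u h => G.loopless.irrefl u h.1⟩

lemma sum_sub (G : SimpleGraph V) (σ : Sym2 V → Bool) (b : Bool) (g : Sym2 V → ℕ) (x : V) :
    ∑ y ∈ nb G x, (if σ s(x,y) = b then g s(x,y) else 0) = ∑ y ∈ nb (subG G σ b) x, g s(x,y) := by
  rw [← Finset.sum_filter]
  congr 1
  ext y
  simp [mem_nb, subG]

lemma sum_compl (H : SimpleGraph V) (m : Sym2 V → ℕ) (hm : ∀ e, m e ≤ 2) (x : V) :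
    (∑ y ∈ nb H x, (2 - m s(x,y))) + rdeg H m x = 2 * (nb H x).card := by
  unfold rdeg
  rw [← Finset.sum_add_distrib, Finset.sum_congr rfl (g := fun _ => 2)]
  · simp [mul_comm]
  · intro y _
    have := hm s(x,y)
    omega

lemma comb [DecidableEq V] (G : SimpleGraph V) (σ : Sym2 V → Bool) (f : Bool → V → Bool)
    (hv : PValid G σ f) (hi : ∀ u v, ¬ PIso G σ u v) : LIRtwoLE G 4 := by
  have key : ∀ b, ∃ m : Sym2 V → ℕ, (∀ e, m e ≤ 2) ∧
      ∀ u v, (subG G σ b).Adj u v → MGood (subG G σ b) m u v := by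
    intro b
    apply bip_good (subG G σ b) (f b)
    · rintro u v ⟨h, rfl⟩
      exact hv u v h
    · rintro u v ⟨h, rfl⟩ h1 h2
      apply hi u v
      obtain ⟨a, ha⟩ := Finset.card_eq_one.1 h1
      obtain ⟨c, hc⟩ := Finset.card_eq_one.1 h2
      have ea : ∀ y, G.Adj u y → σ s(u,y) = σ s(u,v) → y = a := by
        intro y hy hy'
        have : y ∈ nb (subG G σ (σ s(u,v))) u := (mem_nb _ _ _).2 ⟨hy, hy'⟩
        rw [ha] at this
        simpa using this
      have ec : ∀ y, G.Adj v y → σ s(v,y) = σ s(u,v) → y = c := by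
        intro y hy hy'
        have : y ∈ nb (subG G σ (σ s(u,v))) v := (mem_nb _ _ _).2 ⟨hy, hy'⟩
        rw [hc] at this
        simpa using this
      have e1 := ea v h rfl
      have e2 := ec u h.symm (by rw [Sym2.eq_swap])
      refine ⟨h, ?_, ?_⟩
      · intro y hy hy'
        rw [ea y hy hy', ← e1]
      · intro y hy hy'
        rw [ec y hy hy', ← e2]
  choose m hm hg using key
  let w : Sym2 V → Fin 4 → ℕ := fun e =>
    ![if σ e = true then m true e else 0, if σ e = true then 2 - m true e else 0,
      if σ e = false then m false e else 0, if σ e = false then 2 - m false e else 0]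
  have d0 : ∀ x, colorDeg G w 0 x = rdeg (subG G σ true) (m true) x := fun x => by
    rw [colorDeg_eq]; exact sum_sub G σ true (m true) x
  have d2 : ∀ x, colorDeg G w 2 x = rdeg (subG G σ false) (m false) x := fun x => by
    rw [colorDeg_eq]; exact sum_sub G σ false (m false) x
  have d1 : ∀ x, colorDeg G w 1 x + rdeg (subG G σ true) (m true) x
      = 2 * (nb (subG G σ true) x).card := fun x => by
    rw [← sum_compl _ _ (hm true), colorDeg_eq]
    congr 1
    exact sum_sub G σ true (fun e => 2 - m true e) x
  have d3 : ∀ x, colorDeg G w 3 x + rdeg (subG G σ false) (m false) x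
      = 2 * (nb (subG G σ false) x).card := fun x => by
    rw [← sum_compl _ _ (hm false), colorDeg_eq]
    congr 1
    exact sum_sub G σ false (fun e => 2 - m false e) x
  refine ⟨w, ?_, ?_⟩
  · intro e _
    have h1 := hm true e
    have h2 := hm false e
    rw [Fin.sum_univ_four]
    cases hs : σ e <;> simp [w, hs] <;> omega
  · intro u v huv c hc
    have D0u := d0 u
    have D0v := d0 v
    have D1u := d1 u
    have D1v := d1 v
    have D2u := d2 u
    have D2v := d2 v
    have D3u := d3 u
    have D3v := d3 v
    cases hs : σ s(u,v)
    · obtain ⟨g1, g2⟩ := hg false u v ⟨huv, hs⟩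
      fin_cases c
      · simp [w, hs] at hc
      · simp [w, hs] at hc
      · have hc' : 1 ≤ m false s(u,v) := by simpa [w, hs] using hc
        have := g1 hc'
        intro (h : colorDeg G w 2 u = colorDeg G w 2 v)
        omega
      · have hc' : 1 ≤ 2 - m false s(u,v) := by simpa [w, hs] using hc
        have := g2 (by omega)
        intro (h : colorDeg G w 3 u = colorDeg G w 3 v)
        omega
    · obtain ⟨g1, g2⟩ := hg true u v ⟨huv, hs⟩
      fin_cases c
      · have hc' : 1 ≤ m true s(u,v) := by simpa [w, hs] using hc
        have := g1 hc'
        intro (h : colorDeg G w 0 u = colorDeg G w 0 v)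
        omega
      · have hc' : 1 ≤ 2 - m true s(u,v) := by simpa [w, hs] using hc
        have := g2 (by omega)
        intro (h : colorDeg G w 1 u = colorDeg G w 1 v)
        omega
      · simp [w, hs] at hc
      · simp [w, hs] at hc

lemma conn_all (G : SimpleGraph V) (hconn : G.Connected) (S : V → Prop) (a : V) (ha : S a)
    (hS : ∀ x y, S x → G.Adj x y → S y) : ∀ x, S x := by
  intro x
  obtain ⟨p⟩ := hconn.preconnected a x
  induction p with
  | nil => exact ha
  | cons h _ ih => exact ih (hS _ _ ha h)

lemma tri [DecidableEq V] (G : SimpleGraph V) (a b c : V) (hab : G.Adj a b) (hac : G.Adj a c)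
    (hbc : G.Adj b c) (hall : ∀ x, x = a ∨ x = b ∨ x = c) : LIRtwoLE G 4 := by
  have nab := hab.ne
  have nac := hac.ne
  have nbc := hbc.ne
  have na : nb G a = {b, c} := by
    ext y; rw [mem_nb]; rcases hall y with rfl | rfl | rfl <;> simp [*]
  have nb' : nb G b = {a, c} := by
    ext y; rw [mem_nb]; rcases hall y with rfl | rfl | rfl <;> simp [*, hab.symm, nab.symm]
  have nc : nb G c = {a, b} := by
    ext y; rw [mem_nb]; rcases hall y with rfl | rfl | rfl <;>
      simp [*, hac.symm, hbc.symm, nac.symm, nbc.symm]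
  let w : Sym2 V → Fin 4 → ℕ := fun e =>
    if e = s(a,b) then ![0,1,1,0] else if e = s(a,c) then ![1,0,1,0] else ![1,1,0,0]
  have wab : w s(a,b) = ![0,1,1,0] := by simp [w]
  have wac : w s(a,c) = ![1,0,1,0] := by simp [w, nab, nac, nbc, nbc.symm]
  have wbc : w s(b,c) = ![1,1,0,0] := by
    simp [w, nab, nac, nbc, nab.symm, nac.symm, nbc.symm]
  have wba : w s(b,a) = ![0,1,1,0] := by rw [Sym2.eq_swap, wab]
  have wca : w s(c,a) = ![1,0,1,0] := by rw [Sym2.eq_swap, wac]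
  have wcb : w s(c,b) = ![1,1,0,0] := by rw [Sym2.eq_swap, wbc]
  have da : ∀ i, colorDeg G w i a = (![1,1,2,0] : Fin 4 → ℕ) i := by
    intro i
    rw [colorDeg_eq, na, Finset.sum_pair nbc, wab, wac]
    fin_cases i <;> rfl
  have db : ∀ i, colorDeg G w i b = (![1,2,1,0] : Fin 4 → ℕ) i := by
    intro i
    rw [colorDeg_eq, nb', Finset.sum_pair nac, wba, wbc]
    fin_cases i <;> rfl
  have dc : ∀ i, colorDeg G w i c = (![2,1,1,0] : Fin 4 → ℕ) i := by
    intro i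
    rw [colorDeg_eq, nc, Finset.sum_pair nab, wca, wcb]
    fin_cases i <;> rfl
  refine ⟨w, ?_, ?_⟩
  · intro e _
    simp only [w]
    split_ifs <;> rfl
  · intro u v huv i hi
    rcases hall u with rfl | rfl | rfl <;> rcases hall v with rfl | rfl | rfl <;>
      first
      | exact absurd huv (G.loopless.irrefl _)
      | (simp only [da, db, dc, wab, wac, wbc, wba, wca, wcb] at hi ⊢
         revert hi; revert i; decide)

end Fin

/-- If `G` is a connected simple graph not isomorphic to `K₂` that admits a
proper vertex coloring with at most 4 colors, then `lir(²G) ≤ 4`. -/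
theorem lir_two_mul_four_colorable {V : Type*} [Fintype V] [DecidableEq V]
    (G : SimpleGraph V) (hconn : G.Connected)
    (hK2 : ¬ Nonempty (G ≃g (⊤ : SimpleGraph (Fin 2))))
    (hcol : ∃ c : V → Fin 4, ∀ u v : V, G.Adj u v → c u ≠ c v) :
    LIRtwoLE G 4 := by
  obtain ⟨col, hcol⟩ := hcol
  by_cases hK3 : ∀ u v w, G.Adj u v → G.Adj u w → G.Adj v w →
      ∃ y, y ≠ u ∧ y ≠ v ∧ y ≠ w ∧ (G.Adj u y ∨ G.Adj v y ∨ G.Adj w y)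
  · have h3 : ∀ u v, G.Adj u v → ∃ w, (G.Adj u w ∧ w ≠ v) ∨ (G.Adj v w ∧ w ≠ u) := by
      intro u v huv
      by_contra hno
      push Not at hno
      have hall := conn_all G hconn (fun x => x = u ∨ x = v) u (Or.inl rfl) (by
        rintro x y (rfl | rfl) hxy
        · exact Or.inr ((hno y).1 hxy)
        · exact Or.inl ((hno y).2 hxy))
      have hne := huv.ne
      apply hK2
      refine ⟨⟨⟨fun x => if x = u then 0 else 1, fun i => if i = 0 then u else v, ?_, ?_⟩, ?_⟩⟩
      · intro x
        rcases hall x with rfl | rfl <;> simp [hne.symm]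
      · intro i
        fin_cases i <;> simp [hne.symm]
      · intro x y
        rcases hall x with rfl | rfl <;> rcases hall y with rfl | rfl <;>
          simp [hne.symm, huv, huv.symm]
    obtain ⟨σ, f, hv, hi⟩ := exists_part G col hcol h3 hK3
    exact comb G σ f hv hi
  · push Not at hK3
    obtain ⟨a, b, c, hab, hac, hbc, hno⟩ := hK3
    refine tri G a b c hab hac hbc ?_
    apply conn_all G hconn (fun x => x = a ∨ x = b ∨ x = c) a (Or.inl rfl)
    intro x y hx hxy
    by_contra hy
    push Not at hy
    have := hno y hy.1 hy.2.1 hy.2.2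
    rcases hx with rfl | rfl | rfl
    · exact this.1 hxy
    · exact this.2.1 hxy
    · exact this.2.2 hxy
end
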